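/- arXiv:0910.0433 — 2 statements merged into one kernel-verified Lean document; each statement's English description precedes it below -/
import Mathlib

section
/- Let w be a smooth solution of □w = F on ℝ₊ × ℝ⁴ with w(0,·) = w₀, ∂_t w(0,·) = w₁, which vanishes for large |x| for each t. Then for every δ > 0 there is a constant C (independent of T and w) such that for all T > 0, ‖⟨x⟩^{−1/2−δ} w'‖_{L²_{t,x}([0,T]×ℝ⁴)} + ‖⟨x⟩^{−3/2} w‖_{L²_{t,x}([0,T]×ℝ⁴)} ≤ C ( ‖w'(0,·)‖_{L²(ℝ⁴)} + ∫₀^T ‖□w(t,·)‖_{L²(ℝ⁴)} dt ). -/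
/-!
The estimate is proved by the multiplier method, applied to `w` and its derivatives up to second
order (`WaveJet`). The support of `w(t, ·)` is compact for each `t`, but its radius need not be
locally bounded in `t`; therefore no integration by parts is done without a cutoff, and the cutoff
is removed at the end by Fatou's lemma (`lintegral_le_of_truncations`).

Energy: with the cutoff `(1 - (t + ⟨x⟩)/R)₊²`, supported in a backward light cone, the derivatives
of the cutoff contribute with a good sign (`WaveJet.energy_flux`). Letting `R → ∞` gives
`‖w'(t, ·)‖ ≤ 2A` for `0 ≤ t ≤ T`, where `A = ‖w'(0, ·)‖ + ∫₀ᵀ ‖□w‖` (`WaveJet.energy_bound`).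
Hardy's inequality `‖⟨x⟩⁻¹ w‖ ≤ ‖∇w‖` at a fixed time (`WaveJet.hardy`) follows from integrating the
divergence of `x⟨x⟩⁻² w²`.

Morawetz: for `δ ≤ 1/2`, multiply the equation by `M = X · ∇w + q w` with
`X = x (64⟨x⟩⁻¹ - ⟨x⟩^{-1-2δ})` and `q = ½ div X - δ⟨x⟩^{-1-2δ}`. The resulting divergence identity
has a bulk term that is bounded below by `δ⟨x⟩^{-1-2δ}|w'|² + 16⟨x⟩⁻³w²`; this rests on the scalar
inequalities `weight_time`, `weight_radial` and `weight_zeroth`. The boundary terms and the term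
`□w · M` are controlled by `A²`, since `|M|² ≲ |w'|² + ⟨x⟩⁻²w²` has integral `≲ A²` at each time by
the energy and Hardy inequalities. The errors from the cutoff `(1 - ⟨x⟩/R)₊²` are `O(T A²/R)`
(`WaveJet.morawetz_flux`, `WaveJet.morawetz_bound`) and vanish as `R → ∞`
(`WaveJet.localized_energy`).
-/

open MeasureTheory Real Set
open scoped ENNReal FourierTransform

noncomputable section

/-- Euclidean space ℝⁿ. -/
abbrev Eu (n : ℕ) : Type := EuclideanSpace ℝ (Fin n)

/-- Spatial partial derivative ∂_i of a function on ℝⁿ. -/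
def sd {n : ℕ} (i : Fin n) (h : Eu n → ℝ) : Eu n → ℝ :=
  fun x => fderiv ℝ h x (EuclideanSpace.single i 1)

/-- Iterated spatial derivatives ∂_x^μ. -/
def sdIter {n : ℕ} : {m : ℕ} → (Fin m → Fin n) → (Eu n → ℝ) → Eu n → ℝ
  | 0, _, h => h
  | m + 1, μ, h => sd (μ 0) (sdIter (fun i : Fin m => μ i.succ) h)

/-- Time derivative ∂_t of u(t,x). -/
def td {n : ℕ} (u : ℝ → Eu n → ℝ) : ℝ → Eu n → ℝ :=
  fun t x => deriv (fun s => u s x) t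

/-- Space-time partial derivative ∂_α, with ∂₀ = ∂_t. -/
def pd {n : ℕ} (α : Fin (n + 1)) (u : ℝ → Eu n → ℝ) : ℝ → Eu n → ℝ :=
  if h : α = 0 then td u else fun t x => sd (α.pred h) (u t) x

/-- Iterated space-time derivatives ∂^μ. -/
def pdIter {n : ℕ} : {m : ℕ} → (Fin m → Fin (n + 1)) → (ℝ → Eu n → ℝ) → ℝ → Eu n → ℝ
  | 0, _, u => u
  | m + 1, μ, u => pd (μ 0) (pdIter (fun i : Fin m => μ i.succ) u)

/-- Iterated spatial derivatives of a space-time function. -/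
def sdIterT {n m : ℕ} (μ : Fin m → Fin n) (u : ℝ → Eu n → ℝ) : ℝ → Eu n → ℝ :=
  fun t x => sdIter μ (u t) x

/-- The d'Alembertian □ = ∂_t² − Δ. -/
def dAlembert {n : ℕ} (u : ℝ → Eu n → ℝ) : ℝ → Eu n → ℝ :=
  fun t x => td (td u) t x - ∑ i : Fin n, sd i (sd i (u t)) x

/-- |u'| : the magnitude of the space-time gradient (∂_t u, ∇_x u). -/
def gradMag {n : ℕ} (u : ℝ → Eu n → ℝ) : ℝ → Eu n → ℝ :=
  fun t x => Real.sqrt (∑ α : Fin (n + 1), pd α u t x ^ 2)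

/-- Smoothness of a space-time function. -/
def SmoothTX {n : ℕ} (u : ℝ → Eu n → ℝ) : Prop :=
  ContDiff ℝ (⊤ : ℕ∞) fun p : ℝ × Eu n => u p.1 p.2

/-- L² norm over a region S ⊆ ℝⁿ. -/
def L2x {n : ℕ} (S : Set (Eu n)) (f : Eu n → ℝ) : ℝ≥0∞ :=
  eLpNorm f 2 (volume.restrict S)

/-- Space-time L² norm over [0,T] × S. -/
def L2st {n : ℕ} (T : ℝ) (S : Set (Eu n)) (u : ℝ → Eu n → ℝ) : ℝ≥0∞ :=
  eLpNorm (fun p : ℝ × Eu n => u p.1 p.2) 2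
    ((volume.restrict (Icc 0 T)).prod (volume.restrict S))

/-- Japanese bracket ⟨x⟩ = (1+|x|²)^{1/2}. -/
def jap {n : ℕ} (x : Eu n) : ℝ := Real.sqrt (1 + ‖x‖ ^ 2)

/-- Homogeneous Sobolev norm ‖f‖_{Ḣ^s} = ‖ |ξ|^s 𝓕f(ξ) ‖_{L²}. -/
def sobolevHom {n : ℕ} (s : ℝ) (f : Eu n → ℝ) : ℝ≥0∞ :=
  eLpNorm (fun ξ : Eu n => ‖ξ‖ ^ s * ‖𝓕 (fun x : Eu n => (f x : ℂ)) ξ‖) 2 volume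

/-- A smooth compact obstacle K = {ρ ≤ 0} given by a smooth defining function. -/
structure SmoothObstacle (n : ℕ) where
  ρ : Eu n → ℝ
  smooth : ContDiff ℝ (⊤ : ℕ∞) ρ
  K : Set (Eu n)
  K_def : K = {x | ρ x ≤ 0}
  compact : IsCompact K
  grad_ne : ∀ x, ρ x = 0 → fderiv ℝ ρ x ≠ 0

/-- Ordered pairs (j,k), j < k, indexing the rotation fields Ω_{jk} on ℝ⁴. -/
abbrev OP : Type := {p : Fin 4 × Fin 4 // p.1 < p.2}

/-- Rotation vector field Ω_{jk} = x_j ∂_k − x_k ∂_j. -/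
def rot (j k : Fin 4) (h : Eu 4 → ℝ) : Eu 4 → ℝ :=
  fun x => x j * sd k h x - x k * sd j h x

/-- Products Ω^μ of rotation vector fields. -/
def rotIter : {m : ℕ} → (Fin m → OP) → (Eu 4 → ℝ) → Eu 4 → ℝ
  | 0, _, h => h
  | m + 1, μ, h => rot (μ 0).1.1 (μ 0).1.2 (rotIter (fun i : Fin m => μ i.succ) h)

/-- Radial derivative ∇_r = (x/|x|)·∇. -/
def radialD (h : Eu 4 → ℝ) : Eu 4 → ℝ :=
  fun x => fderiv ℝ h x (‖x‖⁻¹ • x)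

/-- Iterated radial derivatives ∇_r^j. -/
def radialIter : ℕ → (Eu 4 → ℝ) → Eu 4 → ℝ
  | 0, h => h
  | j + 1, h => radialD (radialIter j h)

/-- Magnitude of the spatial gradient ∇_x h. -/
def spGradMag (h : Eu 4 → ℝ) : Eu 4 → ℝ :=
  fun x => Real.sqrt (∑ i : Fin 4, sd i h x ^ 2)

/-- Index set for the fields Z = {∂_α, Ω_{jk}}. -/
abbrev ZIdx : Type := Fin 5 ⊕ OP

/-- Action of a single field Z. -/
def applyZ : ZIdx → (ℝ → Eu 4 → ℝ) → ℝ → Eu 4 → ℝ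
  | Sum.inl α, u => pd (n := 4) α u
  | Sum.inr p, u => fun t x => rot p.1.1 p.1.2 (u t) x

/-- Products Z^μ of the fields Z. -/
def ZIter : {m : ℕ} → (Fin m → ZIdx) → (ℝ → Eu 4 → ℝ) → ℝ → Eu 4 → ℝ
  | 0, _, u => u
  | m + 1, μ, u => applyZ (μ 0) (ZIter (fun i : Fin m => μ i.succ) u)

/-- The perturbed d'Alembertian □_h φ = □φ + h^{αβ} ∂_α ∂_β φ. -/
def boxH (h : Fin 5 → Fin 5 → ℝ → Eu 4 → ℝ) (φ : ℝ → Eu 4 → ℝ) : ℝ → Eu 4 → ℝ :=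
  fun t x => dAlembert φ t x
    + ∑ α : Fin 5, ∑ β : Fin 5, h α β t x * pd (n := 4) α (pd (n := 4) β φ) t x

/-- |h| = Σ_{α,β} |h^{αβ}|. -/
def habs (h : Fin 5 → Fin 5 → ℝ → Eu 4 → ℝ) : ℝ → Eu 4 → ℝ :=
  fun t x => ∑ α : Fin 5, ∑ β : Fin 5, |h α β t x|

/-- |∂h| = Σ_{α,β,γ} |∂_γ h^{αβ}|. -/
def dhabs (h : Fin 5 → Fin 5 → ℝ → Eu 4 → ℝ) : ℝ → Eu 4 → ℝ :=
  fun t x => ∑ γ : Fin 5, ∑ α : Fin 5, ∑ β : Fin 5, |pd (n := 4) γ (h α β) t x|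

/-- Mixed norm ‖G‖_{L¹_t L¹_r L²_ω(ℝ₊×ℝ⁴)}. -/
def mixedNorm (G : ℝ → Eu 4 → ℝ) : ℝ≥0∞ :=
  ∫⁻ t in Ioi (0 : ℝ), ∫⁻ r in Ioi (0 : ℝ),
    eLpNorm (fun ω : Metric.sphere (0 : Eu 4) 1 => G t (r • (ω : Eu 4))) 2
        (volume : Measure (Eu 4)).toSphere
      * ENNReal.ofReal (r ^ 3)

/-- The quantity M(T) (for `kmax = 50`) and A(T) (for `kmax = 49`) from the iteration. -/
def Mgen (kmax : ℕ) (Kc : Set (Eu 4)) (δ : ℝ) (u : ℝ → Eu 4 → ℝ) (T : ℝ) : ℝ≥0∞ :=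
  (∑ m ∈ Finset.range (kmax + 1), ∑ μ : Fin m → Fin 5,
      ((⨆ t ∈ Icc (0 : ℝ) T, L2x Kc fun x => gradMag (pdIter (n := 4) μ u) t x)
        + L2st T Kc fun t x => jap x ^ (-(1/2 : ℝ) - δ) * gradMag (pdIter (n := 4) μ u) t x))
  + (∑ m ∈ Finset.range kmax, ∑ μ : Fin m → ZIdx,
      ((L2st T Kc fun t x => jap x ^ (-(1/2 : ℝ) - δ) * gradMag (ZIter μ u) t x)
        + (L2st T (Kc ∩ {x : Eu 4 | 2 < ‖x‖}) fun t x =>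
            jap x ^ (-(1/2 : ℝ) - 2*δ) * ZIter μ u t x)
        + ⨆ t ∈ Icc (0 : ℝ) T, L2x Kc fun x => gradMag (ZIter μ u) t x))
  + L2st T (Kc ∩ {x : Eu 4 | ‖x‖ < 3}) u

/-- The data (f,g) satisfy the compatibility conditions to infinite order for the
Dirichlet problem □u = Q(u) on the exterior of {ρ ≤ 0}: there is a smooth function
attaining the data, vanishing on the boundary, and solving the equation
to infinite order at t = 0 (its Taylor coefficients at t = 0 are the formal ψ_k). -/
def CompatInfty {n : ℕ} (ρ : Eu n → ℝ) (f g : Eu n → ℝ)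
    (Q : (ℝ → Eu n → ℝ) → ℝ → Eu n → ℝ) : Prop :=
  ∃ U : ℝ → Eu n → ℝ, SmoothTX U ∧ (∀ x, U 0 x = f x) ∧ (∀ x, td U 0 x = g x) ∧
    (∀ t x, ρ x = 0 → U t x = 0) ∧
    ∀ k : ℕ, ∀ x, 0 ≤ ρ x → td^[k] (fun s y => dAlembert U s y - Q U s y) 0 x = 0

/-- The general quasilinear nonlinearity Q(u,u',u'') = A(u,u') + B^{αβ}(u,u') ∂_α∂_β u. -/
def Qnl {n : ℕ} (A : ℝ × (Fin (n + 1) → ℝ) → ℝ)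
    (B : Fin (n + 1) → Fin (n + 1) → ℝ × (Fin (n + 1) → ℝ) → ℝ)
    (u : ℝ → Eu n → ℝ) : ℝ → Eu n → ℝ :=
  fun t x => A (u t x, fun α => pd α u t x)
    + ∑ α, ∑ β, B α β (u t x, fun γ => pd γ u t x) * pd α (pd β u) t x

/-- The quadratically truncated nonlinearity, evaluated on the pair (v,w);
the iteration RHS is `iterRHS a b A B u_{l-1} u_l`. -/
def iterRHS (a : Fin 5 → ℝ) (b A : Fin 5 → Fin 5 → ℝ) (B : Fin 5 → Fin 5 → Fin 5 → ℝ)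
    (v w : ℝ → Eu 4 → ℝ) : ℝ → Eu 4 → ℝ :=
  fun t x => (∑ α : Fin 5, a α * v t x * pd (n := 4) α v t x)
    + (∑ α : Fin 5, ∑ β : Fin 5, b α β * pd (n := 4) α v t x * pd (n := 4) β v t x)
    + (∑ α : Fin 5, ∑ β : Fin 5, A α β * v t x * pd (n := 4) α (pd (n := 4) β w) t x)
    + (∑ α : Fin 5, ∑ β : Fin 5, ∑ γ : Fin 5,
        B α β γ * pd (n := 4) α v t x * pd (n := 4) β (pd (n := 4) γ w) t x)

/-! ### Second order jets of smooth functions -/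

/-- The second order jet of a function `U` on `ℝ × ℝ⁴`: continuous functions `Ut = ∂ₜU`,
`Utt = ∂ₜ²U`, `D i = ∂ᵢU`, `Dt i = ∂ₜ∂ᵢU`, `DD i j = ∂ⱼ∂ᵢU`, together with the derivative relations
between them. Spatial derivatives are recorded along lines in the coordinate directions. -/
structure WaveJet where
  U : ℝ × Eu 4 → ℝ
  Ut : ℝ × Eu 4 → ℝ
  Utt : ℝ × Eu 4 → ℝ
  D : Fin 4 → ℝ × Eu 4 → ℝ
  Dt : Fin 4 → ℝ × Eu 4 → ℝ
  DD : Fin 4 → Fin 4 → ℝ × Eu 4 → ℝ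
  cU : Continuous U
  cUt : Continuous Ut
  cUtt : Continuous Utt
  cD : ∀ i, Continuous (D i)
  cDt : ∀ i, Continuous (Dt i)
  cDD : ∀ i j, Continuous (DD i j)
  hUt : ∀ t x, HasDerivAt (fun s => U (s, x)) (Ut (t, x)) t
  hUtt : ∀ t x, HasDerivAt (fun s => Ut (s, x)) (Utt (t, x)) t
  hDt : ∀ i t x, HasDerivAt (fun s => D i (s, x)) (Dt i (t, x)) t
  hD : ∀ j t x, HasDerivAt (fun s : ℝ => U (t, x + s • EuclideanSpace.single j 1)) (D j (t, x)) 0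
  hUtD : ∀ j t x,
    HasDerivAt (fun s : ℝ => Ut (t, x + s • EuclideanSpace.single j 1)) (Dt j (t, x)) 0
  hDD : ∀ i j t x,
    HasDerivAt (fun s : ℝ => D i (t, x + s • EuclideanSpace.single j 1)) (DD i j (t, x)) 0
  symm : ∀ i j p, DD i j p = DD j i p

attribute [fun_prop] WaveJet.cU WaveJet.cUt WaveJet.cUtt WaveJet.cD WaveJet.cDt WaveJet.cDD

lemma SmoothTX.td_eq {w : ℝ → Eu 4 → ℝ} (hw : SmoothTX w) (t : ℝ) (x : Eu 4) :
    HasDerivAt (fun s => w s x) (fderiv ℝ (fun p : ℝ × Eu 4 => w p.1 p.2) (t, x) (1, 0)) t := by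
  have h1 : HasFDerivAt (fun p : ℝ × Eu 4 => w p.1 p.2)
      (fderiv ℝ (fun p : ℝ × Eu 4 => w p.1 p.2) (t, x)) (t, x) :=
    (hw.differentiable (by simp) _).hasFDerivAt
  have h2 : HasDerivAt (fun s : ℝ => (s, x)) ((1 : ℝ), (0 : Eu 4)) t :=
    (hasDerivAt_id t).prodMk (hasDerivAt_const t x)
  exact h1.comp_hasDerivAt t h2

lemma SmoothTX.hasFDerivAt_space {w : ℝ → Eu 4 → ℝ} (hw : SmoothTX w) (t : ℝ) (x : Eu 4) :
    HasFDerivAt (w t) ((fderiv ℝ (fun p : ℝ × Eu 4 => w p.1 p.2) (t, x)).comp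
      (ContinuousLinearMap.inr ℝ ℝ (Eu 4))) x := by
  have h1 : HasFDerivAt (fun p : ℝ × Eu 4 => w p.1 p.2)
      (fderiv ℝ (fun p : ℝ × Eu 4 => w p.1 p.2) (t, x)) (t, x) :=
    (hw.differentiable (by simp) _).hasFDerivAt
  exact h1.comp x (hasFDerivAt_prodMk_right t x)

lemma SmoothTX.td_fderiv {w : ℝ → Eu 4 → ℝ} (hw : SmoothTX w) (t : ℝ) (x : Eu 4) :
    td w t x = fderiv ℝ (fun p : ℝ × Eu 4 => w p.1 p.2) (t, x) (1, 0) :=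
  (hw.td_eq t x).deriv

lemma SmoothTX.sd_fderiv {w : ℝ → Eu 4 → ℝ} (hw : SmoothTX w) (j : Fin 4) (t : ℝ) (x : Eu 4) :
    sd j (w t) x
      = fderiv ℝ (fun p : ℝ × Eu 4 => w p.1 p.2) (t, x) (0, EuclideanSpace.single j 1) := by
  rw [sd, (hw.hasFDerivAt_space t x).fderiv]; simp

lemma SmoothTX.hasDerivAt_td {w : ℝ → Eu 4 → ℝ} (hw : SmoothTX w) (t : ℝ) (x : Eu 4) :
    HasDerivAt (fun s => w s x) (td w t x) t := by
  rw [hw.td_fderiv]; exact hw.td_eq t x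

lemma SmoothTX.hasDerivAt_sd {w : ℝ → Eu 4 → ℝ} (hw : SmoothTX w) (j : Fin 4) (t : ℝ)
    (x : Eu 4) :
    HasDerivAt (fun s : ℝ => w t (x + s • EuclideanSpace.single j 1)) (sd j (w t) x) 0 := by
  have h := (hw.hasFDerivAt_space t x).hasLineDerivAt (EuclideanSpace.single j 1)
  rw [hw.sd_fderiv]
  simpa [HasLineDerivAt] using h

lemma SmoothTX.fderiv_apply {w : ℝ → Eu 4 → ℝ} (hw : SmoothTX w) (v : ℝ × Eu 4) :
    SmoothTX fun t x => fderiv ℝ (fun p : ℝ × Eu 4 => w p.1 p.2) (t, x) v := by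
  have h : ContDiff ℝ (⊤ : ℕ∞) (fderiv ℝ (fun p : ℝ × Eu 4 => w p.1 p.2)) :=
    ContDiff.fderiv_right hw (by simp)
  exact h.clm_apply contDiff_const

lemma SmoothTX.smooth_td {w : ℝ → Eu 4 → ℝ} (hw : SmoothTX w) : SmoothTX (td w) := by
  have h := hw.fderiv_apply (1, 0)
  have e : td w = fun t x => fderiv ℝ (fun p : ℝ × Eu 4 => w p.1 p.2) (t, x) (1, 0) := by
    funext t x; exact hw.td_fderiv t x
  rw [e]; exact h

lemma SmoothTX.smooth_sd {w : ℝ → Eu 4 → ℝ} (hw : SmoothTX w) (j : Fin 4) :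
    SmoothTX fun t x => sd j (w t) x := by
  have h := hw.fderiv_apply (0, EuclideanSpace.single j 1)
  have e : (fun t x => sd j (w t) x) = fun t x =>
      fderiv ℝ (fun p : ℝ × Eu 4 => w p.1 p.2) (t, x) (0, EuclideanSpace.single j 1) := by
    funext t x; exact hw.sd_fderiv j t x
  rw [e]; exact h

lemma SmoothTX.fderiv_fderiv_symm {w : ℝ → Eu 4 → ℝ} (hw : SmoothTX w) (v v' p : ℝ × Eu 4) :
    fderiv ℝ (fun q => fderiv ℝ (fun p : ℝ × Eu 4 => w p.1 p.2) q v) p v'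
      = fderiv ℝ (fun q => fderiv ℝ (fun p : ℝ × Eu 4 => w p.1 p.2) q v') p v := by
  have hd : DifferentiableAt ℝ (fderiv ℝ (fun p : ℝ × Eu 4 => w p.1 p.2)) p :=
    ((ContDiff.fderiv_right (m := 1) hw (by norm_cast)).differentiable (by simp)) p
  have hs : IsSymmSndFDerivAt ℝ (fun p : ℝ × Eu 4 => w p.1 p.2) p :=
    hw.contDiffAt.isSymmSndFDerivAt
      (by rw [minSmoothness_of_isRCLikeNormedField]
          exact WithTop.coe_le_coe.2 (le_top : (2 : ℕ∞) ≤ ⊤))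
  have h1 : ∀ v : ℝ × Eu 4, fderiv ℝ (fun q => fderiv ℝ (fun p : ℝ × Eu 4 => w p.1 p.2) q v) p
      = (fderiv ℝ (fderiv ℝ (fun p : ℝ × Eu 4 => w p.1 p.2)) p).flip v := by
    intro v
    have := (hd.hasFDerivAt.clm_apply (hasFDerivAt_const v p)).fderiv
    rw [this]; ext <;> simp
  rw [h1, h1]
  simpa using hs v' v

/-- The jet of a smooth function. -/
def jetOf (w : ℝ → Eu 4 → ℝ) (hw : SmoothTX w) : WaveJet where
  U p := w p.1 p.2
  Ut p := td w p.1 p.2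
  Utt p := td (td w) p.1 p.2
  D i p := sd i (w p.1) p.2
  Dt i p := td (fun t x => sd i (w t) x) p.1 p.2
  DD i j p := sd j (fun x => sd i (w p.1) x) p.2
  cU := hw.continuous
  cUt := hw.smooth_td.continuous
  cUtt := hw.smooth_td.smooth_td.continuous
  cD i := (hw.smooth_sd i).continuous
  cDt i := (hw.smooth_sd i).smooth_td.continuous
  cDD i j := ((hw.smooth_sd i).smooth_sd j).continuous
  hUt := hw.hasDerivAt_td
  hUtt := hw.smooth_td.hasDerivAt_td
  hDt i := (hw.smooth_sd i).hasDerivAt_td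
  hD := hw.hasDerivAt_sd
  hUtD j t x := by
    have h := hw.smooth_td.hasDerivAt_sd j t x
    convert h using 1
    rw [hw.smooth_td.sd_fderiv, (hw.smooth_sd j).td_fderiv]
    simp only [hw.td_fderiv, hw.sd_fderiv]
    exact hw.fderiv_fderiv_symm _ _ _
  hDD i j t x := (hw.smooth_sd i).hasDerivAt_sd j t x
  symm i j p := by
    have h := hw.fderiv_fderiv_symm (0, EuclideanSpace.single i 1) (0, EuclideanSpace.single j 1) p
    have h1 := (hw.smooth_sd i).sd_fderiv j p.1 p.2
    have h2 := (hw.smooth_sd j).sd_fderiv i p.1 p.2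
    rw [h1, h2]
    simp only [hw.sd_fderiv]
    exact h

/-! ### Integration on slabs and Cauchy–Schwarz -/

lemma integrable_of_vanish {h : Eu 4 → ℝ} {ρ : ℝ} (hc : Continuous h)
    (h0 : ∀ x, ρ < ‖x‖ → h x = 0) : Integrable h := by
  apply hc.integrable_of_hasCompactSupport
  apply HasCompactSupport.intro (isCompact_closedBall (0 : Eu 4) ρ)
  intro x hx
  apply h0
  simpa using hx

/-- A compactly supported directional derivative has mean zero. -/
lemma integral_lineDeriv_eq_zero {h h' : Eu 4 → ℝ} {v : Eu 4} (hi : Integrable h)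
    (hi' : Integrable h')
    (hd : ∀ x, HasDerivAt (fun s : ℝ => h (x + s • v)) (h' x) 0) : ∫ x, h' x = 0 := by
  have := integral_bilinear_hasLineDerivAt_right_eq_neg_left_of_integrable (μ := volume)
    (f := fun _ : Eu 4 => (1 : ℝ)) (f' := fun _ => 0) (g := h) (g' := h') (v := v)
    (B := ContinuousLinearMap.mul ℝ ℝ) (by simp) (by simpa using hi') (by simpa using hi)
    (fun x _ => hasDerivAt_const _ _) (fun x _ => hd x)
  simpa using this

lemma integrable_strip {h : ℝ × Eu 4 → ℝ} {ρ T : ℝ} (hc : Continuous h)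
    (h0 : ∀ t ∈ Icc 0 T, ∀ x, ρ < ‖x‖ → h (t, x) = 0) :
    Integrable h ((volume.restrict (Icc 0 T)).prod volume) := by
  have e : (volume.restrict (Icc 0 T)).prod (volume : Measure (Eu 4))
      = (volume : Measure (ℝ × Eu 4)).restrict (Icc 0 T ×ˢ univ) := by
    rw [Measure.volume_eq_prod, ← Measure.prod_restrict, Measure.restrict_univ]
  rw [e]
  have h1 : IntegrableOn h (Icc 0 T ×ˢ Metric.closedBall (0 : Eu 4) ρ) :=
    hc.continuousOn.integrableOn_compact (isCompact_Icc.prod (isCompact_closedBall _ _))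
  refine h1.of_forall_sdiff_eq_zero (measurableSet_Icc.prod MeasurableSet.univ) ?_
  rintro ⟨t, x⟩ ⟨⟨ht, -⟩, hx⟩
  apply h0 t ht
  by_contra hh
  exact hx ⟨ht, by simpa using hh⟩

/-- The divergence theorem on the slab `[0, T] × ℝ⁴` for fields with spatially compact support. -/
lemma slab_divergence {V V' : ℝ × Eu 4 → ℝ} {P P' : Fin 4 → ℝ × Eu 4 → ℝ} {ρ T : ℝ} (hT : 0 ≤ T)
    (cV : Continuous V) (cV' : Continuous V') (cP : ∀ j, Continuous (P j))
    (cP' : ∀ j, Continuous (P' j))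
    (zV : ∀ t ∈ Icc 0 T, ∀ x, ρ < ‖x‖ → V (t, x) = 0)
    (zV' : ∀ t ∈ Icc 0 T, ∀ x, ρ < ‖x‖ → V' (t, x) = 0)
    (zP : ∀ j, ∀ t ∈ Icc 0 T, ∀ x, ρ < ‖x‖ → P j (t, x) = 0)
    (zP' : ∀ j, ∀ t ∈ Icc 0 T, ∀ x, ρ < ‖x‖ → P' j (t, x) = 0)
    (hV : ∀ t x, HasDerivAt (fun s => V (s, x)) (V' (t, x)) t)
    (hP : ∀ j t x,
      HasDerivAt (fun s : ℝ => P j (t, x + s • EuclideanSpace.single j 1)) (P' j (t, x)) 0) :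
    (∫ x, V (T, x)) - ∫ x, V (0, x) = ∫ t in 0..T, ∫ x, (V' (t, x) + ∑ j, P' j (t, x)) := by
  have hdiv : ∀ t ∈ Icc 0 T, ∫ x, (V' (t, x) + ∑ j, P' j (t, x)) = ∫ x, V' (t, x) := by
    intro t ht
    have iV' : Integrable fun x => V' (t, x) :=
      integrable_of_vanish (by fun_prop) (zV' t ht)
    have iP' : ∀ j, Integrable fun x => P' j (t, x) := fun j =>
      integrable_of_vanish (by fun_prop) (zP' j t ht)
    have iP : ∀ j, Integrable fun x => P j (t, x) := fun j =>
      integrable_of_vanish (by fun_prop) (zP j t ht)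
    rw [integral_add iV' (integrable_finsetSum _ fun j _ => iP' j),
      integral_finsetSum _ fun j _ => iP' j,
      Finset.sum_eq_zero, add_zero]
    intro j _
    exact integral_lineDeriv_eq_zero (iP j) (iP' j) (hP j t)
  have e1 : ∫ t in 0..T, ∫ x, (V' (t, x) + ∑ j, P' j (t, x)) = ∫ t in 0..T, ∫ x, V' (t, x) := by
    apply intervalIntegral.integral_congr
    intro t ht
    rw [uIcc_of_le hT] at ht
    exact hdiv t ht
  have hsw : Integrable (Function.uncurry fun (t : ℝ) (x : Eu 4) => V' (t, x))
      ((volume.restrict (Set.uIoc 0 T)).prod volume) := by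
    have := integrable_strip cV' zV'
    rw [uIoc_of_le hT]
    rw [restrict_Ioc_eq_restrict_Icc]
    exact this
  rw [e1, intervalIntegral_integral_swap hsw, ← integral_sub
    (integrable_of_vanish (by fun_prop) (zV T ⟨hT, le_rfl⟩))
    (integrable_of_vanish (by fun_prop) (zV 0 ⟨le_rfl, hT⟩))]
  congr 1
  funext x
  rw [intervalIntegral.integral_eq_sub_of_hasDerivAt (fun t _ => hV t x)]
  exact Continuous.intervalIntegrable (by fun_prop) _ _

lemma integral_mul_sq_le {f g : Eu 4 → ℝ} (hf : Integrable fun x => f x ^ 2)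
    (hg : Integrable fun x => g x ^ 2) (hfg : Integrable fun x => f x * g x) :
    (∫ x, f x * g x) ^ 2 ≤ (∫ x, f x ^ 2) * ∫ x, g x ^ 2 := by
  have key : ∀ s : ℝ, 0 ≤ (∫ x, f x ^ 2) * (s * s) + (2 * ∫ x, f x * g x) * s + ∫ x, g x ^ 2 := by
    intro s
    have h : ∫ x, (s * f x + g x) ^ 2
        = (∫ x, f x ^ 2) * (s * s) + (2 * ∫ x, f x * g x) * s + ∫ x, g x ^ 2 := by
      have e : (fun x => (s * f x + g x) ^ 2)
          = fun x => ((s * s) * f x ^ 2 + (2 * s) * (f x * g x)) + g x ^ 2 := by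
        funext x; ring
      have hi : Integrable fun x => (s * s) * f x ^ 2 + (2 * s) * (f x * g x) :=
        (hf.const_mul _).add (hfg.const_mul _)
      rw [e, integral_add hi hg,
        integral_add (hf.const_mul _) (hfg.const_mul _), integral_const_mul, integral_const_mul]
      ring
    rw [← h]
    exact integral_nonneg fun x => sq_nonneg _
  have := discrim_le_zero key
  unfold discrim at this
  linarith

/-- Cauchy–Schwarz with a compactly supported weight. -/
lemma weighted_cauchy_schwarz {ζ f g : Eu 4 → ℝ} {ρ : ℝ} (cζ : Continuous ζ) (cf : Continuous f)
    (cg : Continuous g) (zζ : ∀ x, ρ < ‖x‖ → ζ x = 0) (nζ : ∀ x, 0 ≤ ζ x) :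
    |∫ x, ζ x * (f x * g x)| ≤ √(∫ x, ζ x * f x ^ 2) * √(∫ x, ζ x * g x ^ 2) := by
  have hs : ∀ x, √(ζ x) ^ 2 = ζ x := fun x => Real.sq_sqrt (nζ x)
  have z' : ∀ x, ρ < ‖x‖ → √(ζ x) = 0 := fun x hx => by rw [zζ x hx, Real.sqrt_zero]
  have h := integral_mul_sq_le (f := fun x => √(ζ x) * f x) (g := fun x => √(ζ x) * g x)
    (integrable_of_vanish (ρ := ρ) (by fun_prop) fun x hx => by simp [z' x hx])
    (integrable_of_vanish (ρ := ρ) (by fun_prop) fun x hx => by simp [z' x hx])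
    (integrable_of_vanish (ρ := ρ) (by fun_prop) fun x hx => by simp [z' x hx])
  have e1 : ∀ x, (√(ζ x) * f x) * (√(ζ x) * g x) = ζ x * (f x * g x) := fun x => by
    rw [← hs x]; simp only [Real.sqrt_sq (Real.sqrt_nonneg _)]; ring
  simp only [e1, mul_pow, hs] at h
  rw [← Real.sqrt_mul (integral_nonneg fun x => mul_nonneg (nζ x) (sq_nonneg _))]
  exact Real.abs_le_sqrt h

lemma slab_continuousOn {h : ℝ × Eu 4 → ℝ} {ρ T : ℝ} (c : Continuous h)
    (z : ∀ t ∈ Icc 0 T, ∀ x, ρ < ‖x‖ → h (t, x) = 0) :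
    ContinuousOn (fun t => ∫ x, h (t, x)) (Icc 0 T) := by
  refine continuousOn_integral_of_compact_support (f := fun t x => h (t, x))
    (isCompact_closedBall (0 : Eu 4) ρ) c.continuousOn ?_
  intro t x ht hx
  exact z t ht x (by simpa using hx)

lemma slab_intervalIntegrable {h : ℝ × Eu 4 → ℝ} {ρ T : ℝ} (hT : 0 ≤ T) (c : Continuous h)
    (z : ∀ t ∈ Icc 0 T, ∀ x, ρ < ‖x‖ → h (t, x) = 0) :
    IntervalIntegrable (fun t => ∫ x, h (t, x)) volume 0 T :=
  ContinuousOn.intervalIntegrable (by rw [uIcc_of_le hT]; exact slab_continuousOn c z)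

lemma slab_mono {h k : ℝ × Eu 4 → ℝ} {ρ T : ℝ} (hT : 0 ≤ T) (ch : Continuous h)
    (ck : Continuous k) (zh : ∀ t ∈ Icc 0 T, ∀ x, ρ < ‖x‖ → h (t, x) = 0)
    (zk : ∀ t ∈ Icc 0 T, ∀ x, ρ < ‖x‖ → k (t, x) = 0)
    (hk : ∀ t ∈ Icc 0 T, ∀ x, h (t, x) ≤ k (t, x)) :
    ∫ t in 0..T, ∫ x, h (t, x) ≤ ∫ t in 0..T, ∫ x, k (t, x) := by
  apply intervalIntegral.integral_mono_on hT (slab_intervalIntegrable hT ch zh)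
    (slab_intervalIntegrable hT ck zk)
  intro t ht
  exact integral_mono (integrable_of_vanish (by fun_prop) (zh t ht))
    (integrable_of_vanish (by fun_prop) (zk t ht)) (hk t ht)

/-! ### Weights, light cone cutoffs and the energy flux -/

lemma one_le_br (x : Eu 4) : 1 ≤ 1 + ‖x‖ ^ 2 := by nlinarith [sq_nonneg ‖x‖]

lemma hasDerivAt_normSq (x : Eu 4) (j : Fin 4) :
    HasDerivAt (fun s : ℝ => ‖x + s • EuclideanSpace.single j (1 : ℝ)‖ ^ 2) (2 * x j) 0 := by
  have e : (fun s : ℝ => ‖x + s • EuclideanSpace.single j (1 : ℝ)‖ ^ 2)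
      = fun s : ℝ => ‖x‖ ^ 2 + 2 * x j * s + s ^ 2 := by
    funext s
    rw [norm_add_sq_real, inner_smul_right, norm_smul]
    simp [EuclideanSpace.inner_single_right]
    ring
  rw [e]
  have h := (((hasDerivAt_id (0 : ℝ)).const_mul (2 * x j)).const_add (‖x‖ ^ 2)).add
    (hasDerivAt_pow 2 (0 : ℝ))
  exact h.congr_deriv (by simp)

lemma hasDerivAt_coord (x : Eu 4) (i j : Fin 4) :
    HasDerivAt (fun s : ℝ => (x + s • EuclideanSpace.single j (1 : ℝ)) i)
      (if i = j then 1 else 0) 0 := by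
  have e : (fun s : ℝ => (x + s • EuclideanSpace.single j (1 : ℝ)) i)
      = fun s : ℝ => x i + s * (if i = j then 1 else 0) := by
    funext s
    simp
  rw [e]
  simpa using ((hasDerivAt_id (0 : ℝ)).mul_const (if i = j then (1 : ℝ) else 0)).const_add (x i)

lemma hasDerivAt_br_rpow (σ : ℝ) (x : Eu 4) (j : Fin 4) :
    HasDerivAt (fun s : ℝ => (1 + ‖x + s • EuclideanSpace.single j (1 : ℝ)‖ ^ 2) ^ σ)
      (2 * x j * (σ * (1 + ‖x‖ ^ 2) ^ (σ - 1))) 0 := by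
  have h := ((hasDerivAt_normSq x j).const_add 1).rpow_const (p := σ)
    (Or.inl (by have := one_le_br x; simp; positivity))
  convert h using 1
  simp; ring

@[fun_prop]
lemma continuous_br_rpow (σ : ℝ) : Continuous fun x : Eu 4 => (1 + ‖x‖ ^ 2) ^ σ := by
  apply Continuous.rpow_const (by fun_prop)
  intro x; left; have := one_le_br x; positivity

lemma jap_eq (x : Eu 4) : jap x = (1 + ‖x‖ ^ 2) ^ (1 / 2 : ℝ) := by
  rw [jap, Real.sqrt_eq_rpow]

@[fun_prop]
lemma continuous_jap : Continuous (jap : Eu 4 → ℝ) := by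
  unfold jap; fun_prop

lemma norm_le_jap (x : Eu 4) : ‖x‖ ≤ jap x := Real.le_sqrt_of_sq_le (by linarith)

/-- `⟨x⟩⁻¹`. -/
def ijap (x : Eu 4) : ℝ := (1 + ‖x‖ ^ 2) ^ (-(1 / 2) : ℝ)

@[fun_prop]
lemma continuous_ijap : Continuous ijap := continuous_br_rpow _

lemma ijap_pos (x : Eu 4) : 0 < ijap x := by
  have := one_le_br x; unfold ijap; positivity

lemma ijap_sq (x : Eu 4) : ijap x ^ 2 * (1 + ‖x‖ ^ 2) = 1 := by
  have h := one_le_br x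
  have h0 : 0 < 1 + ‖x‖ ^ 2 := by positivity
  unfold ijap
  rw [← Real.rpow_natCast, ← Real.rpow_mul h0.le]
  norm_num
  rw [Real.rpow_neg_one, inv_mul_cancel₀ h0.ne']

lemma hasDerivAt_posSq (s : ℝ) : HasDerivAt (fun s : ℝ => max 0 s ^ 2) (2 * max 0 s) s := by
  rcases lt_trichotomy s 0 with h | h | h
  · rw [max_eq_left h.le, mul_zero]
    refine (hasDerivAt_const s (0 : ℝ)).congr_of_eventuallyEq ?_
    filter_upwards [Iio_mem_nhds h] with y hy
    rw [max_eq_left (le_of_lt hy)]; norm_num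
  · subst h
    rw [hasDerivAt_iff_isLittleO]
    have h1 : (fun y : ℝ => (y - 0) ^ 2) =o[nhds 0] fun y : ℝ => y - 0 := by
      simpa using (Asymptotics.isLittleO_pow_id (𝕜 := ℝ) one_lt_two)
    refine Asymptotics.IsBigO.trans_isLittleO ?_ h1
    apply Asymptotics.IsBigO.of_bound 1
    filter_upwards with y
    simp only [max_self, mul_zero, smul_zero, sub_zero, one_mul, norm_pow, Real.norm_eq_abs]
    norm_num
    rcases le_total 0 y with hy | hy
    · rw [max_eq_right hy]
    · rw [max_eq_left hy]; norm_num; positivity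
  · rw [max_eq_right h.le]
    have h2 : HasDerivAt (fun y : ℝ => y ^ 2) (2 * s) s := by simpa using hasDerivAt_pow 2 s
    refine h2.congr_of_eventuallyEq ?_
    filter_upwards [Ioi_mem_nhds h] with y hy
    rw [max_eq_right (le_of_lt hy)]

/-- The (square root of the) cutoff, supported in the light cone `t + ⟨x⟩ ≤ R`. Its square is
of class `C¹`. -/
def cut (R t : ℝ) (x : Eu 4) : ℝ := max 0 (1 - (t + jap x) / R)

lemma continuous_cut (R : ℝ) : Continuous fun p : ℝ × Eu 4 => cut R p.1 p.2 := by
  unfold cut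
  fun_prop

lemma cut_nonneg (R t : ℝ) (x : Eu 4) : 0 ≤ cut R t x := le_max_left _ _

lemma cut_le_one {R t : ℝ} (hR : 0 < R) (ht : 0 ≤ t) (x : Eu 4) : cut R t x ≤ 1 := by
  have : 0 ≤ (t + jap x) / R := div_nonneg (add_nonneg ht (Real.sqrt_nonneg _)) hR.le
  exact max_le zero_le_one (by linarith)

lemma cut_eq_zero {R t : ℝ} (hR : 0 < R) (ht : 0 ≤ t) {x : Eu 4} (hx : R < ‖x‖) :
    cut R t x = 0 := by
  apply max_eq_left
  have : 1 ≤ (t + jap x) / R := by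
    rw [le_div_iff₀ hR]; linarith [norm_le_jap x]
  linarith

lemma hasDerivAt_cut_time (R t : ℝ) (x : Eu 4) :
    HasDerivAt (fun s => cut R s x ^ 2) (-(2 * cut R t x / R)) t := by
  have h1 : HasDerivAt (fun s : ℝ => 1 - (s + jap x) / R) (-(1 / R)) t := by
    simpa using (((hasDerivAt_id t).add_const (jap x)).div_const R).const_sub 1
  have h := (hasDerivAt_posSq (1 - (t + jap x) / R)).comp t h1
  refine h.congr_deriv ?_
  unfold cut; ring

lemma hasDerivAt_cut_space (R t : ℝ) (x : Eu 4) (j : Fin 4) :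
    HasDerivAt (fun s : ℝ => cut R t (x + s • EuclideanSpace.single j 1) ^ 2)
      (-(2 * cut R t x * (x j * ijap x) / R)) 0 := by
  have h0 := hasDerivAt_br_rpow (1 / 2) x j
  have h1 : HasDerivAt (fun s : ℝ => 1 - (t + jap (x + s • EuclideanSpace.single j 1)) / R)
      (-(x j * ijap x / R)) 0 := by
    simp only [jap_eq]
    refine (((h0.const_add t).div_const R).const_sub 1).congr_deriv ?_
    unfold ijap
    norm_num
    ring
  have h2 := hasDerivAt_posSq (1 - (t + jap (x + (0 : ℝ) • EuclideanSpace.single j 1)) / R)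
  have h := h2.comp (0 : ℝ) h1
  refine h.congr_deriv ?_
  unfold cut; simp; ring

/-- `∑ xᵢ ∂ᵢU`. -/
def WaveJet.S (J : WaveJet) (p : ℝ × Eu 4) : ℝ := ∑ i, p.2 i * J.D i p

/-- `|∇U|²`. -/
def WaveJet.G (J : WaveJet) (p : ℝ × Eu 4) : ℝ := ∑ i, J.D i p ^ 2

/-- `□U`. -/
def WaveJet.box (J : WaveJet) (p : ℝ × Eu 4) : ℝ := J.Utt p - ∑ i, J.DD i i p

@[fun_prop]
lemma WaveJet.cS (J : WaveJet) : Continuous J.S := by unfold WaveJet.S; fun_prop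
@[fun_prop]
lemma WaveJet.cG (J : WaveJet) : Continuous J.G := by unfold WaveJet.G; fun_prop
@[fun_prop]
lemma WaveJet.cbox (J : WaveJet) : Continuous J.box := by unfold WaveJet.box; fun_prop

lemma WaveJet.G_nonneg (J : WaveJet) (p : ℝ × Eu 4) : 0 ≤ J.G p :=
  Finset.sum_nonneg fun _ _ => sq_nonneg _

lemma WaveJet.S_sq_le (J : WaveJet) (p : ℝ × Eu 4) : J.S p ^ 2 ≤ ‖p.2‖ ^ 2 * J.G p := by
  have := Finset.sum_mul_sq_le_sq_mul_sq Finset.univ (fun i => p.2 i) (fun i => J.D i p)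
  rw [EuclideanSpace.real_norm_sq_eq]
  exact this

lemma WaveJet.ijap_S_sq_le (J : WaveJet) (p : ℝ × Eu 4) : (ijap p.2 * J.S p) ^ 2 ≤ J.G p := by
  have h1 := J.S_sq_le p
  have h2 := ijap_sq p.2
  have h3 := J.G_nonneg p
  have h4 := sq_nonneg (ijap p.2)
  calc (ijap p.2 * J.S p) ^ 2 = ijap p.2 ^ 2 * J.S p ^ 2 := by ring
    _ ≤ ijap p.2 ^ 2 * (‖p.2‖ ^ 2 * J.G p) := by gcongr
    _ = (ijap p.2 ^ 2 * (1 + ‖p.2‖ ^ 2)) * J.G p - ijap p.2 ^ 2 * J.G p := by ring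
    _ ≤ J.G p := by rw [h2]; nlinarith

/-- Energy inequality in the truncated light cone. The terms in which a derivative falls on the
cutoff have a favourable sign, since the cutoff is a decreasing function of `t + ⟨x⟩` and
`|∇⟨x⟩| ≤ 1`. -/
lemma WaveJet.energy_flux (J : WaveJet) {R T : ℝ} (hR : 0 < R) (hT : 0 ≤ T) :
    (∫ x, cut R T x ^ 2 * (J.Ut (T, x) ^ 2 + J.G (T, x)))
      - ∫ x, cut R 0 x ^ 2 * (J.Ut (0, x) ^ 2 + J.G (0, x))
      ≤ ∫ t in 0..T, ∫ x, 2 * (cut R t x ^ 2 * (J.box (t, x) * J.Ut (t, x))) := by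
  have cc := continuous_cut R
  have z : ∀ t ∈ Icc 0 T, ∀ x : Eu 4, R < ‖x‖ → cut R t x = 0 :=
    fun t ht x hx => cut_eq_zero hR ht.1 hx
  set V : ℝ × Eu 4 → ℝ := fun p => cut R p.1 p.2 ^ 2 * (J.Ut p ^ 2 + J.G p) with hV
  set V' : ℝ × Eu 4 → ℝ := fun p => -(2 * cut R p.1 p.2 / R) * (J.Ut p ^ 2 + J.G p)
    + cut R p.1 p.2 ^ 2 * (2 * J.Ut p * J.Utt p + ∑ i, 2 * J.D i p * J.Dt i p) with hV'
  set P : Fin 4 → ℝ × Eu 4 → ℝ := fun j p => cut R p.1 p.2 ^ 2 * (-2 * (J.Ut p * J.D j p)) with hP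
  set P' : Fin 4 → ℝ × Eu 4 → ℝ := fun j p =>
    -(2 * cut R p.1 p.2 * (p.2 j * ijap p.2) / R) * (-2 * (J.Ut p * J.D j p))
    + cut R p.1 p.2 ^ 2 * (-2 * (J.Dt j p * J.D j p + J.Ut p * J.DD j j p)) with hP'
  have key := slab_divergence (V := V) (V' := V') (P := P) (P' := P') (ρ := R) hT
    (by fun_prop) (by fun_prop) (fun j => by fun_prop) (fun j => by fun_prop)
    (fun t ht x hx => by simp [hV, z t ht x hx]) (fun t ht x hx => by simp [hV', z t ht x hx])
    (fun j t ht x hx => by simp [hP, z t ht x hx]) (fun j t ht x hx => by simp [hP', z t ht x hx])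
    ?_ ?_
  · change (∫ x, V (T, x)) - ∫ x, V (0, x) ≤ _
    rw [key]
    apply slab_mono (ρ := R) (h := fun p => V' p + ∑ j, P' j p)
      (k := fun p => 2 * (cut R p.1 p.2 ^ 2 * (J.box p * J.Ut p))) hT (by fun_prop) (by fun_prop)
      (fun t ht x hx => by simp [hV', hP', z t ht x hx]) (fun t ht x hx => by simp [z t ht x hx])
    intro t ht x
    have h1 := J.ijap_S_sq_le (t, x)
    have e : V' (t, x) + ∑ j, P' j (t, x)
        = 2 * (cut R t x ^ 2 * (J.box (t, x) * J.Ut (t, x)))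
          - 2 * cut R t x / R * (J.Ut (t, x) ^ 2 + J.G (t, x)
            - 2 * (ijap x * J.S (t, x)) * J.Ut (t, x)) := by
      simp only [hV', hP', WaveJet.S, WaveJet.box, WaveJet.G, Fin.sum_univ_four]
      ring
    have h2 : 0 ≤ 2 * cut R t x / R * (J.Ut (t, x) ^ 2 + J.G (t, x)
            - 2 * (ijap x * J.S (t, x)) * J.Ut (t, x)) := by
      apply mul_nonneg (div_nonneg (by linarith [cut_nonneg R t x]) hR.le)
      dsimp only at h1
      nlinarith [sq_nonneg (ijap x * J.S (t, x) - J.Ut (t, x))]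
    dsimp only
    rw [e]; linarith
  · intro t x
    have h1 := ((J.hUtt t x).pow 2).add
      (HasDerivAt.fun_sum (u := Finset.univ) fun i _ => (J.hDt i t x).pow 2)
    have h := (hasDerivAt_cut_time R t x).mul h1
    refine h.congr_deriv ?_
    simp [hV', WaveJet.G]
  · intro j t x
    have h := (hasDerivAt_cut_space R t x j).mul (((J.hUtD j t x).mul (J.hDD j j t x)).const_mul (-2))
    refine h.congr_deriv ?_
    simp [hP']

/-! ### Energy bound and Hardy inequality -/

/-- A form of Fatou's lemma turning bounds on truncated real integrals into a bound on the full
`lintegral`. -/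
lemma lintegral_le_of_truncations {α : Type*} [MeasurableSpace α] {μ : Measure α}
    {f : ℕ → α → ℝ} {g : α → ℝ} {c : ℕ → ℝ} {C : ℝ} (hi : ∀ n, Integrable (f n) μ)
    (hm : ∀ n, Measurable (f n)) (h0 : ∀ n, 0 ≤ᵐ[μ] f n)
    (hlim : ∀ x, Filter.Tendsto (fun n => f n x) Filter.atTop (nhds (g x)))
    (hc : ∀ n, ∫ x, f n x ∂μ ≤ c n) (hC : Filter.Tendsto c Filter.atTop (nhds C)) :
    ∫⁻ x, ENNReal.ofReal (g x) ∂μ ≤ ENNReal.ofReal C := by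
  have h1 : ∀ n, ∫⁻ x, ENNReal.ofReal (f n x) ∂μ ≤ ENNReal.ofReal (c n) := fun n => by
    rw [← ofReal_integral_eq_lintegral_ofReal (hi n) (h0 n)]
    exact ENNReal.ofReal_le_ofReal (hc n)
  calc ∫⁻ x, ENNReal.ofReal (g x) ∂μ
      = ∫⁻ x, Filter.liminf (fun n => ENNReal.ofReal (f n x)) Filter.atTop ∂μ := by
        congr 1; funext x
        exact ((ENNReal.tendsto_ofReal (hlim x)).liminf_eq).symm
    _ ≤ Filter.liminf (fun n => ∫⁻ x, ENNReal.ofReal (f n x) ∂μ) Filter.atTop :=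
        lintegral_liminf_le fun n => (hm n).ennreal_ofReal
    _ ≤ Filter.liminf (fun n => ENNReal.ofReal (c n)) Filter.atTop :=
        Filter.liminf_le_liminf (Filter.Eventually.of_forall h1)
    _ = ENNReal.ofReal C := (ENNReal.tendsto_ofReal hC).liminf_eq

lemma tendsto_cut (t : ℝ) (x : Eu 4) :
    Filter.Tendsto (fun n : ℕ => cut ((n : ℝ) + 1) t x) Filter.atTop (nhds 1) := by
  have h1 : Filter.Tendsto (fun n : ℕ => (t + jap x) / ((n : ℝ) + 1)) Filter.atTop (nhds 0) :=
    tendsto_const_nhds.div_atTop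
      (Filter.tendsto_atTop_add_const_right _ _ tendsto_natCast_atTop_atTop)
  have h2 := (tendsto_const_nhds (x := (0 : ℝ))).max (h1.const_sub 1)
  simpa [cut] using h2

/-- Energy estimate in the truncated cone, with the square-root energy on the left. -/
lemma WaveJet.cone_energy (J : WaveJet) {R T : ℝ} (hR : 0 < R) (hT : 0 ≤ T) {t : ℝ}
    (ht : t ∈ Icc 0 T) :
    √(∫ x, cut R t x ^ 2 * (J.Ut (t, x) ^ 2 + J.G (t, x)))
      ≤ √(∫ x, cut R 0 x ^ 2 * (J.Ut (0, x) ^ 2 + J.G (0, x)))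
        + 2 * ∫ s in 0..T, √(∫ x, cut R s x ^ 2 * J.box (s, x) ^ 2) := by
  have cc := continuous_cut R
  have z : ∀ t ∈ Icc 0 T, ∀ x : Eu 4, R < ‖x‖ → cut R t x = 0 :=
    fun t ht x hx => cut_eq_zero hR ht.1 hx
  set e : ℝ → ℝ := fun s => ∫ x, cut R s x ^ 2 * (J.Ut (s, x) ^ 2 + J.G (s, x)) with he
  set b : ℝ → ℝ := fun s => √(∫ x, cut R s x ^ 2 * J.box (s, x) ^ 2) with hb
  have e0 : ∀ s, 0 ≤ e s := fun s => integral_nonneg fun x =>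
    mul_nonneg (sq_nonneg _) (add_nonneg (sq_nonneg _) (J.G_nonneg _))
  have b0 : ∀ s, 0 ≤ b s := fun s => Real.sqrt_nonneg _
  have ce : ContinuousOn e (Icc 0 T) :=
    slab_continuousOn (h := fun p => cut R p.1 p.2 ^ 2 * (J.Ut p ^ 2 + J.G p)) (ρ := R)
      (by fun_prop) (fun t ht x hx => by simp [z t ht x hx])
  have cb : ContinuousOn b (Icc 0 T) :=
    (slab_continuousOn (h := fun p => cut R p.1 p.2 ^ 2 * J.box p ^ 2) (ρ := R)
      (by fun_prop) (fun t ht x hx => by simp [z t ht x hx])).sqrt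
  -- the energy is largest at some time `τ`; estimating at `τ` avoids a Gronwall argument
  obtain ⟨τ, hτ, hmax⟩ := isCompact_Icc.exists_isMaxOn ⟨0, left_mem_Icc.2 hT⟩ ce
  have hmax' : ∀ s ∈ Icc 0 T, e s ≤ e τ := fun s hs => hmax hs
  have hsub : Icc 0 τ ⊆ Icc 0 T := Icc_subset_Icc_right hτ.2
  have cs : ∀ s ∈ Icc 0 T,
      ∫ x, 2 * (cut R s x ^ 2 * (J.box (s, x) * J.Ut (s, x))) ≤ 2 * (b s * √(e τ)) := by
    intro s hs
    rw [integral_const_mul]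
    have h1 := weighted_cauchy_schwarz (ζ := fun x => cut R s x ^ 2)
      (f := fun x => J.box (s, x)) (g := fun x => J.Ut (s, x)) (ρ := R) (by fun_prop) (by fun_prop)
      (by fun_prop) (fun x hx => by simp [z s hs x hx]) (fun x => sq_nonneg _)
    have h2 : √(∫ x, cut R s x ^ 2 * J.Ut (s, x) ^ 2) ≤ √(e τ) := by
      apply Real.sqrt_le_sqrt
      refine le_trans ?_ (hmax' s hs)
      apply integral_mono
      · exact integrable_of_vanish (ρ := R) (by fun_prop) (fun x hx => by simp [z s hs x hx])
      · exact integrable_of_vanish (ρ := R) (by fun_prop) (fun x hx => by simp [z s hs x hx])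
      · intro x
        dsimp only
        gcongr
        linarith [J.G_nonneg (s, x)]
    have h3 := mul_le_mul_of_nonneg_left h2 (b0 s)
    have h4 := le_abs_self (∫ x, cut R s x ^ 2 * (J.box (s, x) * J.Ut (s, x)))
    linarith
  have hflux := J.energy_flux hR hτ.1
  have h5 : ∫ s in 0..τ, ∫ x, 2 * (cut R s x ^ 2 * (J.box (s, x) * J.Ut (s, x)))
      ≤ ∫ s in 0..τ, 2 * (b s * √(e τ)) := by
    apply intervalIntegral.integral_mono_on hτ.1
    · exact slab_intervalIntegrable hτ.1
        (h := fun p => 2 * (cut R p.1 p.2 ^ 2 * (J.box p * J.Ut p))) (ρ := R) (by fun_prop)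
        (fun t ht x hx => by simp [z t (hsub ht) x hx])
    · apply ContinuousOn.intervalIntegrable
      rw [uIcc_of_le hτ.1]
      have := cb.mono hsub
      fun_prop
    · intro s hs; exact cs s (hsub hs)
  have h6 : ∫ s in 0..τ, 2 * (b s * √(e τ)) = 2 * √(e τ) * ∫ s in 0..τ, b s := by
    rw [← intervalIntegral.integral_const_mul]; congr 1; funext s; ring
  have h7 : ∫ s in 0..τ, b s ≤ ∫ s in 0..T, b s := by
    apply intervalIntegral.integral_mono_interval le_rfl hτ.1 hτ.2
    · exact Filter.Eventually.of_forall b0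
    · apply ContinuousOn.intervalIntegrable
      rwa [uIcc_of_le hT]
  set I := ∫ s in 0..T, b s
  have hI : 0 ≤ I := intervalIntegral.integral_nonneg hT fun s _ => b0 s
  have h8 : √(e τ) ^ 2 ≤ √(e 0) ^ 2 + 2 * √(e τ) * I := by
    rw [Real.sq_sqrt (e0 τ), Real.sq_sqrt (e0 0)]
    have := mul_le_mul_of_nonneg_left h7 (by positivity : 0 ≤ 2 * √(e τ))
    have h9 : e τ - e 0 ≤ _ := hflux
    linarith
  have h10 : √(e τ) ≤ √(e 0) + 2 * I := by
    by_contra hcon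
    push Not at hcon
    nlinarith [Real.sqrt_nonneg (e τ), Real.sqrt_nonneg (e 0)]
  exact (Real.sqrt_le_sqrt (hmax' t ht)).trans h10

/-- The energy at time `t ∈ [0, T]` is finite and controlled by the data bound `A`. -/
lemma WaveJet.energy_bound (J : WaveJet) {A T : ℝ} (hT : 0 ≤ T)
    (hA : ∀ R > 0, √(∫ x, cut R 0 x ^ 2 * (J.Ut (0, x) ^ 2 + J.G (0, x)))
        + ∫ s in 0..T, √(∫ x, cut R s x ^ 2 * J.box (s, x) ^ 2) ≤ A)
    {t : ℝ} (ht : t ∈ Icc 0 T) :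
    Integrable (fun x => J.Ut (t, x) ^ 2 + J.G (t, x))
      ∧ ∫ x, (J.Ut (t, x) ^ 2 + J.G (t, x)) ≤ 4 * A ^ 2 := by
  have n0 : ∀ x, 0 ≤ J.Ut (t, x) ^ 2 + J.G (t, x) :=
    fun x => add_nonneg (sq_nonneg _) (J.G_nonneg _)
  have cN : Continuous fun x => J.Ut (t, x) ^ 2 + J.G (t, x) := by fun_prop
  have key : ∫⁻ x, ENNReal.ofReal (J.Ut (t, x) ^ 2 + J.G (t, x)) ≤ ENNReal.ofReal (4 * A ^ 2) := by
    have cc : ∀ n : ℕ, Continuous fun x => cut ((n : ℝ) + 1) t x := fun n =>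
      (continuous_cut ((n : ℝ) + 1)).comp (by fun_prop : Continuous fun x : Eu 4 => (t, x))
    refine lintegral_le_of_truncations
      (f := fun n x => cut ((n : ℝ) + 1) t x ^ 2 * (J.Ut (t, x) ^ 2 + J.G (t, x)))
      (c := fun _ => 4 * A ^ 2) ?_ ?_ ?_ ?_ ?_ tendsto_const_nhds
    · intro n
      have := cc n
      refine integrable_of_vanish (ρ := (n : ℝ) + 1) (by fun_prop) fun x hx => ?_
      rw [cut_eq_zero (by positivity) ht.1 hx]; ring
    · intro n
      have := cc n
      exact Continuous.measurable (by fun_prop)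
    · intro n
      exact Filter.Eventually.of_forall fun x => mul_nonneg (sq_nonneg _) (n0 x)
    · intro x
      simpa using ((tendsto_cut t x).pow 2).mul_const (J.Ut (t, x) ^ 2 + J.G (t, x))
    · intro n
      have hn : (0 : ℝ) < (n : ℝ) + 1 := by positivity
      have h1 := J.cone_energy hn hT ht
      have h2 := hA _ hn
      set X := ∫ x, cut ((n : ℝ) + 1) t x ^ 2 * (J.Ut (t, x) ^ 2 + J.G (t, x))
      have hX : 0 ≤ X := integral_nonneg fun x => mul_nonneg (sq_nonneg _) (n0 x)
      have h3 : √X ≤ 2 * A := by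
        linarith [Real.sqrt_nonneg
          (∫ x, cut ((n : ℝ) + 1) 0 x ^ 2 * (J.Ut (0, x) ^ 2 + J.G (0, x)))]
      calc X = √X ^ 2 := (Real.sq_sqrt hX).symm
        _ ≤ (2 * A) ^ 2 := by gcongr
        _ = 4 * A ^ 2 := by ring
  have hi : Integrable fun x => J.Ut (t, x) ^ 2 + J.G (t, x) := by
    refine ⟨cN.aestronglyMeasurable, ?_⟩
    rw [hasFiniteIntegral_iff_ofReal (Filter.Eventually.of_forall n0)]
    exact key.trans_lt ENNReal.ofReal_lt_top
  refine ⟨hi, ?_⟩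
  rw [← ofReal_integral_eq_lintegral_ofReal hi (Filter.Eventually.of_forall n0)] at key
  exact (ENNReal.ofReal_le_ofReal_iff (by positivity)).1 key

lemma hasDerivAt_ijap (x : Eu 4) (j : Fin 4) :
    HasDerivAt (fun s : ℝ => ijap (x + s • EuclideanSpace.single j 1)) (-(x j * ijap x ^ 3)) 0 := by
  have h := hasDerivAt_br_rpow (-(1 / 2)) x j
  refine h.congr_deriv ?_
  have h0 : 0 < 1 + ‖x‖ ^ 2 := by have := one_le_br x; positivity
  have e : ijap x ^ 3 = (1 + ‖x‖ ^ 2) ^ (-(1 / 2) - 1 : ℝ) := by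
    unfold ijap
    rw [← Real.rpow_natCast, ← Real.rpow_mul h0.le]
    norm_num
  rw [e]; ring

lemma WaveJet.D_eq_zero (J : WaveJet) {t ρ : ℝ} (z : ∀ x, ρ < ‖x‖ → J.U (t, x) = 0) (j : Fin 4)
    {x : Eu 4} (hx : ρ < ‖x‖) : J.D j (t, x) = 0 := by
  refine (J.hD j t x).unique ((hasDerivAt_const (0 : ℝ) (0 : ℝ)).congr_of_eventuallyEq ?_)
  have hc : Continuous fun s : ℝ => ‖x + s • EuclideanSpace.single j (1 : ℝ)‖ := by fun_prop
  have := hc.continuousAt.eventually (lt_mem_nhds (a := ρ) (b := ‖x + (0 : ℝ) • EuclideanSpace.single j (1 : ℝ)‖) (by simpa using hx))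
  filter_upwards [this] with s hs
  exact z _ hs

/-- Hardy's inequality with the inhomogeneous weight `⟨x⟩⁻²`. -/
lemma WaveJet.hardy (J : WaveJet) {t ρ : ℝ} (z : ∀ x, ρ < ‖x‖ → J.U (t, x) = 0) :
    Integrable (fun x => ijap x ^ 2 * J.U (t, x) ^ 2)
      ∧ ∫ x, ijap x ^ 2 * J.U (t, x) ^ 2 ≤ ∫ x, J.G (t, x) := by
  have zD : ∀ j x, ρ < ‖x‖ → J.D j (t, x) = 0 := fun j x hx => J.D_eq_zero z j hx
  have i1 : Integrable (fun x => ijap x ^ 2 * J.U (t, x) ^ 2) :=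
    integrable_of_vanish (ρ := ρ) (by fun_prop) fun x hx => by rw [z x hx]; ring
  have i2 : Integrable (fun x => J.G (t, x)) :=
    integrable_of_vanish (ρ := ρ) (by fun_prop) fun x hx => by simp [WaveJet.G, zD _ x hx]
  refine ⟨i1, ?_⟩
  set P' : Fin 4 → Eu 4 → ℝ := fun j x =>
    (1 * ijap x ^ 2 + x j * (2 * ijap x * (-(x j * ijap x ^ 3)))) * J.U (t, x) ^ 2
      + x j * ijap x ^ 2 * (2 * J.U (t, x) * J.D j (t, x)) with hP'
  have iP' : ∀ j, Integrable (P' j) := fun j =>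
    integrable_of_vanish (ρ := ρ) (by fun_prop) fun x hx => by simp [hP', z x hx]
  have h0 : ∀ j, ∫ x, P' j x = 0 := by
    intro j
    refine integral_lineDeriv_eq_zero (h := fun x => x j * ijap x ^ 2 * J.U (t, x) ^ 2)
      (v := EuclideanSpace.single j 1)
      (integrable_of_vanish (ρ := ρ) (by fun_prop) fun x hx => by simp [z x hx]) (iP' j) ?_
    intro x
    have h := ((hasDerivAt_coord x j j).mul ((hasDerivAt_ijap x j).pow 2)).mul ((J.hD j t x).pow 2)
    refine h.congr_deriv ?_
    simp [hP']
  have hsum : ∫ x, ∑ j, P' j x = 0 := by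
    rw [integral_finsetSum _ fun j _ => iP' j]
    exact Finset.sum_eq_zero fun j _ => h0 j
  have hle : ∫ x, (ijap x ^ 2 * J.U (t, x) ^ 2 - J.G (t, x)) ≤ ∫ x, ∑ j, P' j x := by
    refine integral_mono (i1.sub i2) (integrable_finsetSum _ fun j _ => iP' j) ?_
    intro x
    have e : ∑ j, P' j x = 4 * ijap x ^ 2 * J.U (t, x) ^ 2
        - 2 * ijap x ^ 2 * (ijap x ^ 2 * ‖x‖ ^ 2) * J.U (t, x) ^ 2
        + 2 * (ijap x * J.U (t, x)) * (ijap x * J.S (t, x)) := by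
      simp only [hP', WaveJet.S, EuclideanSpace.real_norm_sq_eq, Fin.sum_univ_four]
      ring
    have h1 := J.ijap_S_sq_le (t, x)
    have h2 := ijap_sq x
    have h3 : ijap x ^ 2 * ‖x‖ ^ 2 = 1 - ijap x ^ 2 := by linarith
    dsimp only at h1 ⊢
    rw [e, h3]
    nlinarith [sq_nonneg (ijap x * J.U (t, x) + ijap x * J.S (t, x)),
      sq_nonneg (ijap x ^ 2 * J.U (t, x)), sq_nonneg (ijap x * J.U (t, x))]
  rw [hsum, integral_sub i1 i2] at hle
  linarith

/-! ### The Morawetz weights -/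

/-- `⟨x⟩^{-2δ}`. -/
def thw (δ : ℝ) (x : Eu 4) : ℝ := (1 + ‖x‖ ^ 2) ^ (-δ)

@[fun_prop]
lemma continuous_thw (δ : ℝ) : Continuous (thw δ) := continuous_br_rpow _

lemma thw_pos (δ : ℝ) (x : Eu 4) : 0 < thw δ x := by
  have := one_le_br x; unfold thw; positivity

lemma thw_le_one {δ : ℝ} (hδ : 0 < δ) (x : Eu 4) : thw δ x ≤ 1 :=
  Real.rpow_le_one_of_one_le_of_nonpos (one_le_br x) (by linarith)

lemma hasDerivAt_thw (δ : ℝ) (x : Eu 4) (j : Fin 4) :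
    HasDerivAt (fun s : ℝ => thw δ (x + s • EuclideanSpace.single j 1))
      (-(2 * δ * x j * thw δ x * ijap x ^ 2)) 0 := by
  have h := hasDerivAt_br_rpow (-δ) x j
  refine h.congr_deriv ?_
  have h0 : 0 < 1 + ‖x‖ ^ 2 := by have := one_le_br x; positivity
  have e : ijap x ^ 2 = (1 + ‖x‖ ^ 2)⁻¹ := eq_inv_of_mul_eq_one_left (ijap_sq x)
  rw [e, Real.rpow_sub_one h0.ne']
  unfold thw
  field_simp

/-- Radial profile of the multiplier field `X = wA · x`: `64⟨x⟩⁻¹ - ⟨x⟩^{-1-2δ}`. The first part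
dominates; the second, of opposite sign, yields the positivity with weight `δ⟨x⟩^{-1-2δ}`. -/
def wA (δ : ℝ) (x : Eu 4) : ℝ := 64 * ijap x - thw δ x * ijap x

/-- Derivative of `wA` with respect to `|x|²`. -/
def wA1 (δ : ℝ) (x : Eu 4) : ℝ := -32 * ijap x ^ 3 + (1 / 2 + δ) * (thw δ x * ijap x ^ 3)

/-- Zeroth order coefficient of the multiplier, `½ div X - δ⟨x⟩^{-1-2δ}`. Subtracting the last
term transfers part of the bulk positivity from `|∇U|²` to `Ut²` (see `weight_time`). -/
def wQ (δ : ℝ) (x : Eu 4) : ℝ :=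
  96 * ijap x + 32 * ijap x ^ 3 - 3 / 2 * (thw δ x * ijap x)
    - (1 / 2 + δ) * (thw δ x * ijap x ^ 3)

/-- Derivative of `wQ` with respect to `|x|²`. -/
def wQ1 (δ : ℝ) (x : Eu 4) : ℝ :=
  -48 * ijap x ^ 3 - 48 * ijap x ^ 5 + 3 / 2 * (1 / 2 + δ) * (thw δ x * ijap x ^ 3)
    + (1 / 2 + δ) * (3 / 2 + δ) * (thw δ x * ijap x ^ 5)

/-- Derivative of `wQ1` with respect to `|x|²`. -/
def wQ2 (δ : ℝ) (x : Eu 4) : ℝ :=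
  72 * ijap x ^ 5 + 120 * ijap x ^ 7
    - 3 / 2 * (1 / 2 + δ) * (3 / 2 + δ) * (thw δ x * ijap x ^ 5)
    - (1 / 2 + δ) * (3 / 2 + δ) * (5 / 2 + δ) * (thw δ x * ijap x ^ 7)

@[fun_prop] lemma continuous_wA (δ : ℝ) : Continuous (wA δ) := by unfold wA; fun_prop
@[fun_prop] lemma continuous_wA1 (δ : ℝ) : Continuous (wA1 δ) := by unfold wA1; fun_prop
@[fun_prop] lemma continuous_wQ (δ : ℝ) : Continuous (wQ δ) := by unfold wQ; fun_prop
@[fun_prop] lemma continuous_wQ1 (δ : ℝ) : Continuous (wQ1 δ) := by unfold wQ1; fun_prop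
@[fun_prop] lemma continuous_wQ2 (δ : ℝ) : Continuous (wQ2 δ) := by unfold wQ2; fun_prop

lemma hasDerivAt_thw_mul (δ : ℝ) (k : ℕ) (x : Eu 4) (j : Fin 4) :
    HasDerivAt (fun s : ℝ => thw δ (x + s • EuclideanSpace.single j 1)
        * ijap (x + s • EuclideanSpace.single j 1) ^ (k + 1))
      (2 * x j * (-((k + 1) / 2 + δ) * (thw δ x * ijap x ^ (k + 3)))) 0 := by
  refine ((hasDerivAt_thw δ x j).mul ((hasDerivAt_ijap x j).pow (k + 1))).congr_deriv ?_
  simp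
  ring

lemma hasDerivAt_ijap_pow (k : ℕ) (x : Eu 4) (j : Fin 4) :
    HasDerivAt (fun s : ℝ => ijap (x + s • EuclideanSpace.single j 1) ^ (k + 1))
      (2 * x j * (-((k + 1) / 2) * ijap x ^ (k + 3))) 0 := by
  refine ((hasDerivAt_ijap x j).pow (k + 1)).congr_deriv ?_
  simp
  ring

lemma hasDerivAt_wA (δ : ℝ) (x : Eu 4) (j : Fin 4) :
    HasDerivAt (fun s : ℝ => wA δ (x + s • EuclideanSpace.single j 1))
      (2 * x j * wA1 δ x) 0 := by
  have h1 := hasDerivAt_thw_mul δ 0 x j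
  simp only [zero_add, pow_one] at h1
  refine (((hasDerivAt_ijap x j).const_mul 64).sub h1).congr_deriv ?_
  unfold wA1
  push_cast
  ring

lemma hasDerivAt_wQ (δ : ℝ) (x : Eu 4) (j : Fin 4) :
    HasDerivAt (fun s : ℝ => wQ δ (x + s • EuclideanSpace.single j 1))
      (2 * x j * wQ1 δ x) 0 := by
  have h1 := hasDerivAt_thw_mul δ 0 x j
  simp only [zero_add, pow_one] at h1
  refine (((((hasDerivAt_ijap x j).const_mul 96).add ((hasDerivAt_ijap_pow 2 x j).const_mul 32)).sub
    (h1.const_mul (3 / 2))).sub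
    ((hasDerivAt_thw_mul δ 2 x j).const_mul (1 / 2 + δ))).congr_deriv ?_
  unfold wQ1
  push_cast
  ring

lemma hasDerivAt_wQ1 (δ : ℝ) (x : Eu 4) (j : Fin 4) :
    HasDerivAt (fun s : ℝ => wQ1 δ (x + s • EuclideanSpace.single j 1))
      (2 * x j * wQ2 δ x) 0 := by
  refine (((((hasDerivAt_ijap_pow 2 x j).const_mul (-48)).sub
    ((hasDerivAt_ijap_pow 4 x j).const_mul 48)).add
    ((hasDerivAt_thw_mul δ 2 x j).const_mul (3 / 2 * (1 / 2 + δ)))).add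
    ((hasDerivAt_thw_mul δ 4 x j).const_mul ((1 / 2 + δ) * (3 / 2 + δ)))).congr_deriv ?_
  unfold wQ2
  push_cast
  ring

/-- The multiplier `X · ∇U + q U`, with `X = wA · x` and `q = wQ`. -/
def WaveJet.M (J : WaveJet) (δ : ℝ) (p : ℝ × Eu 4) : ℝ := wA δ p.2 * J.S p + wQ δ p.2 * J.U p

@[fun_prop]
lemma WaveJet.cM (J : WaveJet) (δ : ℝ) : Continuous (J.M δ) := by unfold WaveJet.M; fun_prop

lemma ijap_le_one (x : Eu 4) : ijap x ≤ 1 :=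
  Real.rpow_le_one_of_one_le_of_nonpos (one_le_br x) (by norm_num)

lemma ijap_norm (x : Eu 4) (k : ℕ) : ‖x‖ ^ 2 * ijap x ^ (k + 2) = ijap x ^ k - ijap x ^ (k + 2) := by
  have h := ijap_sq x
  have : ‖x‖ ^ 2 * ijap x ^ (k + 2) = ijap x ^ k * (ijap x ^ 2 * (1 + ‖x‖ ^ 2)) - ijap x ^ (k + 2) := by
    ring
  rw [this, h, mul_one]

/-- Coefficient of `Ut²` in the bulk term. -/
lemma weight_time {δ : ℝ} (x : Eu 4) :
    wQ δ x - 2 * wA δ x - wA1 δ x * ‖x‖ ^ 2 = -(δ * (thw δ x * ijap x)) := by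
  have h := ijap_norm x 1
  unfold wQ wA wA1
  linear_combination (32 - (1 / 2 + δ) * thw δ x) * h

lemma thw_bounds {δ : ℝ} (hδ : 0 < δ) (x : Eu 4) (k : ℕ) :
    0 ≤ thw δ x * ijap x ^ k ∧ thw δ x * ijap x ^ k ≤ ijap x ^ k := by
  have h0 := (thw_pos δ x).le
  have h1 := thw_le_one hδ x
  have h2 : 0 ≤ ijap x ^ k := pow_nonneg (ijap_pos x).le k
  exact ⟨mul_nonneg h0 h2, mul_le_of_le_one_left h2 h1⟩

lemma wA1_nonpos {δ : ℝ} (hδ : 0 < δ) (hδ' : δ ≤ 1 / 2) (x : Eu 4) : wA1 δ x ≤ 0 := by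
  have h := thw_bounds hδ x 3
  unfold wA1
  nlinarith

/-- Lower bound for the coefficient of `|∇U|²`, in the worst case of a radial gradient. -/
lemma weight_radial {δ : ℝ} (hδ : 0 < δ) (hδ' : δ ≤ 1 / 2) (x : Eu 4) :
    δ * (thw δ x * ijap x) ≤
    wA δ x + 2 * (wA1 δ x * ‖x‖ ^ 2) - δ * (thw δ x * ijap x) := by
  have h := ijap_norm x 1
  have h3 := thw_bounds hδ x 3
  have e : wA δ x + 2 * (wA1 δ x * ‖x‖ ^ 2)
      = 64 * ijap x ^ 3 + 2 * δ * (thw δ x * ijap x) - (1 + 2 * δ) * (thw δ x * ijap x ^ 3) := by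
    unfold wA wA1
    linear_combination (-64 + (1 + 2 * δ) * thw δ x) * h
  rw [e]
  nlinarith

/-- The coefficient of `U²` in the bulk term is `½ Δq`. The leading part of `q` is a multiple of
`⟨x⟩⁻¹`, whose Laplacian in dimension four is at most a negative multiple of `⟨x⟩⁻³`. -/
lemma weight_zeroth {δ : ℝ} (hδ : 0 < δ) (hδ' : δ ≤ 1 / 2) (x : Eu 4) :
    4 * wQ1 δ x + 2 * (‖x‖ ^ 2 * wQ2 δ x) ≤ -16 * ijap x ^ 3 := by
  have h3 := ijap_norm x 3
  have h5 := ijap_norm x 5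
  set a := 1 / 2 + δ with ha
  set b := 3 / 2 + δ with hb
  set c := 5 / 2 + δ with hc
  have e : 4 * wQ1 δ x + 2 * (‖x‖ ^ 2 * wQ2 δ x)
      = -48 * ijap x ^ 3 - 96 * ijap x ^ 5 - 240 * ijap x ^ 7
        + (6 * a - 3 * (a * b)) * (thw δ x * ijap x ^ 3)
        + (4 * (a * b) - 2 * (a * b * c) + 3 * (a * b)) * (thw δ x * ijap x ^ 5)
        + 2 * (a * b * c) * (thw δ x * ijap x ^ 7) := by
    unfold wQ1 wQ2
    linear_combination (144 - 3 * (a * b) * thw δ x) * h3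
      + (240 - 2 * (a * b * c) * thw δ x) * h5
  have t3 := thw_bounds hδ x 3
  have t5 := thw_bounds hδ x 5
  have t7 := thw_bounds hδ x 7
  have a0 : 0 < a := by positivity
  have a1 : a ≤ 1 := by linarith
  have b0 : 0 < b := by positivity
  have b1 : b ≤ 2 := by linarith
  have c0 : 0 < c := by positivity
  have c1 : c ≤ 3 := by linarith
  have ab0 : 0 < a * b := by positivity
  have ab1 : a * b ≤ 2 := by nlinarith
  have abc0 : 0 < a * b * c := by positivity
  have abc1 : a * b * c ≤ 6 := by nlinarith
  have p3 : 0 < ijap x ^ 3 := pow_pos (ijap_pos x) 3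
  have k1 : (6 * a - 3 * (a * b)) * (thw δ x * ijap x ^ 3) ≤ 6 * ijap x ^ 3 := by nlinarith
  have k2 : (4 * (a * b) - 2 * (a * b * c) + 3 * (a * b)) * (thw δ x * ijap x ^ 5)
      ≤ 14 * ijap x ^ 5 := by nlinarith
  have k3 : 2 * (a * b * c) * (thw δ x * ijap x ^ 7) ≤ 12 * ijap x ^ 7 := by nlinarith
  have p5 : 0 < ijap x ^ 5 := pow_pos (ijap_pos x) 5
  have p7 : 0 < ijap x ^ 7 := pow_pos (ijap_pos x) 7
  rw [e]
  linarith

lemma wA_bounds {δ : ℝ} (hδ : 0 < δ) (x : Eu 4) : 0 ≤ wA δ x ∧ wA δ x ≤ 64 * ijap x := by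
  have h := thw_bounds hδ x 1
  have h0 := ijap_pos x
  unfold wA
  simp only [pow_one] at h
  constructor <;> linarith

lemma wQ_bounds {δ : ℝ} (hδ : 0 < δ) (hδ' : δ ≤ 1 / 2) (x : Eu 4) : 0 ≤ wQ δ x ∧ wQ δ x ≤ 128 * ijap x := by
  have h := thw_bounds hδ x 1
  have h' := thw_bounds hδ x 3
  have h0 := ijap_pos x
  have h3 : ijap x ^ 3 ≤ ijap x := pow_le_of_le_one h0.le (ijap_le_one x) (by norm_num)
  have p3 : 0 < ijap x ^ 3 := pow_pos (ijap_pos x) 3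
  simp only [pow_one] at h
  unfold wQ
  constructor <;> nlinarith

lemma wQ1_bounds {δ : ℝ} (hδ : 0 < δ) (hδ' : δ ≤ 1 / 2) (x : Eu 4) : |wQ1 δ x| ≤ 100 * ijap x ^ 3 := by
  have h := thw_bounds hδ x 3
  have h' := thw_bounds hδ x 5
  have h0 := ijap_pos x
  have h5 : ijap x ^ 5 ≤ ijap x ^ 3 :=
    pow_le_pow_of_le_one h0.le (ijap_le_one x) (by norm_num)
  have p5 : 0 < ijap x ^ 5 := pow_pos (ijap_pos x) 5
  have k1 : 0 ≤ (1 / 2 + δ) * (3 / 2 + δ) := by positivity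
  have k2 : (1 / 2 + δ) * (3 / 2 + δ) ≤ 2 := by nlinarith
  have k3 : (1 / 2 + δ) * (3 / 2 + δ) * (thw δ x * ijap x ^ 5) ≤ 2 * ijap x ^ 5 := by nlinarith
  have k4 : 3 / 2 * (1 / 2 + δ) * (thw δ x * ijap x ^ 3) ≤ 3 / 2 * ijap x ^ 3 := by nlinarith
  have k5 : 0 ≤ (1 / 2 + δ) * (3 / 2 + δ) * (thw δ x * ijap x ^ 5) := mul_nonneg k1 h'.1
  have k6 : 0 ≤ 3 / 2 * (1 / 2 + δ) * (thw δ x * ijap x ^ 3) := mul_nonneg (by positivity) h.1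
  unfold wQ1
  rw [abs_le]
  constructor <;> linarith

/-! ### The Morawetz identity -/

/-- Density of the localized energy: `δ⟨x⟩^{-1-2δ}|U'|² + 16⟨x⟩⁻³U²`. -/
def WaveJet.L (J : WaveJet) (δ : ℝ) (p : ℝ × Eu 4) : ℝ :=
  δ * (thw δ p.2 * ijap p.2) * (J.Ut p ^ 2 + J.G p) + 16 * ijap p.2 ^ 3 * J.U p ^ 2

/-- Energy density augmented by the Hardy term: `|U'|² + ⟨x⟩⁻²U²`. -/
def WaveJet.E (J : WaveJet) (p : ℝ × Eu 4) : ℝ :=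
  J.Ut p ^ 2 + J.G p + ijap p.2 ^ 2 * J.U p ^ 2

@[fun_prop]
lemma WaveJet.cL (J : WaveJet) (δ : ℝ) : Continuous (J.L δ) := by unfold WaveJet.L; fun_prop

@[fun_prop]
lemma WaveJet.cE (J : WaveJet) : Continuous J.E := by unfold WaveJet.E; fun_prop

lemma WaveJet.E_nonneg (J : WaveJet) (p : ℝ × Eu 4) : 0 ≤ J.E p := by
  have := J.G_nonneg p; unfold WaveJet.E; positivity

lemma WaveJet.L_nonneg (J : WaveJet) {δ : ℝ} (hδ : 0 < δ) (p : ℝ × Eu 4) : 0 ≤ J.L δ p := by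
  have := J.G_nonneg p
  have := thw_pos δ p.2
  have := ijap_pos p.2
  unfold WaveJet.L; positivity

@[fun_prop]
lemma continuous_cut_zero (R : ℝ) : Continuous fun x : Eu 4 => cut R 0 x :=
  (continuous_cut R).comp (by fun_prop : Continuous fun x : Eu 4 => ((0 : ℝ), x))

/-- The multiplier is controlled by the augmented energy density. -/
lemma WaveJet.M_sq_le (J : WaveJet) {δ : ℝ} (hδ : 0 < δ) (hδ' : δ ≤ 1 / 2) (p : ℝ × Eu 4) :
    J.M δ p ^ 2 ≤ 40000 * J.E p := by
  obtain ⟨a0, a1⟩ := wA_bounds hδ p.2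
  obtain ⟨q0, q1⟩ := wQ_bounds hδ hδ' p.2
  have h1 := J.ijap_S_sq_le p
  have e0 := ijap_pos p.2
  have hs : (wA δ p.2 * J.S p) ^ 2 ≤ 4096 * J.G p := by
    have : wA δ p.2 ^ 2 ≤ (64 * ijap p.2) ^ 2 := by gcongr
    have := mul_le_mul_of_nonneg_right this (sq_nonneg (J.S p))
    nlinarith
  have hu : (wQ δ p.2 * J.U p) ^ 2 ≤ 16384 * (ijap p.2 ^ 2 * J.U p ^ 2) := by
    have : wQ δ p.2 ^ 2 ≤ (128 * ijap p.2) ^ 2 := by gcongr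
    have := mul_le_mul_of_nonneg_right this (sq_nonneg (J.U p))
    nlinarith
  have hG := J.G_nonneg p
  have hU : 0 ≤ ijap p.2 ^ 2 * J.U p ^ 2 := by positivity
  unfold WaveJet.M WaveJet.E
  nlinarith [sq_nonneg (wA δ p.2 * J.S p - wQ δ p.2 * J.U p), sq_nonneg (J.Ut p)]

/-- Errors produced by differentiating the cutoff are bounded by the energy density. -/
lemma WaveJet.cut_error (J : WaveJet) {δ : ℝ} (hδ : 0 < δ) (hδ' : δ ≤ 1 / 2) (t : ℝ) (x : Eu 4) :
    ijap x * (J.S (t, x) * J.M δ (t, x)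
      - ‖x‖ ^ 2 * wA δ x * (J.G (t, x) - J.Ut (t, x) ^ 2) / 2
      - ‖x‖ ^ 2 * wQ1 δ x * J.U (t, x) ^ 2) ≤ 200 * J.E (t, x) := by
  obtain ⟨a0, a1⟩ := wA_bounds hδ x
  obtain ⟨q0, q1⟩ := wQ_bounds hδ hδ' x
  have b1 := (abs_le.1 (wQ1_bounds hδ hδ' x)).1
  have h1 := J.ijap_S_sq_le (t, x)
  have e0 := ijap_pos x
  have hn := ijap_sq x
  have hG := J.G_nonneg (t, x)
  dsimp only at h1
  unfold WaveJet.M WaveJet.E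
  dsimp only
  set S := J.S (t, x)
  set G := J.G (t, x)
  set U := J.U (t, x)
  set v := J.Ut (t, x)
  set ε := ijap x
  set r := ‖x‖ ^ 2
  have hr : 0 ≤ r := sq_nonneg _
  have hr1 : ε ^ 2 * r ≤ 1 := by nlinarith [sq_nonneg ε]
  have t1 : ε * wA δ x * S ^ 2 ≤ 64 * G := by
    have : ε * wA δ x * S ^ 2 ≤ ε * (64 * ε) * S ^ 2 := by gcongr
    nlinarith
  have t2 : ε * S * (wQ δ x * U) ≤ 64 * (G + ε ^ 2 * U ^ 2) := by
    have k : wQ δ x * (ε * S * U) ≤ 128 * ε * |ε * S * U| :=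
      (mul_le_mul_of_nonneg_left (le_abs_self _) q0).trans
        (mul_le_mul_of_nonneg_right q1 (abs_nonneg _))
    have k2 : 2 * (ε * |ε * S * U|) ≤ (ε * S) ^ 2 + (ε * U) ^ 2 := by
      have : ε * |ε * S * U| = |ε * S| * |ε * U| := by
        rw [abs_mul (ε * S) U, abs_mul ε U, abs_of_pos e0]; ring
      rw [this, ← sq_abs (ε * S), ← sq_abs (ε * U)]
      nlinarith [sq_nonneg (|ε * S| - |ε * U|)]
    nlinarith
  have t3 : ε * (r * wA δ x) ≤ 64 := by
    have : ε * (r * wA δ x) ≤ ε * (r * (64 * ε)) := by gcongr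
    nlinarith
  have t3' : 0 ≤ ε * (r * wA δ x) := by positivity
  have t4 : -(ε * (r * wQ1 δ x)) ≤ 100 * ε ^ 2 := by
    have : ε * (r * (-wQ1 δ x)) ≤ ε * (r * (100 * ε ^ 3)) := by gcongr; linarith
    nlinarith [mul_le_mul_of_nonneg_right hr1 (sq_nonneg ε)]
  have u3 := mul_le_mul_of_nonneg_right t3 (sq_nonneg v)
  have u3' := mul_nonneg t3' hG
  have u4 := mul_le_mul_of_nonneg_right t4 (sq_nonneg U)
  have u5 : 0 ≤ ε ^ 2 * U ^ 2 := by positivity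
  have u6 := sq_nonneg v
  linarith

/-- The integrated Morawetz identity, with the bulk term estimated from below. -/
lemma WaveJet.morawetz_flux (J : WaveJet) {δ : ℝ} (hδ : 0 < δ) (hδ' : δ ≤ 1 / 2) {R T : ℝ}
    (hR : 0 < R) (hT : 0 ≤ T) :
    (∫ x, cut R 0 x ^ 2 * (J.Ut (T, x) * J.M δ (T, x)))
      - ∫ x, cut R 0 x ^ 2 * (J.Ut (0, x) * J.M δ (0, x))
      ≤ ∫ t in 0..T, ∫ x, (cut R 0 x ^ 2 * (J.box (t, x) * J.M δ (t, x))
          - cut R 0 x ^ 2 * J.L δ (t, x) + 400 / R * (cut R 0 x * J.E (t, x))) := by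
  have z : ∀ x : Eu 4, R < ‖x‖ → cut R 0 x = 0 := fun x hx => cut_eq_zero hR le_rfl hx
  set V : ℝ × Eu 4 → ℝ := fun p => cut R 0 p.2 ^ 2 * (J.Ut p * J.M δ p) with hV
  set V' : ℝ × Eu 4 → ℝ := fun p => cut R 0 p.2 ^ 2 * (J.Utt p * J.M δ p
    + J.Ut p * (wA δ p.2 * (∑ i, p.2 i * J.Dt i p) + wQ δ p.2 * J.Ut p)) with hV'
  set P : Fin 4 → ℝ × Eu 4 → ℝ := fun j p => cut R 0 p.2 ^ 2 *
    (-(J.D j p * J.M δ p) + p.2 j * wA δ p.2 * ((J.G p - J.Ut p ^ 2) / 2)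
      + p.2 j * wQ1 δ p.2 * J.U p ^ 2) with hP
  set P' : Fin 4 → ℝ × Eu 4 → ℝ := fun j p =>
    -(2 * cut R 0 p.2 * (p.2 j * ijap p.2) / R) *
      (-(J.D j p * J.M δ p) + p.2 j * wA δ p.2 * ((J.G p - J.Ut p ^ 2) / 2)
        + p.2 j * wQ1 δ p.2 * J.U p ^ 2)
    + cut R 0 p.2 ^ 2 *
      (-(J.DD j j p * J.M δ p + J.D j p * ((2 * p.2 j * wA1 δ p.2 * J.S p
            + wA δ p.2 * ∑ i, ((if i = j then 1 else 0) * J.D i p + p.2 i * J.DD i j p))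
          + (2 * p.2 j * wQ1 δ p.2 * J.U p + wQ δ p.2 * J.D j p)))
        + ((1 * wA δ p.2 + p.2 j * (2 * p.2 j * wA1 δ p.2)) * ((J.G p - J.Ut p ^ 2) / 2)
          + p.2 j * wA δ p.2 * ((∑ i, 2 * J.D i p * J.DD i j p - 2 * J.Ut p * J.Dt j p) / 2))
        + ((1 * wQ1 δ p.2 + p.2 j * (2 * p.2 j * wQ2 δ p.2)) * J.U p ^ 2
          + p.2 j * wQ1 δ p.2 * (2 * J.U p * J.D j p))) with hP'
  have key := slab_divergence (V := V) (V' := V') (P := P) (P' := P') (ρ := R) hT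
    (by fun_prop) (by fun_prop) (fun j => by fun_prop) (fun j => by fun_prop)
    (fun t ht x hx => by simp [hV, z x hx]) (fun t ht x hx => by simp [hV', z x hx])
    (fun j t ht x hx => by simp [hP, z x hx]) (fun j t ht x hx => by simp [hP', z x hx])
    ?_ ?_
  · change (∫ x, V (T, x)) - ∫ x, V (0, x) ≤ _
    rw [key]
    apply slab_mono (ρ := R) (h := fun p => V' p + ∑ j, P' j p)
      (k := fun p => cut R 0 p.2 ^ 2 * (J.box p * J.M δ p)
          - cut R 0 p.2 ^ 2 * J.L δ p + 400 / R * (cut R 0 p.2 * J.E p))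
      hT (by fun_prop) (by fun_prop)
      (fun t ht x hx => by simp [hV', hP', z x hx]) (fun t ht x hx => by simp [z x hx])
    intro t ht x
    have e : V' (t, x) + ∑ j, P' j (t, x)
        = cut R 0 x ^ 2 * (J.box (t, x) * J.M δ (t, x))
          + cut R 0 x ^ 2 * (J.Ut (t, x) ^ 2 * (wQ δ x - 2 * wA δ x - wA1 δ x * ‖x‖ ^ 2)
            + J.G (t, x) * (wA δ x + wA1 δ x * ‖x‖ ^ 2 - wQ δ x) - 2 * wA1 δ x * J.S (t, x) ^ 2
            + J.U (t, x) ^ 2 * (4 * wQ1 δ x + 2 * (‖x‖ ^ 2 * wQ2 δ x)))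
          + 2 * cut R 0 x / R * (ijap x * (J.S (t, x) * J.M δ (t, x)
            - ‖x‖ ^ 2 * wA δ x * (J.G (t, x) - J.Ut (t, x) ^ 2) / 2
            - ‖x‖ ^ 2 * wQ1 δ x * J.U (t, x) ^ 2)) := by
      have s01 := J.symm 0 1 (t, x)
      have s02 := J.symm 0 2 (t, x)
      have s03 := J.symm 0 3 (t, x)
      have s12 := J.symm 1 2 (t, x)
      have s13 := J.symm 1 3 (t, x)
      have s23 := J.symm 2 3 (t, x)
      simp only [hV', hP', WaveJet.M, WaveJet.S, WaveJet.box, WaveJet.G,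
        EuclideanSpace.real_norm_sq_eq, Fin.sum_univ_four, s01, s02, s03, s12, s13, s23]
      simp
      ring
    have hb : J.Ut (t, x) ^ 2 * (wQ δ x - 2 * wA δ x - wA1 δ x * ‖x‖ ^ 2)
            + J.G (t, x) * (wA δ x + wA1 δ x * ‖x‖ ^ 2 - wQ δ x) - 2 * wA1 δ x * J.S (t, x) ^ 2
            + J.U (t, x) ^ 2 * (4 * wQ1 δ x + 2 * (‖x‖ ^ 2 * wQ2 δ x)) ≤ -J.L δ (t, x) := by
      have w1 := weight_time (δ := δ) x
      have w2 := mul_le_mul_of_nonneg_left (weight_radial hδ hδ' x) (J.G_nonneg (t, x))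
      have w3 := mul_le_mul_of_nonneg_left (weight_zeroth hδ hδ' x) (sq_nonneg (J.U (t, x)))
      have w4 := mul_le_mul_of_nonneg_left (J.S_sq_le (t, x))
        (neg_nonneg.2 (wA1_nonpos hδ hδ' x))
      have w5 : wQ δ x = 2 * wA δ x + wA1 δ x * ‖x‖ ^ 2 - δ * (thw δ x * ijap x) := by linarith
      dsimp only at w4
      unfold WaveJet.L
      dsimp only
      rw [w1, w5]
      linarith
    have hb' := mul_le_mul_of_nonneg_left hb (sq_nonneg (cut R 0 x))
    have he := mul_le_mul_of_nonneg_left (J.cut_error hδ hδ' t x)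
      (div_nonneg (mul_nonneg zero_le_two (cut_nonneg R 0 x)) hR.le)
    have he2 : 2 * cut R 0 x / R * (200 * J.E (t, x)) = 400 / R * (cut R 0 x * J.E (t, x)) := by
      ring
    dsimp only
    rw [e]; linarith
  · intro t x
    have hM := ((HasDerivAt.fun_sum (u := Finset.univ) fun i _ =>
      (J.hDt i t x).const_mul (x i)).const_mul (wA δ x)).add ((J.hUt t x).const_mul (wQ δ x))
    have h := ((J.hUtt t x).mul hM).const_mul (cut R 0 x ^ 2)
    refine h.congr_deriv ?_
    simp [hV', WaveJet.M, WaveJet.S]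
  · intro j t x
    have hS := HasDerivAt.fun_sum (u := Finset.univ) fun i _ =>
      (hasDerivAt_coord x i j).mul (J.hDD i j t x)
    have hM := ((hasDerivAt_wA δ x j).mul hS).add ((hasDerivAt_wQ δ x j).mul (J.hD j t x))
    have hG := HasDerivAt.fun_sum (u := Finset.univ) fun i _ => (J.hDD i j t x).pow 2
    have h1 := ((J.hDD j j t x).mul hM).neg
    have h2 := ((hasDerivAt_coord x j j).mul (hasDerivAt_wA δ x j)).mul
      ((hG.sub ((J.hUtD j t x).pow 2)).div_const 2)
    have h3 := ((hasDerivAt_coord x j j).mul (hasDerivAt_wQ1 δ x j)).mul ((J.hD j t x).pow 2)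
    have h := (hasDerivAt_cut_space R 0 x j).mul ((h1.add h2).add h3)
    refine h.congr_deriv ?_
    simp [hP', WaveJet.M, WaveJet.S, WaveJet.G]

/-! ### Localized energy of a jet -/

/-- Integrated form of `morawetz_flux`: once the energies on `[0, T]` and the forcing are
controlled by `A`, so is the truncated localized energy. -/
lemma WaveJet.morawetz_bound (J : WaveJet) {δ : ℝ} (hδ : 0 < δ) (hδ' : δ ≤ 1 / 2) {R T A : ℝ}
    (hR : 0 < R) (hT : 0 ≤ T) (hA : 0 ≤ A)
    (hE : ∀ t ∈ Icc 0 T, Integrable (fun x => J.E (t, x)) ∧ ∫ x, J.E (t, x) ≤ 8 * A ^ 2)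
    (hF : ∫ s in 0..T, √(∫ x, cut R 0 x ^ 2 * J.box (s, x) ^ 2) ≤ A) :
    ∫ t in 0..T, ∫ x, cut R 0 x ^ 2 * J.L δ (t, x) ≤ 5000 * A ^ 2 + 3200 * T * A ^ 2 / R := by
  have z : ∀ x : Eu 4, R < ‖x‖ → cut R 0 x = 0 := fun x hx => cut_eq_zero hR le_rfl hx
  have c0 : ∀ x : Eu 4, 0 ≤ cut R 0 x := fun x => cut_nonneg R 0 x
  have c1 : ∀ x : Eu 4, cut R 0 x ≤ 1 := fun x => cut_le_one hR le_rfl x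
  have csq : ∀ x : Eu 4, cut R 0 x ^ 2 ≤ 1 := fun x => pow_le_one₀ (c0 x) (c1 x)
  -- `‖m M‖ ≤ 600 A`, `‖m Ut‖ ≤ 3 A` in `L²` at each time
  have nM : ∀ t ∈ Icc 0 T, √(∫ x, cut R 0 x ^ 2 * J.M δ (t, x) ^ 2) ≤ 600 * A := by
    intro t ht
    apply Real.sqrt_le_iff.2 ⟨by positivity, ?_⟩
    have : ∫ x, cut R 0 x ^ 2 * J.M δ (t, x) ^ 2 ≤ ∫ x, 40000 * J.E (t, x) := by
      apply integral_mono
        (integrable_of_vanish (ρ := R) (by fun_prop) (fun x hx => by simp [z x hx]))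
        ((hE t ht).1.const_mul _)
      intro x
      exact (mul_le_of_le_one_left (sq_nonneg _) (csq x)).trans (J.M_sq_le hδ hδ' (t, x))
    rw [integral_const_mul] at this
    have := (hE t ht).2
    nlinarith
  have nU : ∀ t ∈ Icc 0 T, √(∫ x, cut R 0 x ^ 2 * J.Ut (t, x) ^ 2) ≤ 3 * A := by
    intro t ht
    apply Real.sqrt_le_iff.2 ⟨by positivity, ?_⟩
    have : ∫ x, cut R 0 x ^ 2 * J.Ut (t, x) ^ 2 ≤ ∫ x, J.E (t, x) := by
      apply integral_mono
        (integrable_of_vanish (ρ := R) (by fun_prop) (fun x hx => by simp [z x hx])) (hE t ht).1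
      intro x
      refine (mul_le_of_le_one_left (sq_nonneg _) (csq x)).trans ?_
      have := J.G_nonneg (t, x)
      have : 0 ≤ ijap x ^ 2 * J.U (t, x) ^ 2 := by positivity
      simp only [WaveJet.E]
      linarith
    have := (hE t ht).2
    nlinarith
  have bdry : ∀ t ∈ Icc 0 T, |∫ x, cut R 0 x ^ 2 * (J.Ut (t, x) * J.M δ (t, x))|
      ≤ 1800 * A ^ 2 := by
    intro t ht
    refine (weighted_cauchy_schwarz (ζ := fun x => cut R 0 x ^ 2)
      (f := fun x => J.Ut (t, x)) (g := fun x => J.M δ (t, x)) (ρ := R) (by fun_prop) (by fun_prop)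
      (by fun_prop) (fun x hx => by simp [z x hx]) (fun x => sq_nonneg _)).trans ?_
    refine (mul_le_mul (nU t ht) (nM t ht) (Real.sqrt_nonneg _) (by positivity)).trans_eq ?_
    ring
  have key := J.morawetz_flux hδ hδ' hR hT
  have b0 := abs_le.1 (bdry 0 (left_mem_Icc.2 hT))
  have bT := abs_le.1 (bdry T (right_mem_Icc.2 hT))
  set b : ℝ → ℝ := fun s => √(∫ x, cut R 0 x ^ 2 * J.box (s, x) ^ 2) with hb
  have cb : ContinuousOn b (Icc 0 T) :=
    (slab_continuousOn (h := fun p => cut R 0 p.2 ^ 2 * J.box p ^ 2) (ρ := R)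
      (by fun_prop) (fun t ht x hx => by simp [z x hx])).sqrt
  have iL : IntervalIntegrable (fun t => ∫ x, cut R 0 x ^ 2 * J.L δ (t, x)) volume 0 T :=
    slab_intervalIntegrable hT (h := fun p => cut R 0 p.2 ^ 2 * J.L δ p) (ρ := R)
      (by fun_prop) (fun t ht x hx => by simp [z x hx])
  have ib : IntervalIntegrable b volume 0 T :=
    ContinuousOn.intervalIntegrable (by rwa [uIcc_of_le hT])
  have step : ∫ t in 0..T, ∫ x, (cut R 0 x ^ 2 * (J.box (t, x) * J.M δ (t, x))
          - cut R 0 x ^ 2 * J.L δ (t, x) + 400 / R * (cut R 0 x * J.E (t, x)))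
      ≤ ∫ t in 0..T, ((600 * A) * b t - (∫ x, cut R 0 x ^ 2 * J.L δ (t, x))
          + 400 / R * (8 * A ^ 2)) := by
    apply intervalIntegral.integral_mono_on hT
    · exact slab_intervalIntegrable hT (h := fun p => cut R 0 p.2 ^ 2 * (J.box p * J.M δ p)
          - cut R 0 p.2 ^ 2 * J.L δ p + 400 / R * (cut R 0 p.2 * J.E p)) (ρ := R)
          (by fun_prop) (fun t ht x hx => by simp [z x hx])
    · exact ((ib.const_mul _).sub iL).add intervalIntegrable_const
    · intro t ht
      have i1 : Integrable fun x => cut R 0 x ^ 2 * (J.box (t, x) * J.M δ (t, x)) :=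
        integrable_of_vanish (ρ := R) (by fun_prop) (fun x hx => by simp [z x hx])
      have i2 : Integrable fun x => cut R 0 x ^ 2 * J.L δ (t, x) :=
        integrable_of_vanish (ρ := R) (by fun_prop) (fun x hx => by simp [z x hx])
      have i3 : Integrable fun x => cut R 0 x * J.E (t, x) :=
        integrable_of_vanish (ρ := R) (by fun_prop) (fun x hx => by simp [z x hx])
      have i12 : Integrable fun x => cut R 0 x ^ 2 * (J.box (t, x) * J.M δ (t, x))
          - cut R 0 x ^ 2 * J.L δ (t, x) := i1.sub i2
      rw [integral_add i12 (i3.const_mul _), integral_sub i1 i2, integral_const_mul]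
      have h1 := weighted_cauchy_schwarz (ζ := fun x => cut R 0 x ^ 2)
        (f := fun x => J.box (t, x)) (g := fun x => J.M δ (t, x)) (ρ := R) (by fun_prop)
        (by fun_prop) (by fun_prop) (fun x hx => by simp [z x hx]) (fun x => sq_nonneg _)
      have h2 := mul_le_mul_of_nonneg_left (nM t ht) (Real.sqrt_nonneg
        (∫ x, cut R 0 x ^ 2 * J.box (t, x) ^ 2))
      have h3 := le_abs_self (∫ x, cut R 0 x ^ 2 * (J.box (t, x) * J.M δ (t, x)))
      have h4 : ∫ x, cut R 0 x * J.E (t, x) ≤ 8 * A ^ 2 :=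
        (integral_mono i3 (hE t ht).1 fun x =>
          mul_le_of_le_one_left (J.E_nonneg _) (c1 x)).trans (hE t ht).2
      have h5 := mul_le_mul_of_nonneg_left h4 (by positivity : 0 ≤ 400 / R)
      have h6 : b t * (600 * A) = 600 * A * b t := mul_comm _ _
      linarith
  rw [intervalIntegral.integral_add ((ib.const_mul _).sub iL) intervalIntegrable_const,
    intervalIntegral.integral_sub (ib.const_mul _) iL, intervalIntegral.integral_const_mul,
    intervalIntegral.integral_const, smul_eq_mul, sub_zero] at step
  have h7 := mul_le_mul_of_nonneg_left hF (by positivity : 0 ≤ 600 * A)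
  have h8 : T * (400 / R * (8 * A ^ 2)) = 3200 * T * A ^ 2 / R := by ring
  have h9 := sq_nonneg A
  linarith

/-- Localized energy estimate for a jet, in terms of a bound `A` for the truncated data. -/
lemma WaveJet.localized_energy (J : WaveJet) {δ : ℝ} (hδ : 0 < δ) (hδ' : δ ≤ 1 / 2) {T A : ℝ}
    (hT : 0 ≤ T) (hA : 0 ≤ A) (z : ∀ t, ∃ ρ, ∀ x, ρ < ‖x‖ → J.U (t, x) = 0)
    (h1 : ∀ R > 0, √(∫ x, cut R 0 x ^ 2 * (J.Ut (0, x) ^ 2 + J.G (0, x)))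
        + ∫ s in 0..T, √(∫ x, cut R s x ^ 2 * J.box (s, x) ^ 2) ≤ A)
    (h2 : ∀ R > 0, ∫ s in 0..T, √(∫ x, cut R 0 x ^ 2 * J.box (s, x) ^ 2) ≤ A) :
    ∫⁻ p, ENNReal.ofReal (J.L δ p) ∂((volume.restrict (Icc 0 T)).prod volume)
      ≤ ENNReal.ofReal (5000 * A ^ 2) := by
  have hE : ∀ t ∈ Icc 0 T, Integrable (fun x => J.E (t, x)) ∧ ∫ x, J.E (t, x) ≤ 8 * A ^ 2 := by
    intro t ht
    obtain ⟨i1, b1⟩ := J.energy_bound hT h1 ht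
    obtain ⟨ρ, hρ⟩ := z t
    obtain ⟨i2, b2⟩ := J.hardy hρ
    refine ⟨i1.add i2, ?_⟩
    have hG : ∫ x, J.G (t, x) ≤ ∫ x, (J.Ut (t, x) ^ 2 + J.G (t, x)) :=
      integral_mono_of_nonneg (Filter.Eventually.of_forall fun x => J.G_nonneg _) i1
        (Filter.Eventually.of_forall fun x => by dsimp only; linarith [sq_nonneg (J.Ut (t, x))])
    have e : ∫ x, J.E (t, x)
        = (∫ x, (J.Ut (t, x) ^ 2 + J.G (t, x))) + ∫ x, ijap x ^ 2 * J.U (t, x) ^ 2 :=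
      integral_add i1 i2
    linarith
  have is : ∀ n : ℕ, Integrable (fun p : ℝ × Eu 4 => cut ((n : ℝ) + 1) 0 p.2 ^ 2 * J.L δ p)
      ((volume.restrict (Icc 0 T)).prod volume) := fun n =>
    integrable_strip (ρ := (n : ℝ) + 1) (by fun_prop) fun t ht x hx => by
      simp [cut_eq_zero (by positivity : (0 : ℝ) < (n : ℝ) + 1) le_rfl hx]
  refine lintegral_le_of_truncations
    (f := fun n p => cut ((n : ℝ) + 1) 0 p.2 ^ 2 * J.L δ p)
    (c := fun n => 5000 * A ^ 2 + 3200 * T * A ^ 2 / ((n : ℝ) + 1)) is ?_ ?_ ?_ ?_ ?_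
  · intro n; exact Continuous.measurable (by fun_prop)
  · intro n
    exact Filter.Eventually.of_forall fun p => mul_nonneg (sq_nonneg _) (J.L_nonneg hδ p)
  · intro p
    simpa using ((tendsto_cut 0 p.2).pow 2).mul_const (J.L δ p)
  · intro n
    have hn : (0 : ℝ) < (n : ℝ) + 1 := by positivity
    have := J.morawetz_bound hδ hδ' hn hT hA hE (h2 _ hn)
    rw [integral_prod _ (is n), integral_Icc_eq_integral_Ioc,
      ← intervalIntegral.integral_of_le hT]
    exact this
  · have h : Filter.Tendsto (fun n : ℕ => 3200 * T * A ^ 2 / ((n : ℝ) + 1)) Filter.atTop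
        (nhds 0) :=
      tendsto_const_nhds.div_atTop
        (Filter.tendsto_atTop_add_const_right _ _ tendsto_natCast_atTop_atTop)
    simpa using h.const_add (5000 * A ^ 2)

/-! ### Norms and the main estimate -/

lemma eLpNorm_two_sq {α : Type*} [MeasurableSpace α] (μ : Measure α) (f : α → ℝ) :
    eLpNorm f 2 μ ^ 2 = ∫⁻ a, ENNReal.ofReal (f a ^ 2) ∂μ := by
  have h := eLpNorm_nnreal_pow_eq_lintegral (f := f) (μ := μ) (p := 2) two_ne_zero
  have e : ∀ a, ENNReal.ofReal (f a ^ 2) = ‖f a‖ₑ ^ (2 : ℕ) := fun a => by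
    rw [← sq_abs, ENNReal.ofReal_pow (abs_nonneg _), Real.enorm_eq_ofReal_abs]
  simp only [e]
  simpa using h

/-- Conversion of a pointwise lower bound for a density of finite integral into an `L²` bound. -/
lemma eLpNorm_two_le {α : Type*} [MeasurableSpace α] {μ : Measure α} {f g : α → ℝ} {c K A : ℝ}
    (hc : 0 < c) (hK : 0 ≤ K) (hA : 0 ≤ A) (h : ∀ a, c * f a ^ 2 ≤ g a)
    (hg : ∫⁻ a, ENNReal.ofReal (g a) ∂μ ≤ ENNReal.ofReal (K * A ^ 2)) :
    eLpNorm f 2 μ ≤ ENNReal.ofReal √(K / c) * ENNReal.ofReal A := by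
  have h1 : eLpNorm f 2 μ ^ 2 ≤ (ENNReal.ofReal √(K / c) * ENNReal.ofReal A) ^ 2 := by
    rw [eLpNorm_two_sq, ← ENNReal.ofReal_mul (Real.sqrt_nonneg _),
      ← ENNReal.ofReal_pow (by positivity), mul_pow, Real.sq_sqrt (by positivity)]
    calc ∫⁻ a, ENNReal.ofReal (f a ^ 2) ∂μ
        ≤ ∫⁻ a, ENNReal.ofReal c⁻¹ * ENNReal.ofReal (g a) ∂μ := by
          apply lintegral_mono
          intro a
          dsimp only
          rw [← ENNReal.ofReal_mul (by positivity)]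
          apply ENNReal.ofReal_le_ofReal
          rw [inv_mul_eq_div, le_div_iff₀ hc]
          linarith [h a]
      _ = ENNReal.ofReal c⁻¹ * ∫⁻ a, ENNReal.ofReal (g a) ∂μ :=
          lintegral_const_mul' _ _ ENNReal.ofReal_ne_top
      _ ≤ ENNReal.ofReal c⁻¹ * ENNReal.ofReal (K * A ^ 2) := by gcongr
      _ = ENNReal.ofReal (K / c * A ^ 2) := by
          rw [← ENNReal.ofReal_mul (by positivity)]; congr 1; ring
  exact (ENNReal.pow_right_strictMono two_ne_zero).le_iff_le.1 h1

/-- A truncated `L²` norm is at most the full one. -/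
lemma sqrt_trunc_le {m h : Eu 4 → ℝ} {ρ : ℝ} (cm : Continuous m) (ch : Continuous h)
    (m0 : ∀ x, 0 ≤ m x) (m1 : ∀ x, m x ≤ 1) (z : ∀ x, ρ < ‖x‖ → m x = 0) :
    ENNReal.ofReal √(∫ x, m x ^ 2 * h x ^ 2) ≤ eLpNorm h 2 volume := by
  have n0 : ∀ x, 0 ≤ m x ^ 2 * h x ^ 2 := fun x => by positivity
  have h1 : ENNReal.ofReal √(∫ x, m x ^ 2 * h x ^ 2) ^ 2 ≤ eLpNorm h 2 volume ^ 2 := by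
    rw [eLpNorm_two_sq, ← ENNReal.ofReal_pow (Real.sqrt_nonneg _),
      Real.sq_sqrt (integral_nonneg n0), ofReal_integral_eq_lintegral_ofReal
        (integrable_of_vanish (ρ := ρ) (by fun_prop) fun x hx => by simp [z x hx])
        (Filter.Eventually.of_forall n0)]
    apply lintegral_mono
    intro x
    exact ENNReal.ofReal_le_ofReal
      (mul_le_of_le_one_left (sq_nonneg _) (pow_le_one₀ (m0 x) (m1 x)))
  exact (ENNReal.pow_right_strictMono two_ne_zero).le_iff_le.1 h1

lemma forcing_trunc_le {m h : ℝ × Eu 4 → ℝ} {ρ T : ℝ} (hT : 0 ≤ T) (cm : Continuous m)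
    (ch : Continuous h) (m0 : ∀ t ∈ Icc 0 T, ∀ x, 0 ≤ m (t, x))
    (m1 : ∀ t ∈ Icc 0 T, ∀ x, m (t, x) ≤ 1)
    (z : ∀ t ∈ Icc 0 T, ∀ x, ρ < ‖x‖ → m (t, x) = 0) :
    ENNReal.ofReal (∫ s in 0..T, √(∫ x, m (s, x) ^ 2 * h (s, x) ^ 2))
      ≤ ∫⁻ t in Icc 0 T, eLpNorm (fun x => h (t, x)) 2 volume := by
  have cb : ContinuousOn (fun s => √(∫ x, m (s, x) ^ 2 * h (s, x) ^ 2)) (Icc 0 T) :=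
    (slab_continuousOn (h := fun p => m p ^ 2 * h p ^ 2) (ρ := ρ)
      (by fun_prop) (fun t ht x hx => by simp [z t ht x hx])).sqrt
  rw [intervalIntegral.integral_of_le hT, ← integral_Icc_eq_integral_Ioc,
    ofReal_integral_eq_lintegral_ofReal (cb.integrableOn_compact isCompact_Icc)
      (Filter.Eventually.of_forall fun s => Real.sqrt_nonneg _)]
  apply setLIntegral_mono' measurableSet_Icc
  intro t ht
  exact sqrt_trunc_le (m := fun x => m (t, x)) (h := fun x => h (t, x)) (ρ := ρ) (by fun_prop)
    (by fun_prop) (m0 t ht) (m1 t ht) (z t ht)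

lemma gradMag_sq (w : ℝ → Eu 4 → ℝ) (hw : SmoothTX w) (t : ℝ) (x : Eu 4) :
    gradMag w t x ^ 2 = (jetOf w hw).Ut (t, x) ^ 2 + (jetOf w hw).G (t, x) := by
  rw [gradMag, Real.sq_sqrt (Finset.sum_nonneg fun _ _ => sq_nonneg _), Fin.sum_univ_succ]
  simp [pd, jetOf, WaveJet.G]

lemma jap_rpow_sq (a : ℝ) (x : Eu 4) : (jap x ^ a) ^ 2 = (1 + ‖x‖ ^ 2) ^ a := by
  have h0 : 0 < 1 + ‖x‖ ^ 2 := by have := one_le_br x; positivity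
  rw [jap_eq, ← Real.rpow_natCast, ← Real.rpow_mul h0.le, ← Real.rpow_mul h0.le]
  congr 1
  push_cast
  ring

/-- Localized energy estimate in ℝ₊ × ℝ⁴ with the lower order term. -/
theorem localized_energy_estimate_dim4 (δ : ℝ) (hδ : 0 < δ) :
    ∃ C : ℝ, 0 < C ∧ ∀ (w F : ℝ → Eu 4 → ℝ) (w₀ w₁ : Eu 4 → ℝ), SmoothTX w →
      (∀ t : ℝ, 0 ≤ t → ∀ x, dAlembert w t x = F t x) →
      (∀ x, w 0 x = w₀ x) → (∀ x, td w 0 x = w₁ x) →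
      (∀ t : ℝ, ∃ R : ℝ, ∀ x : Eu 4, R < ‖x‖ → w t x = 0) →
      ∀ T : ℝ, 0 < T →
        L2st T univ (fun t x => jap x ^ (-(1/2 : ℝ) - δ) * gradMag w t x)
          + L2st T univ (fun t x => jap x ^ (-(3 : ℝ)/2) * w t x)
          ≤ ENNReal.ofReal C *
            (L2x univ (fun x => gradMag w 0 x)
              + ∫⁻ t in Icc (0 : ℝ) T, L2x univ (fun x => dAlembert w t x)) := by
  -- decreasing `δ` strengthens the estimate, so it may be taken at most `1/2`
  obtain ⟨d, hd, hd', hdδ⟩ : ∃ d : ℝ, 0 < d ∧ d ≤ 1 / 2 ∧ d ≤ δ :=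
    ⟨min δ (1 / 2), lt_min hδ (by norm_num), min_le_right _ _, min_le_left _ _⟩
  refine ⟨√(5000 / d) + √(5000 / 16), by positivity, ?_⟩
  intro w _ _ _ hw _ _ _ hsupp T hT
  simp only [L2st, L2x, Measure.restrict_univ]
  set N := eLpNorm (fun x => gradMag w 0 x) 2 volume
    + ∫⁻ t in Icc (0 : ℝ) T, eLpNorm (fun x => dAlembert w t x) 2 volume
  by_cases hfin : N = ∞
  · rw [hfin, ENNReal.mul_top (by
      rw [Ne, ENNReal.ofReal_eq_zero, not_le]; positivity)]
    exact le_top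
  set J := jetOf w hw with hJ
  have cg : Continuous fun x => gradMag w 0 x := by
    have e : (fun x => gradMag w 0 x) = fun x => √(J.Ut (0, x) ^ 2 + J.G (0, x)) := by
      funext x
      rw [← gradMag_sq w hw 0 x, Real.sqrt_sq (show 0 ≤ gradMag w 0 x from Real.sqrt_nonneg _)]
    rw [e]; fun_prop
  have forcing : ∀ m : ℝ × Eu 4 → ℝ, Continuous m → ∀ ρ : ℝ,
      (∀ t ∈ Icc 0 T, ∀ x, 0 ≤ m (t, x)) → (∀ t ∈ Icc 0 T, ∀ x, m (t, x) ≤ 1) →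
      (∀ t ∈ Icc 0 T, ∀ x, ρ < ‖x‖ → m (t, x) = 0) →
      ENNReal.ofReal (∫ s in 0..T, √(∫ x, m (s, x) ^ 2 * J.box (s, x) ^ 2))
        ≤ ∫⁻ t in Icc (0 : ℝ) T, eLpNorm (fun x => dAlembert w t x) 2 volume :=
    fun m cm ρ m0 m1 z => forcing_trunc_le (h := J.box) hT.le cm (by fun_prop) m0 m1 z
  have h1 : ∀ R > 0, √(∫ x, cut R 0 x ^ 2 * (J.Ut (0, x) ^ 2 + J.G (0, x)))
        + ∫ s in 0..T, √(∫ x, cut R s x ^ 2 * J.box (s, x) ^ 2) ≤ N.toReal := by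
    intro R hR
    rw [← ENNReal.ofReal_le_iff_le_toReal hfin]
    refine ENNReal.ofReal_add_le.trans (add_le_add ?_ ?_)
    · simp only [hJ, ← gradMag_sq w hw]
      exact sqrt_trunc_le (ρ := R) (by fun_prop) cg (cut_nonneg R 0) (cut_le_one hR le_rfl)
        fun x hx => cut_eq_zero hR le_rfl hx
    · exact forcing (fun p => cut R p.1 p.2) (continuous_cut R) R (fun t _ x => cut_nonneg R t x)
        (fun t ht x => cut_le_one hR ht.1 x) fun t ht x hx => cut_eq_zero hR ht.1 hx
  have h2 : ∀ R > 0, ∫ s in 0..T, √(∫ x, cut R 0 x ^ 2 * J.box (s, x) ^ 2) ≤ N.toReal := by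
    intro R hR
    rw [← ENNReal.ofReal_le_iff_le_toReal hfin]
    refine le_add_left ?_
    exact forcing (fun p => cut R 0 p.2) (by fun_prop) R (fun t _ x => cut_nonneg R 0 x)
        (fun t _ x => cut_le_one hR le_rfl x) fun t _ x hx => cut_eq_zero hR le_rfl hx
  have main := J.localized_energy hd hd' hT.le ENNReal.toReal_nonneg hsupp h1 h2
  have hL : ∀ p : ℝ × Eu 4, d * (jap p.2 ^ (-(1/2 : ℝ) - δ) * gradMag w p.1 p.2) ^ 2 ≤ J.L d p
      ∧ 16 * (jap p.2 ^ (-(3 : ℝ)/2) * w p.1 p.2) ^ 2 ≤ J.L d p := by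
    rintro ⟨t, x⟩
    have b1 := one_le_br x
    have b0 : 0 < 1 + ‖x‖ ^ 2 := by positivity
    have k1 : (1 + ‖x‖ ^ 2) ^ (-(1/2 : ℝ) - δ) ≤ thw d x * ijap x := by
      unfold thw ijap
      rw [← Real.rpow_add b0]
      exact Real.rpow_le_rpow_of_exponent_le b1 (by linarith)
    have k2 : (1 + ‖x‖ ^ 2) ^ (-(3 : ℝ)/2) = ijap x ^ 3 := by
      unfold ijap
      rw [← Real.rpow_natCast _ 3, ← Real.rpow_mul b0.le]
      norm_num
    have g0 : 0 ≤ J.Ut (t, x) ^ 2 + J.G (t, x) := by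
      have := J.G_nonneg (t, x); positivity
    have t0 := thw_pos d x
    have i0 := ijap_pos x
    have eU : w t x = J.U (t, x) := rfl
    simp only [mul_pow, jap_rpow_sq, gradMag_sq w hw, k2, eU, WaveJet.L, ← hJ]
    have p1 := mul_le_mul_of_nonneg_left (mul_le_mul_of_nonneg_right k1 g0) hd.le
    have p2 : 0 ≤ d * (thw d x * ijap x) * (J.Ut (t, x) ^ 2 + J.G (t, x)) := by positivity
    have p3 : 0 ≤ 16 * ijap x ^ 3 * J.U (t, x) ^ 2 := by positivity
    constructor <;> linarith
  have e1 := eLpNorm_two_le hd (by norm_num) ENNReal.toReal_nonneg (fun p => (hL p).1) main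
  have e2 := eLpNorm_two_le (by norm_num) (by norm_num) ENNReal.toReal_nonneg
    (fun p => (hL p).2) main
  refine (add_le_add e1 e2).trans_eq ?_
  rw [ENNReal.ofReal_toReal hfin, ENNReal.ofReal_add (Real.sqrt_nonneg _) (Real.sqrt_nonneg _),
    add_mul]
end
end

section
/- Let w be a smooth solution of □w = F on ℝ₊ × ℝ⁴ with vanishing initial data w(0,·) = ∂_t w(0,·) = 0, and suppose F(t,x) = 0 for |x| > 2. Then for every δ > 0 there is a constant C (independent of T, w, and F) such that for all T > 0, ‖⟨x⟩^{−1/2−δ} w‖_{L²_{t,x}([0,T]×ℝ⁴)} ≤ C ‖F‖_{L²_{t,x}([0,T]×ℝ⁴)}. -/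
/-!
The estimate is proved by duality from a local energy (Morawetz) estimate for the backward problem.

For smooth `z` with compact support in `{t < T}`, the multiplier `X·∇z + q z - 20 ∂ₜz` with
`X ≈ x / ⟨x⟩` and `q ≈ (div X) / 2` gives, with `ε = min (2 δ) 1`,
`‖⟨x⟩^(-3/2) z‖ ≤ C ‖⟨x⟩^((1+ε)/2) □z‖` in `L²([0,T] × ℝ⁴)` (`local_energy`). In four dimensions `-Δq`
dominates `⟨x⟩⁻³`, which controls `z` itself, and the flux through `t = 0` has a favourable sign by
Hardy's inequality (`curT_neg_ge`), so that nothing is required of `z` at `t = 0`.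

Green's identity (`green`) gives `∫ w □z = ∫ F z` for such `z`. Since `F` is supported in `|x| ≤ 2`,
the right side is at most `C ‖F‖ ‖⟨x⟩^(-3/2) z‖ ≤ C ‖F‖ ‖⟨x⟩^((1+ε)/2) □z‖`. Hence `z ↦ ∫ F z` is
represented as the `L²` inner product of `⟨x⟩^((1+ε)/2) □z` with some `y`, `‖y‖ ≤ C ‖F‖`
(`riesz_factor`). Then `w - ⟨x⟩^((1+ε)/2) y`, extended by zero to `t < 0`, is a weak solution of the
homogeneous wave equation on `{t < T}`, and therefore vanishes (`weak_unique`, by mollification and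
the energy method in backward cones, `smooth_unique`). So `‖⟨x⟩^(-(1+ε)/2) w‖ = ‖y‖ ≤ C ‖F‖`, and
`⟨x⟩^(-1/2-δ) ≤ ⟨x⟩^(-(1+ε)/2)`.
-/

open MeasureTheory Real Set
open scoped ENNReal FourierTransform

noncomputable section

/-! ### Smooth functions on space-time and the weights -/

/-- The energy identity for the multiplier `2 (X·∇z + q z - k ∂ₜz)`, with time-independent vector
field `X` and function `q`, and a constant `k`. It is purely algebraic: it holds for five
commuting derivations of a commutative ring. -/
theorem energy_identity {A : Type*} [CommRing A] [Algebra ℝ A] (Dt : Derivation ℝ A A)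
    (D : Fin 4 → Derivation ℝ A A) (hDt : ∀ i f, Dt (D i f) = D i (Dt f))
    (hD : ∀ i j f, D i (D j f) = D j (D i f))
    (X : Fin 4 → A) (q k z : A) (hX : ∀ i, Dt (X i) = 0) (hq : Dt q = 0)
    (hk : Dt k = 0) (hk' : ∀ i, D i k = 0) :
    Dt (2 * Dt z * (∑ j, X j * D j z + q * z) - k * (Dt z ^ 2 + ∑ j, D j z ^ 2))
      + ∑ i, D i (- 2 * D i z * (∑ j, X j * D j z + q * z)
          + X i * (∑ j, D j z ^ 2 - Dt z ^ 2) + D i q * z ^ 2 + 2 * k * Dt z * D i z)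
    = 2 * (Dt (Dt z) - ∑ i, D i (D i z)) * (∑ j, X j * D j z + q * z - k * Dt z)
      + (2 * q - ∑ i, D i (X i)) * (Dt z ^ 2 - ∑ j, D j z ^ 2)
      - 2 * ∑ i, ∑ j, D i (X j) * D i z * D j z
      + (∑ i, D i (D i q)) * z ^ 2 := by
  have e2 : ∀ d : Derivation ℝ A A, d 2 = 0 := fun d => by exact_mod_cast d.map_natCast 2
  simp only [Fin.sum_univ_four, map_add, map_sub, map_neg, Derivation.leibniz,
    Derivation.leibniz_pow, smul_eq_mul, nsmul_eq_mul, hDt, hX, hq, hk, hk', e2,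
    hD 1 0, hD 2 0, hD 3 0, hD 2 1, hD 3 1, hD 3 2]
  push_cast
  ring

/-- Space-time `ℝ × ℝ⁴`, with time as first coordinate. -/
abbrev E5 : Type := ℝ × Eu 4

/-- The algebra of smooth real functions on space-time. Differential operators act on it as
derivations, so that multiplier identities become ring identities. -/
def SmA : Subalgebra ℝ (E5 → ℝ) where
  carrier := {f | ContDiff ℝ (⊤ : ℕ∞) f}
  mul_mem' hf hg := ContDiff.mul (show ContDiff ℝ (⊤ : ℕ∞) _ from hf) (show ContDiff ℝ (⊤ : ℕ∞) _ from hg)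
  add_mem' hf hg := ContDiff.add (show ContDiff ℝ (⊤ : ℕ∞) _ from hf) (show ContDiff ℝ (⊤ : ℕ∞) _ from hg)
  algebraMap_mem' c := show ContDiff ℝ (⊤ : ℕ∞) (fun _ : E5 => c) from contDiff_const

theorem sm_smooth (f : SmA) : ContDiff ℝ (⊤ : ℕ∞) f.1 := f.2
theorem sm_diff (f : SmA) : Differentiable ℝ f.1 := (sm_smooth f).differentiable (by simp)
theorem sm_cont (f : SmA) : Continuous f.1 := (sm_smooth f).continuous

theorem contDiff_dirDeriv {f : E5 → ℝ} (hf : ContDiff ℝ (⊤ : ℕ∞) f) (v : E5) :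
    ContDiff ℝ (⊤ : ℕ∞) (fun p => fderiv ℝ f p v) :=
  (hf.fderiv_right (m := (⊤ : ℕ∞)) (by simp)).clm_apply contDiff_const

/-- The derivative in the constant direction `v`, as a derivation of the smooth functions. -/
def DD (v : E5) : Derivation ℝ SmA SmA :=
  Derivation.mk'
    { toFun := fun f => ⟨fun p => fderiv ℝ f.1 p v, contDiff_dirDeriv f.2 v⟩
      map_add' := fun f g => by
        ext p
        change fderiv ℝ (f.1 + g.1) p v = fderiv ℝ f.1 p v + fderiv ℝ g.1 p v
        rw [fderiv_add (sm_diff f p) (sm_diff g p)]; rfl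
      map_smul' := fun c f => by
        ext p
        change fderiv ℝ (c • f.1) p v = c * fderiv ℝ f.1 p v
        rw [fderiv_const_smul (sm_diff f p)]; rfl }
    (fun f g => by
      ext p
      change fderiv ℝ (f.1 * g.1) p v = f.1 p * fderiv ℝ g.1 p v + g.1 p * fderiv ℝ f.1 p v
      rw [fderiv_mul (sm_diff f p) (sm_diff g p)]; rfl)

theorem DD_apply (v : E5) (f : SmA) (p : E5) : (DD v f).1 p = fderiv ℝ f.1 p v := rfl

theorem DD_comm (u v : E5) (f : SmA) : DD u (DD v f) = DD v (DD u f) := by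
  ext p
  have h2 : ContDiffAt ℝ (⊤ : ℕ∞) f.1 p := (sm_smooth f).contDiffAt
  have hs : IsSymmSndFDerivAt ℝ f.1 p := h2.isSymmSndFDerivAt (by
    rw [minSmoothness_of_isRCLikeNormedField]; exact WithTop.coe_le_coe.2 (le_top : (2 : ℕ∞) ≤ ⊤))
  have hd : DifferentiableAt ℝ (fderiv ℝ f.1) p :=
    (((sm_smooth f).fderiv_right (m := (⊤ : ℕ∞)) (by simp)).differentiable (by simp)) p
  have key : ∀ a b : E5, (DD a (DD b f)).1 p = fderiv ℝ (fderiv ℝ f.1) p a b := by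
    intro a b
    rw [DD_apply]
    change fderiv ℝ (fun y => fderiv ℝ f.1 y b) p a = _
    rw [fderiv_clm_apply hd (differentiableAt_const b)]
    simp
  rw [key, key]
  exact hs u v

/-- The unit vector in the time direction. -/
def eT : E5 := (1, 0)
/-- The unit vector in the `i`-th spatial direction. -/
def eX (i : Fin 4) : E5 := (0, EuclideanSpace.single i 1)
abbrev Dt : Derivation ℝ SmA SmA := DD eT
abbrev Dx (i : Fin 4) : Derivation ℝ SmA SmA := DD (eX i)

/-- The d'Alembertian `∂ₜ² - Δ` on smooth functions. -/
def Box (z : SmA) : SmA := Dt (Dt z) - ∑ i, Dx i (Dx i z)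

/-- The spatial coordinate function `xᵢ`. -/
def Xc (i : Fin 4) : SmA := ⟨fun p => p.2 i, by
  change ContDiff ℝ (⊤ : ℕ∞) (fun p : E5 => p.2 i)
  fun_prop⟩

theorem one_add_pos (p : E5) : 0 < 1 + ‖p.2‖ ^ 2 := by positivity

/-- The weight `⟨x⟩ ^ (-m)`, written as `(1 + |x|²) ^ (-m / 2)`; the exponent `m` is a decay rate. -/
def J (m : ℝ) : SmA := ⟨fun p => (1 + ‖p.2‖ ^ 2) ^ (-m / 2), by
  change ContDiff ℝ (⊤ : ℕ∞) (fun p : E5 => (1 + ‖p.2‖ ^ 2) ^ (-m / 2))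
  refine ContDiff.rpow_const_of_ne ?_ (fun p => (one_add_pos p).ne')
  exact contDiff_const.add (contDiff_snd.norm_sq ℝ)⟩

theorem J_apply (m : ℝ) (p : E5) : (J m).1 p = (1 + ‖p.2‖ ^ 2) ^ (-m / 2) := rfl

theorem J_pos (m : ℝ) (p : E5) : 0 < (J m).1 p := rpow_pos_of_pos (one_add_pos p) _

theorem J_mul (m k : ℝ) : J m * J k = J (m + k) := by
  ext p
  change (1 + ‖p.2‖ ^ 2) ^ (-m / 2) * (1 + ‖p.2‖ ^ 2) ^ (-k / 2) = (1 + ‖p.2‖ ^ 2) ^ (-(m + k) / 2)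
  rw [← rpow_add (one_add_pos p)]; ring_nf

theorem J_mul_apply (m k : ℝ) (p : E5) : (J m).1 p * (J k).1 p = (J (m + k)).1 p :=
  congrArg (fun f : SmA => f.1 p) (J_mul m k)

theorem J_zero : J 0 = 1 := by
  ext p; change (1 + ‖p.2‖ ^ 2) ^ (-0 / 2 : ℝ) = 1; simp

theorem J_anti {m k : ℝ} (h : m ≤ k) (p : E5) : (J k).1 p ≤ (J m).1 p := by
  rw [J_apply, J_apply]
  apply rpow_le_rpow_of_exponent_le
  · nlinarith [sq_nonneg ‖p.2‖]
  · linarith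

theorem J_negtwo (p : E5) : (J (-2)).1 p = 1 + ‖p.2‖ ^ 2 := by
  rw [J_apply]; norm_num

theorem normsq_eq (p : E5) : ‖p.2‖ ^ 2 = ∑ i, (Xc i).1 p ^ 2 := by
  rw [EuclideanSpace.norm_sq_eq]; simp [Xc]

theorem fderiv_normsq (p : E5) :
    HasFDerivAt (fun p : E5 => 1 + ‖p.2‖ ^ 2)
      ((2 • (innerSL ℝ p.2)).comp (ContinuousLinearMap.snd ℝ ℝ (Eu 4))) p := by
  have h := (hasStrictFDerivAt_norm_sq p.2).hasFDerivAt
  exact (h.comp p (hasFDerivAt_snd)).const_add 1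

theorem DD_J (v : E5) (m : ℝ) (p : E5) :
    (DD v (J m)).1 p = -m * inner ℝ p.2 v.2 * (J (m + 2)).1 p := by
  rw [DD_apply]
  have h := (fderiv_normsq p).rpow_const (p := -m / 2) (Or.inl (one_add_pos p).ne')
  have h2 : HasFDerivAt (J m).1 _ p := h
  rw [h2.fderiv, J_apply]
  simp
  rw [show -m / 2 - 1 = (-2 + -m) / 2 by ring]
  ring

theorem Dt_J (m : ℝ) : Dt (J m) = 0 := by
  ext p; rw [DD_J]; simp [eT]

theorem Dx_J (i : Fin 4) (m : ℝ) :
    Dx i (J m) = - (algebraMap ℝ SmA m * Xc i * J (m + 2)) := by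
  ext p; rw [DD_J]
  change _ = - (m * p.2 i * (J (m + 2)).1 p)
  simp [eX, EuclideanSpace.inner_single_right]

theorem Xc_hasFDerivAt (i : Fin 4) (p : E5) : HasFDerivAt (Xc i).1
    ((EuclideanSpace.proj i : Eu 4 →L[ℝ] ℝ).comp (ContinuousLinearMap.snd ℝ ℝ (Eu 4))) p :=
  ((EuclideanSpace.proj i : Eu 4 →L[ℝ] ℝ).comp (ContinuousLinearMap.snd ℝ ℝ (Eu 4))).hasFDerivAt

theorem Dt_Xc (i : Fin 4) : Dt (Xc i) = 0 := by
  ext p; rw [DD_apply, (Xc_hasFDerivAt i p).fderiv]; simp [eT]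

theorem Dx_Xc (i j : Fin 4) : Dx i (Xc j) = if i = j then 1 else 0 := by
  ext p; rw [DD_apply, (Xc_hasFDerivAt j p).fderiv]
  rcases eq_or_ne i j with rfl | h
  · simp [eX]
  · simp [eX, h, h.symm]

/-! ### The multiplier and its energy current -/

/-- Constant functions. -/
abbrev cst (r : ℝ) : SmA := algebraMap ℝ SmA r

theorem cst_apply (r : ℝ) (p : E5) : (cst r).1 p = r := rfl
theorem DD_cst (v : E5) (r : ℝ) : DD v (cst r) = 0 := (DD v).map_algebraMap r

/-- Evaluation at a point, as an algebra homomorphism. -/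
def ev (p : E5) : SmA →ₐ[ℝ] ℝ := (Pi.evalAlgHom ℝ (fun _ : E5 => ℝ) p).comp SmA.val

theorem ev_apply (p : E5) (f : SmA) : ev p f = f.1 p := rfl
theorem ev_cst (p : E5) (r : ℝ) : ev p (cst r) = r := rfl

/-- The squared length `|∇z|²` of the spatial gradient. -/
def grad2 (z : SmA) : SmA := ∑ j, Dx j z ^ 2
/-- The scaling derivative `x·∇z`. -/
def rdot (z : SmA) : SmA := ∑ j, Xc j * Dx j z

/-- The coefficient `a = ⟨x⟩⁻¹ - ⟨x⟩^(-1-ε) / 20` of the multiplier field `X = a x`. The leading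
term makes `-Δq` comparable to `⟨x⟩⁻³`, and the correction gives a strictly positive deformation
tensor. -/
def mA (ε : ℝ) : SmA := J 1 - cst (1 / 20) * J (1 + ε)
/-- The radial function `b` with `∇a = b x`, for `a = mA ε`. -/
def mB (ε : ℝ) : SmA := - J 3 + cst ((1 + ε) / 20) * J (3 + ε)
/-- The zeroth order multiplier `q = (div X) / 2 - (ε / 40) ⟨x⟩^(-1-ε)`. -/
def mQ (ε : ℝ) : SmA := cst (3 / 2) * J 1 + cst (1 / 2) * J 3
  - cst ((3 - ε) / 40 + ε / 40) * J (1 + ε) - cst ((1 + ε) / 40) * J (3 + ε)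
/-- The multiplier field `X = a x`. -/
def mX (ε : ℝ) (i : Fin 4) : SmA := Xc i * mA ε

/-- The identity `|x|² ⟨x⟩^(-m-2) = ⟨x⟩^(-m) - ⟨x⟩^(-m-2)`. -/
theorem s_mul_J (m : ℝ) (p : E5) :
    (∑ i, (Xc i).1 p ^ 2) * (J (m + 2)).1 p = (J m).1 p - (J (m + 2)).1 p := by
  have h := J_mul_apply (-2) (m + 2) p
  rw [show -2 + (m + 2) = m by ring, J_negtwo, normsq_eq] at h
  linarith

theorem Dx_mX (ε : ℝ) (i j : Fin 4) :
    Dx i (mX ε j) = (if i = j then mA ε else 0) + Xc i * Xc j * mB ε := by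
  simp only [mX, mA, mB, Derivation.leibniz, map_sub, smul_eq_mul, Dx_J, DD_cst, Dx_Xc]
  rw [show (1 : ℝ) + 2 = 3 by norm_num, show 1 + ε + 2 = 3 + ε by ring,
    show cst ((1 + ε) / 20) = cst (1 / 20) * cst (1 + ε) by rw [← map_mul]; congr 1; ring,
    map_one]
  split_ifs <;> ring

/-- The Laplacian of `⟨x⟩^(-m)` in four space dimensions. -/
theorem lap_J (m : ℝ) (p : E5) : (∑ i, Dx i (Dx i (J m))).1 p
    = - (m * (2 - m)) * (J (m + 2)).1 p - m * (m + 2) * (J (m + 4)).1 p := by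
  have h1 : ∑ i, Dx i (Dx i (J m)) = cst m * (cst (m + 2) * (∑ i, Xc i ^ 2) * J (m + 4)
      - 4 * J (m + 2)) := by
    simp only [Dx_J, Derivation.leibniz, map_neg, smul_eq_mul, DD_cst, Dx_Xc, if_true,
      Fin.sum_univ_four]
    rw [show m + 2 + 2 = m + 4 by ring]
    ring
  have h2 := s_mul_J (m + 2) p
  rw [show m + 2 + 2 = m + 4 by ring] at h2
  rw [h1, ← ev_apply]
  simp only [map_mul, map_sub, ev_cst, map_sum, map_pow, map_ofNat]
  simp only [ev_apply]
  linear_combination m * (m + 2) * h2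

theorem lap_mQ (ε : ℝ) (h0 : 0 < ε) (h1 : ε ≤ 1) (p : E5) :
    (∑ i, Dx i (Dx i (mQ ε))).1 p ≤ - (J 3).1 p := by
  have hs : ∑ i, Dx i (Dx i (mQ ε)) = cst (3 / 2) * ∑ i, Dx i (Dx i (J 1))
      + cst (1 / 2) * ∑ i, Dx i (Dx i (J 3))
      - cst ((3 - ε) / 40 + ε / 40) * ∑ i, Dx i (Dx i (J (1 + ε)))
      - cst ((1 + ε) / 40) * ∑ i, Dx i (Dx i (J (3 + ε))) := by
    simp only [mQ, map_sub, map_add, Derivation.leibniz, DD_cst, smul_eq_mul, mul_zero,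
      add_zero, Finset.mul_sum, Finset.sum_add_distrib, Finset.sum_sub_distrib]
  rw [hs, ← ev_apply]
  simp only [map_mul, map_sub, map_add, ev_cst]
  simp only [ev_apply, lap_J]
  rw [show (1 : ℝ) + 2 = 3 by norm_num, show (1 : ℝ) + 4 = 5 by norm_num,
    show (3 : ℝ) + 2 = 5 by norm_num, show (3 : ℝ) + 4 = 7 by norm_num,
    show 1 + ε + 2 = 3 + ε by ring, show 1 + ε + 4 = 5 + ε by ring,
    show 3 + ε + 2 = 5 + ε by ring, show 3 + ε + 4 = 7 + ε by ring]
  have a3 := J_anti (show 3 ≤ 3 + ε by linarith) p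
  have a5 := J_anti (show 5 ≤ 5 + ε by linarith) p
  have a7 := J_anti (show 7 ≤ 7 + ε by linarith) p
  have p3 := J_pos (3 + ε) p
  have p5 := J_pos (5 + ε) p
  have p7 := J_pos (7 + ε) p
  generalize (J 3).1 p = x3 at *
  generalize (J 5).1 p = x5 at *
  generalize (J 7).1 p = x7 at *
  generalize (J (3 + ε)).1 p = y3 at *
  generalize (J (5 + ε)).1 p = y5 at *
  generalize (J (7 + ε)).1 p = y7 at *
  have c3 : (1 + ε) * (2 - (1 + ε)) ≤ 1 := by nlinarith
  have c5 : (1 + ε) * (1 + ε + 2) ≤ 8 := by nlinarith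
  have c5' : 0 ≤ (1 + ε) * (3 + ε) := by positivity
  have c7 : (1 + ε) * ((3 + ε) * (3 + ε + 2)) ≤ 48 := by
    have : (3 + ε) * (3 + ε + 2) ≤ 24 := by nlinarith
    nlinarith
  have d3 := mul_le_mul_of_nonneg_right c3 p3.le
  have d5 := mul_le_mul_of_nonneg_right c5 p5.le
  have d5' : 0 ≤ (1 + ε) * ((1 + ε) * (3 + ε)) * y5 := by positivity
  have d7 := mul_le_mul_of_nonneg_right c7 p7.le
  nlinarith

/-- Pointwise bounds for the multipliers. The second one says that the radial eigenvalue
`a + b |x|²` of the deformation tensor of `X` is at least `(ε / 20) ⟨x⟩^(-1-ε)`; as `b ≤ 0`, it is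
the smallest eigenvalue. The last two are `|X| ≤ 1` and `|q| ≤ 3 ⟨x⟩⁻¹`. -/
theorem coef_bounds (ε : ℝ) (h0 : 0 < ε) (h1 : ε ≤ 1) (p : E5) :
    (mB ε).1 p ≤ 0 ∧
    ε / 20 * (J (1 + ε)).1 p ≤ (mA ε).1 p + (mB ε).1 p * ∑ i, (Xc i).1 p ^ 2 ∧
    (mA ε).1 p ^ 2 * ∑ i, (Xc i).1 p ^ 2 ≤ 1 ∧
    (mQ ε).1 p ^ 2 ≤ 9 * (J 2).1 p := by
  have eA : (mA ε).1 p = (J 1).1 p - 1 / 20 * (J (1 + ε)).1 p := rfl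
  have eB : (mB ε).1 p = - (J 3).1 p + (1 + ε) / 20 * (J (3 + ε)).1 p := rfl
  have eQ : (mQ ε).1 p = 3 / 2 * (J 1).1 p + 1 / 2 * (J 3).1 p
    - ((3 - ε) / 40 + ε / 40) * (J (1 + ε)).1 p - ((1 + ε) / 40) * (J (3 + ε)).1 p := rfl
  have a1 := J_anti (show 1 ≤ 1 + ε by linarith) p
  have a3 := J_anti (show 3 ≤ 3 + ε by linarith) p
  have a13 := J_anti (show (1 : ℝ) ≤ 3 by norm_num) p
  have p1 := J_pos (1 + ε) p
  have p3 := J_pos (3 + ε) p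
  have q1 := J_pos 1 p
  have q3 := J_pos 3 p
  have s1 := s_mul_J 1 p
  have s2 := s_mul_J (1 + ε) p
  have s0 := s_mul_J 0 p
  have j11 := J_mul_apply 1 1 p
  have j2 := J_pos 2 p
  rw [show (1 : ℝ) + 2 = 3 by norm_num] at s1
  rw [show 1 + ε + 2 = 3 + ε by ring] at s2
  rw [zero_add, J_zero] at s0
  rw [show (1 : ℝ) + 1 = 2 by norm_num] at j11
  have one : ((1 : SmA) : E5 → ℝ) p = 1 := rfl
  rw [one] at s0
  have hs : 0 ≤ ∑ i, (Xc i).1 p ^ 2 := Finset.sum_nonneg fun i _ => sq_nonneg _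
  rw [eA, eB, eQ]
  generalize ∑ i, (Xc i).1 p ^ 2 = s at *
  generalize (J 1).1 p = x1 at *
  generalize (J 2).1 p = x2 at *
  generalize (J 3).1 p = x3 at *
  generalize (J (1 + ε)).1 p = y1 at *
  generalize (J (3 + ε)).1 p = y3 at *
  have e3 : ε * y3 ≤ y3 := by nlinarith
  refine ⟨by nlinarith, by nlinarith, ?_, ?_⟩
  · have : (x1 - 1 / 20 * y1) ^ 2 ≤ x2 := by nlinarith
    nlinarith
  · have : (3 / 2 * x1 + 1 / 2 * x3 - ((3 - ε) / 40 + ε / 40) * y1 - (1 + ε) / 40 * y3) ^ 2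
      ≤ (3 * x1) ^ 2 := by
      apply sq_le_sq'
      · nlinarith
      · nlinarith
    nlinarith

theorem rdot_sq_le (z : SmA) (p : E5) :
    (rdot z).1 p ^ 2 ≤ (∑ i, (Xc i).1 p ^ 2) * (grad2 z).1 p := by
  have h1 : (rdot z).1 p = ∑ i, (Xc i).1 p * (Dx i z).1 p := by
    rw [← ev_apply, rdot, map_sum]; rfl
  have h2 : (grad2 z).1 p = ∑ i, (Dx i z).1 p ^ 2 := by
    rw [← ev_apply, grad2, map_sum]; rfl
  rw [h1, h2]
  exact Finset.sum_mul_sq_le_sq_mul_sq _ _ _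

theorem grad2_nonneg (z : SmA) (p : E5) : 0 ≤ (grad2 z).1 p := by
  have h2 : (grad2 z).1 p = ∑ i, (Dx i z).1 p ^ 2 := by
    rw [← ev_apply, grad2, map_sum]; rfl
  rw [h2]; exact Finset.sum_nonneg fun i _ => sq_nonneg _

/-- The time component of the energy current for the multiplier `X·∇z + q z - 20 ∂ₜz`. The large
multiple of `-∂ₜz` makes the flux through time slices definite. -/
def curT (ε : ℝ) (z : SmA) : SmA :=
  2 * Dt z * (∑ j, mX ε j * Dx j z + mQ ε * z) - cst 20 * (Dt z ^ 2 + ∑ j, Dx j z ^ 2)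
/-- The spatial components of the energy current. -/
def curX (ε : ℝ) (z : SmA) (i : Fin 4) : SmA :=
  - 2 * Dx i z * (∑ j, mX ε j * Dx j z + mQ ε * z)
          + mX ε i * (∑ j, Dx j z ^ 2 - Dt z ^ 2) + Dx i (mQ ε) * z ^ 2
          + 2 * cst 20 * Dt z * Dx i z

theorem two_mQ (ε : ℝ) (p : E5) :
    2 * (mQ ε).1 p - (∑ i, Dx i (mX ε i)).1 p = - (ε / 20) * (J (1 + ε)).1 p := by
  have h1 : ∑ i, Dx i (mX ε i) = 4 * mA ε + (∑ i, Xc i ^ 2) * mB ε := by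
    simp only [Dx_mX, if_true, Fin.sum_univ_four]; ring
  have eA : (mA ε).1 p = (J 1).1 p - 1 / 20 * (J (1 + ε)).1 p := rfl
  have eB : (mB ε).1 p = - (J 3).1 p + (1 + ε) / 20 * (J (3 + ε)).1 p := rfl
  have eQ : (mQ ε).1 p = 3 / 2 * (J 1).1 p + 1 / 2 * (J 3).1 p
    - ((3 - ε) / 40 + ε / 40) * (J (1 + ε)).1 p - ((1 + ε) / 40) * (J (3 + ε)).1 p := rfl
  have s1 := s_mul_J 1 p
  have s2 := s_mul_J (1 + ε) p
  rw [show (1 : ℝ) + 2 = 3 by norm_num] at s1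
  rw [show 1 + ε + 2 = 3 + ε by ring] at s2
  rw [h1, ← ev_apply p (4 * _ + _)]
  simp only [map_mul, map_add, map_sum, map_pow, map_ofNat]
  simp only [ev_apply, eA, eB, eQ]
  linear_combination s1 - (1 + ε) / 20 * s2

theorem cur_identity (ε : ℝ) (z : SmA) (p : E5) :
    (Dt (curT ε z) + ∑ i, Dx i (curX ε z i)).1 p
    = 2 * (Box z).1 p * ((mA ε).1 p * (rdot z).1 p + (mQ ε).1 p * z.1 p - 20 * (Dt z).1 p)
      - ε / 20 * (J (1 + ε)).1 p * ((Dt z).1 p ^ 2 - (grad2 z).1 p)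
      - 2 * ((mA ε).1 p * (grad2 z).1 p + (mB ε).1 p * (rdot z).1 p ^ 2)
      + (∑ i, Dx i (Dx i (mQ ε))).1 p * z.1 p ^ 2 := by
  have hA : Dt (mA ε) = 0 := by simp [mA, Derivation.leibniz, Dt_J]
  have e1 : ∑ j, mX ε j * Dx j z = mA ε * rdot z := by
    simp only [mX, rdot, Finset.mul_sum]; exact Finset.sum_congr rfl fun _ _ => by ring
  have e2 : ∑ i, ∑ j, Dx i (mX ε j) * Dx i z * Dx j z = mA ε * grad2 z + mB ε * rdot z ^ 2 := by
    have h : ∀ i, ∑ j, Dx i (mX ε j) * Dx i z * Dx j z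
        = mA ε * Dx i z ^ 2 + mB ε * rdot z * (Xc i * Dx i z) := by
      intro i
      simp only [Dx_mX, add_mul, ite_mul, zero_mul, Finset.sum_add_distrib,
        Finset.sum_ite_eq, Finset.mem_univ, if_true]
      rw [rdot, Finset.mul_sum, Finset.sum_mul]
      congr 1
      · ring
      · exact Finset.sum_congr rfl fun _ _ => by ring
    simp only [h, Finset.sum_add_distrib, ← Finset.mul_sum]
    rw [grad2, rdot]; ring
  have hid : Dt (curT ε z) + ∑ i, Dx i (curX ε z i)
      = 2 * Box z * (mA ε * rdot z + mQ ε * z - cst 20 * Dt z)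
        + (2 * mQ ε - ∑ i, Dx i (mX ε i)) * (Dt z ^ 2 - grad2 z)
        - 2 * (mA ε * grad2 z + mB ε * rdot z ^ 2)
        + (∑ i, Dx i (Dx i (mQ ε))) * z ^ 2 := by
    rw [← e1, ← e2]
    exact energy_identity Dt Dx (fun i f => DD_comm _ _ f) (fun i j f => DD_comm _ _ f)
      (mX ε) (mQ ε) (cst 20) z (fun i => by simp [mX, Derivation.leibniz, Dt_Xc, hA])
      (by simp [mQ, Derivation.leibniz, Dt_J]) (DD_cst _ _) (fun i => DD_cst _ _)
  have h2 := two_mQ ε p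
  rw [hid, ← ev_apply]
  rw [← ev_apply, ← ev_apply p (∑ i, Dx i (mX ε i))] at h2
  simp only [map_mul, map_add, map_sub, map_pow, map_ofNat, h2]
  simp only [ev_apply]
  ring

/-- The divergence of the current, bounded by absorbing the cross terms `□z · (X·∇z + q z - 20 ∂ₜz)`
with weighted Young inequalities. -/
theorem cur_le (ε : ℝ) (h0 : 0 < ε) (h1 : ε ≤ 1) (z : SmA) (p : E5) :
    (Dt (curT ε z) + ∑ i, Dx i (curX ε z i)).1 p
    ≤ (8040 / ε + 18) * ((J (-(1 + ε))).1 p * (Box z).1 p ^ 2) - 1 / 2 * ((J 3).1 p * z.1 p ^ 2) := by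
  rw [cur_identity]
  obtain ⟨b1, b2, b3, b4⟩ := coef_bounds ε h0 h1 p
  have hq := lap_mQ ε h0 h1 p
  have hr := rdot_sq_le z p
  have hN := grad2_nonneg z p
  have hs : 0 ≤ ∑ i, (Xc i).1 p ^ 2 := Finset.sum_nonneg fun i _ => sq_nonneg _
  have hL : (J (1 + ε)).1 p * (J (-(1 + ε))).1 p = 1 := by
    rw [J_mul_apply, add_neg_cancel, J_zero]; rfl
  have hL2 : (J (1 + ε)).1 p * (J 2).1 p ≤ (J 3).1 p := by
    rw [J_mul_apply]; exact J_anti (by linarith) p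
  have pL := J_pos (1 + ε) p
  have pM := J_pos (-(1 + ε)) p
  generalize ∑ i, (Xc i).1 p ^ 2 = s at *
  generalize (∑ i, Dx i (Dx i (mQ ε))).1 p = lq at *
  generalize (J 3).1 p = x3 at *
  generalize (J 2).1 p = x2 at *
  generalize (J (1 + ε)).1 p = L at *
  generalize (J (-(1 + ε))).1 p = M at *
  generalize (mA ε).1 p = a at *
  generalize (mB ε).1 p = b at *
  generalize (mQ ε).1 p = q at *
  generalize (rdot z).1 p = P at *
  generalize (grad2 z).1 p = N at *
  generalize (Dt z).1 p = zt at *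
  generalize (Box z).1 p = G at *
  generalize z.1 p = u at *
  -- weighted Young inequality, with `L * M = 1`
  have young : ∀ c y : ℝ, 0 < c → 2 * G * y ≤ (1 / c) * (M * G ^ 2) + c * (L * y ^ 2) := by
    intro c y hc
    have h : (1 / c) * (M * G ^ 2) + c * (L * y ^ 2) - 2 * G * y
        = M / c * (G - c * L * y) ^ 2 := by
      field_simp
      linear_combination (2 * G * y * c - c ^ 2 * L * y ^ 2) * hL
    have : 0 ≤ M / c * (G - c * L * y) ^ 2 := by positivity
    linarith
  have y1 := young (ε / 40) (a * P) (by positivity)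
  have y2 := young (ε / 8000) (-20 * zt) (by positivity)
  have y3 := young (1 / 18) (q * u) (by norm_num)
  have k1 : (a * P) ^ 2 ≤ N := by
    have := mul_le_mul_of_nonneg_left hr (sq_nonneg a)
    nlinarith
  have k2 : b * (s * N) ≤ b * P ^ 2 := mul_le_mul_of_nonpos_left hr b1
  have k3 : ε / 20 * L * N ≤ (a + b * s) * N := mul_le_mul_of_nonneg_right b2 hN
  have k4 : lq * u ^ 2 ≤ - x3 * u ^ 2 := mul_le_mul_of_nonneg_right hq (sq_nonneg u)
  have k5 : L * (q * u) ^ 2 ≤ 9 * (x3 * u ^ 2) := by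
    have e1 := mul_le_mul_of_nonneg_right (mul_le_mul_of_nonneg_left b4 pL.le) (sq_nonneg u)
    have e2 := mul_le_mul_of_nonneg_right hL2 (sq_nonneg u)
    nlinarith
  have k6 := mul_le_mul_of_nonneg_left k1 pL.le
  have k7 := mul_le_mul_of_nonneg_left k6 h0.le
  have k9 : 0 ≤ ε * (L * N) := by positivity
  have e1 : (1 / (ε / 40)) * (M * G ^ 2) = 40 / ε * (M * G ^ 2) := by field_simp
  have e3 : (1 / (ε / 8000)) * (M * G ^ 2) = 8000 / ε * (M * G ^ 2) := by field_simp
  have e2 : (8040 / ε + 18) * (M * G ^ 2)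
      = 40 / ε * (M * G ^ 2) + 8000 / ε * (M * G ^ 2) + 18 * (M * G ^ 2) := by ring
  rw [e1] at y1
  rw [e3] at y2
  rw [e2]
  linarith

/-- The spatial field `-18 x ⟨x⟩⁻² z²`. Its divergence integrates to zero, and comparing it with the
flux density is a pointwise form of Hardy's inequality. -/
def hardyX (z : SmA) (i : Fin 4) : SmA := - cst 18 * (Xc i * J 2 * z ^ 2)

/-- The flux density through a time slice dominates an exact divergence, so that its integral is
nonnegative. -/
theorem curT_neg_ge (ε : ℝ) (h0 : 0 < ε) (h1 : ε ≤ 1) (z : SmA) (p : E5) :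
    (∑ i, Dx i (hardyX z i)).1 p ≤ - (curT ε z).1 p := by
  have hd : ∑ i, Dx i (hardyX z i) = - cst 18 * ((4 * J 2 - 2 * (∑ i, Xc i ^ 2) * J 4) * z ^ 2
      + 2 * J 2 * z * rdot z) := by
    simp only [hardyX, rdot, Derivation.leibniz, Derivation.leibniz_pow, map_neg, smul_eq_mul,
      DD_cst, Dx_Xc, if_true, Fin.sum_univ_four, Dx_J, nsmul_eq_mul]
    rw [show (2 : ℝ) + 2 = 4 by norm_num, map_ofNat]
    push_cast
    ring
  have e1 : ∑ j, mX ε j * Dx j z = mA ε * rdot z := by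
    simp only [mX, rdot, Finset.mul_sum]; exact Finset.sum_congr rfl fun _ _ => by ring
  have ht : (curT ε z).1 p = 2 * (Dt z).1 p * ((mA ε).1 p * (rdot z).1 p + (mQ ε).1 p * z.1 p)
      - 20 * ((Dt z).1 p ^ 2 + (grad2 z).1 p) := by
    rw [← ev_apply, curT, e1, ← grad2]
    simp only [map_mul, map_add, map_sub, map_pow, map_ofNat]
    simp only [ev_apply]
  rw [ht, hd, ← ev_apply]
  simp only [map_neg, map_mul, map_add, map_sub, map_pow, map_ofNat, map_sum]
  simp only [ev_apply]
  obtain ⟨b1, b2, b3, b4⟩ := coef_bounds ε h0 h1 p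
  have hr := rdot_sq_le z p
  have hN := grad2_nonneg z p
  have hs : 0 ≤ ∑ i, (Xc i).1 p ^ 2 := Finset.sum_nonneg fun i _ => sq_nonneg _
  have s0 := s_mul_J 0 p
  have s2 := s_mul_J 2 p
  have one : ((1 : SmA) : E5 → ℝ) p = 1 := rfl
  rw [zero_add, J_zero, one] at s0
  rw [show (2 : ℝ) + 2 = 4 by norm_num] at s2
  have p2 := J_pos 2 p
  have p4 := J_pos 4 p
  generalize ∑ i, (Xc i).1 p ^ 2 = s at *
  generalize (J 2).1 p = x2 at *
  generalize (J 4).1 p = x4 at *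
  generalize (mA ε).1 p = a at *
  generalize (mQ ε).1 p = q at *
  generalize (rdot z).1 p = P at *
  generalize (grad2 z).1 p = N at *
  generalize (Dt z).1 p = zt at *
  generalize z.1 p = u at *
  have k1 : (a * P) ^ 2 ≤ N := by
    have := mul_le_mul_of_nonneg_left hr (sq_nonneg a)
    nlinarith
  have k2 : (q * u) ^ 2 ≤ 9 * x2 * u ^ 2 := by
    have := mul_le_mul_of_nonneg_right b4 (sq_nonneg u)
    nlinarith
  have k3 : x2 * P ^ 2 ≤ N := by
    have := mul_le_mul_of_nonneg_left hr p2.le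
    nlinarith
  have k4 : 0 ≤ x2 * (u + P) ^ 2 := by positivity
  have k5 : 0 ≤ x4 * u ^ 2 := by positivity
  have k6 : 2 * s * x4 * u ^ 2 = 2 * (x2 - x4) * u ^ 2 := by rw [← s2]; ring
  nlinarith [sq_nonneg (zt - (a * P + q * u)), sq_nonneg (a * P - q * u), sq_nonneg zt]

/-! ### The local energy estimate for test functions -/

/-- The space-time slab `[0, T] × ℝ⁴`. -/
def slab (T : ℝ) : Set E5 := Icc 0 T ×ˢ univ

theorem DD_off {K : Set E5} (hK : IsClosed K) {z : SmA} (h : ∀ p ∉ K, z.1 p = 0) (v : E5) :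
    ∀ p ∉ K, (DD v z).1 p = 0 := by
  intro p hp
  have : z.1 =ᶠ[nhds p] fun _ => 0 := by
    filter_upwards [hK.isOpen_compl.mem_nhds hp] with y hy using h y hy
  rw [DD_apply, this.fderiv_eq]; simp

theorem DD_cs {g : SmA} (hg : HasCompactSupport g.1) (v : E5) :
    HasCompactSupport (DD v g).1 := hg.fderiv_apply ℝ v

theorem sm_int {g : SmA} (hg : HasCompactSupport g.1) : Integrable g.1 :=
  (sm_cont g).integrable_of_hasCompactSupport hg

instance instHaarE5 : (volume : Measure E5).IsAddHaarMeasure := by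
  rw [Measure.volume_eq_prod]; infer_instance

theorem integral_DD (v : E5) {g : SmA} (hg : HasCompactSupport g.1) :
    ∫ p, (DD v g).1 p = 0 := by
  have h := integral_mul_fderiv_eq_neg_fderiv_mul_of_integrable (μ := (volume : Measure E5))
    (f := fun _ : E5 => (1 : ℝ)) (g := g.1) (v := v) (by simp)
    (by simp only [one_mul]; exact sm_int (DD_cs hg v)) (by simpa only [one_mul] using sm_int hg)
    (fun _ _ => differentiableAt_const _) (fun x _ => sm_diff g x)
  simp at h
  exact h

theorem slice_hasFDerivAt (g : SmA) (t : ℝ) (x : Eu 4) :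
    HasFDerivAt (fun y : Eu 4 => g.1 (t, y))
      ((fderiv ℝ g.1 (t, x)).comp (ContinuousLinearMap.inr ℝ ℝ (Eu 4))) x := by
  have h1 : HasFDerivAt (fun y : Eu 4 => ((t, y) : E5)) (ContinuousLinearMap.inr ℝ ℝ (Eu 4)) x :=
    hasFDerivAt_prodMk_right t x
  exact ((sm_diff g (t, x)).hasFDerivAt).comp x h1

theorem line_hasDerivAt (g : SmA) (t : ℝ) (x : Eu 4) :
    HasDerivAt (fun s : ℝ => g.1 (s, x)) ((Dt g).1 (t, x)) t := by
  have h1 : HasFDerivAt (fun s : ℝ => ((s, x) : E5)) (ContinuousLinearMap.inl ℝ ℝ (Eu 4)) t :=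
    hasFDerivAt_prodMk_left t x
  have := (((sm_diff g (t, x)).hasFDerivAt).comp t h1).hasDerivAt
  simp only [ContinuousLinearMap.comp_apply, ContinuousLinearMap.inl_apply] at this
  exact this

theorem slice_cs {g : SmA} (hg : HasCompactSupport g.1) (t : ℝ) :
    HasCompactSupport (fun x : Eu 4 => g.1 (t, x)) := by
  refine HasCompactSupport.intro (hg.isCompact.image continuous_snd) (fun x hx => ?_)
  by_contra h
  exact hx ⟨(t, x), subset_tsupport _ h, rfl⟩

theorem slice_cont (g : SmA) (t : ℝ) : Continuous (fun x : Eu 4 => g.1 (t, x)) :=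
  (sm_cont g).comp (by fun_prop)

theorem slice_int {g : SmA} (hg : HasCompactSupport g.1) (t : ℝ) :
    Integrable (fun x : Eu 4 => g.1 (t, x)) :=
  (slice_cont g t).integrable_of_hasCompactSupport (slice_cs hg t)

theorem slice_integral_Dx (i : Fin 4) {g : SmA} (hg : HasCompactSupport g.1) (t : ℝ) :
    ∫ x : Eu 4, (Dx i g).1 (t, x) = 0 := by
  have e : ∀ x, fderiv ℝ (fun y : Eu 4 => g.1 (t, y)) x (EuclideanSpace.single i 1)
      = (Dx i g).1 (t, x) := by
    intro x; rw [(slice_hasFDerivAt g t x).fderiv, DD_apply]; simp [eX]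
  have h := integral_mul_fderiv_eq_neg_fderiv_mul_of_integrable (μ := (volume : Measure (Eu 4)))
    (f := fun _ : Eu 4 => (1 : ℝ)) (g := fun y => g.1 (t, y)) (v := EuclideanSpace.single i 1)
    (by simp)
    (by simpa only [e, one_mul] using slice_int (DD_cs hg (eX i)) t)
    (by simpa using slice_int hg t)
    (fun _ _ => differentiableAt_const _) (fun x _ => (slice_hasFDerivAt g t x).differentiableAt)
  simpa [e] using h

theorem slab_Dx (i : Fin 4) (T : ℝ) {g : SmA} (hg : HasCompactSupport g.1) :
    ∫ p in slab T, (Dx i g).1 p = 0 := by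
  rw [slab, Measure.volume_eq_prod, setIntegral_prod]
  · simp [slice_integral_Dx i hg]
  · rw [← Measure.volume_eq_prod]; exact (sm_int (DD_cs hg (eX i))).integrableOn

/-- The fundamental theorem of calculus in time, for functions vanishing at the final time `T`. -/
theorem slab_Dt {T : ℝ} (hT : 0 ≤ T) {g : SmA} (hg : HasCompactSupport g.1)
    (h0 : ∀ x, g.1 (T, x) = 0) :
    ∫ p in slab T, (Dt g).1 p = - ∫ x : Eu 4, g.1 (0, x) := by
  have hi : Integrable (fun p : ℝ × Eu 4 => (Dt g).1 p)
      ((volume.restrict (Icc 0 T)).prod (volume.restrict univ)) := by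
    rw [Measure.prod_restrict, ← Measure.volume_eq_prod]
    exact (sm_int (DD_cs hg eT)).integrableOn
  rw [slab, Measure.volume_eq_prod, ← Measure.prod_restrict, integral_prod_symm _ hi,
    Measure.restrict_univ, ← integral_neg]
  congr 1; ext x
  rw [integral_Icc_eq_integral_Ioc, ← intervalIntegral.integral_of_le hT,
    intervalIntegral.integral_eq_sub_of_hasDerivAt (fun t _ => line_hasDerivAt g t x)]
  · simp [h0]
  · apply Continuous.intervalIntegrable
    exact (sm_cont (Dt g)).comp (by fun_prop)

/-- The smooth functions vanishing off a compact set contained in `{t < T}`. No condition is imposed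
at `t ≤ 0`, so that the Cauchy data at `t = 0` are free. -/
def TestFn (T : ℝ) : Submodule ℝ SmA where
  carrier := {z | ∃ K : Set E5, IsCompact K ∧ (∀ p ∈ K, p.1 < T) ∧ ∀ p ∉ K, z.1 p = 0}
  zero_mem' := ⟨∅, isCompact_empty, by simp, fun _ _ => rfl⟩
  add_mem' := by
    rintro z w ⟨K, hK, hKT, hz⟩ ⟨L, hL, hLT, hw⟩
    refine ⟨K ∪ L, hK.union hL, fun p hp => hp.elim (hKT p) (hLT p), fun p hp => ?_⟩
    have h1 := hz p fun h => hp (Or.inl h)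
    have h2 := hw p fun h => hp (Or.inr h)
    change z.1 p + w.1 p = 0
    rw [h1, h2, add_zero]
  smul_mem' := by
    rintro c z ⟨K, hK, hKT, hz⟩
    refine ⟨K, hK, hKT, fun p hp => ?_⟩
    change c * z.1 p = 0
    rw [hz p hp, mul_zero]

/-- The local energy estimate for the backward problem with zero data at time `T`:
`‖⟨x⟩^(-3/2) z‖ ≤ C ‖⟨x⟩^((1+ε)/2) □z‖` in `L²` of the slab. -/
theorem local_energy (ε : ℝ) (h0 : 0 < ε) (h1 : ε ≤ 1) {T : ℝ} (hT : 0 ≤ T) {z : SmA}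
    (hz : z ∈ TestFn T) :
    ∫ p in slab T, (J 3).1 p * z.1 p ^ 2
      ≤ 2 * (8040 / ε + 18) * ∫ p in slab T, (J (-(1 + ε))).1 p * (Box z).1 p ^ 2 := by
  obtain ⟨K, hK, hKT, hzK⟩ := hz
  have hd := fun v => DD_off hK.isClosed hzK v
  have hdd := fun u v => DD_off hK.isClosed (hd u) v
  have oT : ∀ p ∉ K, (curT ε z).1 p = 0 := by
    intro p hp
    rw [← ev_apply, curT]
    simp [map_mul, map_add, map_sub, map_sum, ev_apply, hd _ p hp, hzK p hp]
  have oX : ∀ i, ∀ p ∉ K, (curX ε z i).1 p = 0 := by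
    intro i p hp
    rw [← ev_apply, curX]
    simp [map_mul, map_add, map_sub, map_sum, ev_apply, hd _ p hp, hzK p hp]
  have oH : ∀ i, ∀ p ∉ K, (hardyX z i).1 p = 0 := by
    intro i p hp
    rw [← ev_apply, hardyX]
    simp [map_mul, ev_apply, hzK p hp]
  have oB : ∀ p ∉ K, (Box z).1 p = 0 := by
    intro p hp
    rw [← ev_apply, Box]
    simp [map_sub, map_sum, ev_apply, hdd _ _ p hp]
  have cT : HasCompactSupport (curT ε z).1 := HasCompactSupport.intro hK oT
  have cX := fun i => HasCompactSupport.intro hK (oX i)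
  have cH := fun i => HasCompactSupport.intro hK (oH i)
  have i1 : Integrable (fun p => (J (-(1 + ε))).1 p * (Box z).1 p ^ 2) :=
    sm_int (g := J (-(1 + ε)) * Box z ^ 2) (HasCompactSupport.intro hK fun p hp => by
      rw [← ev_apply]; simp [map_mul, ev_apply, oB p hp])
  have i2 : Integrable (fun p => (J 3).1 p * z.1 p ^ 2) :=
    sm_int (g := J 3 * z ^ 2) (HasCompactSupport.intro hK fun p hp => by
      rw [← ev_apply]; simp [map_mul, ev_apply, hzK p hp])
  have iT := sm_int (DD_cs cT eT)
  have iX := fun i => sm_int (DD_cs (cX i) (eX i))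
  -- the flux through the initial slice has a favourable sign, by Hardy's inequality
  have hflux : 0 ≤ - ∫ x : Eu 4, (curT ε z).1 (0, x) := by
    rw [← integral_neg]
    have : ∫ x : Eu 4, (∑ i, Dx i (hardyX z i)).1 (0, x) = 0 := by
      have e : ∀ x : Eu 4, (∑ i, Dx i (hardyX z i)).1 (0, x)
          = ∑ i, (Dx i (hardyX z i)).1 (0, x) := by
        intro x; rw [← ev_apply, map_sum]; rfl
      simp_rw [e]
      rw [integral_finsetSum _ fun i _ => slice_int (DD_cs (cH i) _) 0]
      simp [slice_integral_Dx _ (cH _)]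
    refine this.symm.le.trans ?_
    refine integral_mono ?_ (slice_int cT 0).neg fun x => curT_neg_ge ε h0 h1 z (0, x)
    apply slice_int
    refine HasCompactSupport.intro hK fun p hp => ?_
    rw [← ev_apply, map_sum]
    exact Finset.sum_eq_zero fun i _ => DD_off hK.isClosed (oH i) _ p hp
  have hdiv : ∫ p in slab T, (Dt (curT ε z) + ∑ i, Dx i (curX ε z i)).1 p
      = - ∫ x : Eu 4, (curT ε z).1 (0, x) := by
    have e : ∀ p, (Dt (curT ε z) + ∑ i, Dx i (curX ε z i)).1 p
        = (Dt (curT ε z)).1 p + ∑ i, (Dx i (curX ε z i)).1 p := by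
      intro p; rw [← ev_apply, map_add, map_sum]; rfl
    simp_rw [e]
    rw [integral_add iT.integrableOn (integrable_finsetSum _ fun i _ => (iX i).integrableOn),
      integral_finsetSum _ fun i _ => (iX i).integrableOn,
      slab_Dt hT cT fun x => oT _ fun h => lt_irrefl _ (hKT _ h)]
    simp [slab_Dx _ T (cX _)]
  have hmono : ∫ p in slab T, (Dt (curT ε z) + ∑ i, Dx i (curX ε z i)).1 p
      ≤ ∫ p in slab T, ((8040 / ε + 18) * ((J (-(1 + ε))).1 p * (Box z).1 p ^ 2)
        - 1 / 2 * ((J 3).1 p * z.1 p ^ 2)) := by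
    refine integral_mono ?_ ((i1.integrableOn.const_mul _).sub (i2.integrableOn.const_mul _))
      fun p => cur_le ε h0 h1 z p
    refine (sm_int (HasCompactSupport.intro hK fun p hp => ?_)).integrableOn
    rw [← ev_apply, map_add, map_sum, ev_apply, DD_off hK.isClosed oT _ p hp, zero_add]
    exact Finset.sum_eq_zero fun i _ => DD_off hK.isClosed (oX i) _ p hp
  rw [integral_sub (i1.integrableOn.const_mul _) (i2.integrableOn.const_mul _),
    integral_const_mul, integral_const_mul] at hmono
  linarith

/-! ### Finite speed uniqueness and Green's identity -/

/-- The time coordinate function. -/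
def Tc : SmA := ⟨fun p => p.1, show ContDiff ℝ (⊤ : ℕ∞) (fun p : E5 => p.1) from contDiff_fst⟩

theorem DD_Tc (v p : E5) : (DD v Tc).1 p = v.1 := by
  rw [DD_apply]
  have : HasFDerivAt Tc.1 (ContinuousLinearMap.fst ℝ ℝ (Eu 4)) p :=
    (ContinuousLinearMap.fst ℝ ℝ (Eu 4)).hasFDerivAt
  rw [this.fderiv]; rfl

/-- The composition with the smooth cutoff `s ↦ exp (-1/s)` for `0 < s`. -/
def glue (S : SmA) : SmA := ⟨fun p => expNegInvGlue (S.1 p),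
  show ContDiff ℝ (⊤ : ℕ∞) (fun p => expNegInvGlue (S.1 p)) from
    expNegInvGlue.contDiff.comp (sm_smooth S)⟩

theorem glue_deriv (x : ℝ) : HasDerivAt expNegInvGlue ((x⁻¹) ^ 2 * expNegInvGlue x) x := by
  have := expNegInvGlue.hasDerivAt_polynomial_eval_inv_mul 1 x
  simpa using this

theorem DD_glue (v : E5) (S : SmA) (p : E5) :
    (DD v (glue S)).1 p = ((S.1 p)⁻¹ ^ 2 * expNegInvGlue (S.1 p)) * (DD v S).1 p := by
  rw [DD_apply]
  have h := (glue_deriv (S.1 p)).comp_hasFDerivAt p (sm_diff S p).hasFDerivAt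
  have h2 : HasFDerivAt (glue S).1 _ p := h
  rw [h2.fderiv]; rfl

/-- The divergence of the standard energy current, multiplied by a weight `ρ`. -/
theorem flux_identity (ρ u : SmA) :
    2 * ∑ i, Dx i (ρ * Dt u * Dx i u) - Dt (ρ * (Dt u ^ 2 + grad2 u))
      = 2 * Dt u * (∑ i, Dx i ρ * Dx i u) - Dt ρ * (Dt u ^ 2 + grad2 u)
        - 2 * ρ * Dt u * Box u := by
  have hc : ∀ i, Dt (Dx i u) = Dx i (Dt u) := fun i => DD_comm _ _ u
  simp only [grad2, Box, Fin.sum_univ_four, map_add, Derivation.leibniz,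
    Derivation.leibniz_pow, smul_eq_mul, nsmul_eq_mul, hc]
  push_cast
  ring

/-- A smooth solution of `□u = 0` on `{t < T}` that vanishes in the far past has `∂ₜu = 0` there. The
energy current is weighted by a smooth function of `λ (T - t) - ⟨x⟩`, which is supported in a
backward cone of slope `λ > 1` and vanishes at `t = T`; `λ` is chosen so that the cone contains the
given point. -/
theorem energy_vanish {u : SmA} {t₀ T : ℝ} (h1 : ∀ p : E5, p.1 < t₀ → u.1 p = 0)
    (h2 : ∀ p : E5, p.1 < T → (Box u).1 p = 0) (p₀ : E5) (hp₀ : p₀.1 < T) :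
    (Dt u).1 p₀ = 0 := by
  have hTp : 0 < T - p₀.1 := by linarith
  set lam : ℝ := 1 + (J (-1)).1 p₀ / (T - p₀.1) with hlam
  have hlam1 : 1 < lam := by
    have := div_pos (J_pos (-1) p₀) hTp
    linarith
  have hlamp : lam * (T - p₀.1) = (T - p₀.1) + (J (-1)).1 p₀ := by
    rw [hlam]; field_simp
  set S : SmA := cst (lam * T) - cst lam * Tc - J (-1) with hS
  have eS : ∀ p, S.1 p = lam * T - lam * p.1 - (J (-1)).1 p := fun p => rfl
  have hSp₀ : 0 < S.1 p₀ := by rw [eS]; nlinarith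
  have hJn : ∀ p, ‖p.2‖ ≤ (J (-1)).1 p := by
    intro p
    have e := J_mul_apply (-1) (-1) p
    rw [show (-1 : ℝ) + -1 = -2 by norm_num, J_negtwo] at e
    have := J_pos (-1) p
    exact le_of_abs_le (abs_le_of_sq_le_sq (by nlinarith) this.le)
  set ρ := glue S with hρ
  have ρ0 : ∀ p, S.1 p ≤ 0 → ρ.1 p = 0 := fun p hp => expNegInvGlue.zero_of_nonpos hp
  set g : E5 → ℝ := fun p => (S.1 p)⁻¹ ^ 2 * expNegInvGlue (S.1 p) with hg
  have gnn : ∀ p, 0 ≤ g p := fun p => mul_nonneg (sq_nonneg _) (expNegInvGlue.nonneg _)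
  have dT : ∀ p, (Dt ρ).1 p = - lam * g p := by
    intro p
    have : (Dt S).1 p = - lam := by
      rw [hS, map_sub, map_sub, Derivation.leibniz, DD_cst, DD_cst, Dt_J, ← ev_apply]
      simp [ev_apply, DD_Tc, eT]
    rw [hρ, DD_glue, this]; ring
  have dX : ∀ i p, (Dx i ρ).1 p = - g p * ((Xc i).1 p * (J 1).1 p) := by
    intro i p
    have : (Dx i S).1 p = - ((Xc i).1 p * (J 1).1 p) := by
      rw [hS, map_sub, map_sub, Derivation.leibniz, DD_cst, DD_cst, Dx_J, ← ev_apply]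
      rw [show (-1 : ℝ) + 2 = 1 by norm_num]
      simp [ev_apply, DD_Tc, eX]
    rw [hρ, DD_glue, this]; ring
  -- the current is supported in a truncated backward cone
  set K : Set E5 := Icc t₀ T ×ˢ Metric.closedBall 0 (lam * T - lam * t₀) with hKdef
  have hK : IsCompact K := isCompact_Icc.prod (isCompact_closedBall _ _)
  have hu : ∀ p ∉ {p : E5 | t₀ ≤ p.1}, u.1 p = 0 := fun p hp => h1 p (not_le.1 hp)
  have hcl : IsClosed {p : E5 | t₀ ≤ p.1} := isClosed_le continuous_const continuous_fst
  have hdu := fun v => DD_off hcl hu v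
  have hoff : ∀ p ∉ K, p ∉ {p : E5 | t₀ ≤ p.1} ∨ ρ.1 p = 0 := by
    intro p hp
    by_cases ht : t₀ ≤ p.1
    · right
      apply ρ0
      rw [eS]
      by_contra hcon
      push Not at hcon
      have := hJn p
      have := norm_nonneg p.2
      refine hp ⟨⟨ht, ?_⟩, ?_⟩
      · nlinarith
      · rw [mem_closedBall_zero_iff]; nlinarith
    · exact Or.inl ht
  have c1 : HasCompactSupport (ρ * (Dt u ^ 2 + grad2 u)).1 := by
    refine HasCompactSupport.intro hK fun p hp => ?_
    rw [← ev_apply, grad2]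
    rcases hoff p hp with h | h
    · simp [map_mul, map_add, map_sum, ev_apply, hdu _ p h]
    · simp [map_mul, ev_apply, h]
  have c2 : ∀ i, HasCompactSupport (ρ * Dt u * Dx i u).1 := by
    intro i
    refine HasCompactSupport.intro hK fun p hp => ?_
    rw [← ev_apply]
    rcases hoff p hp with h | h
    · simp [map_mul, ev_apply, hdu _ p h]
    · simp [map_mul, ev_apply, h]
  set Φ : SmA := 2 * ∑ i, Dx i (ρ * Dt u * Dx i u) - Dt (ρ * (Dt u ^ 2 + grad2 u)) with hΦ
  have eΦ : ∀ p, Φ.1 p = 2 * ∑ i, (Dx i (ρ * Dt u * Dx i u)).1 p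
      - (Dt (ρ * (Dt u ^ 2 + grad2 u))).1 p := by
    intro p
    rw [← ev_apply, hΦ, map_sub, map_mul, map_sum, map_ofNat]; rfl
  have iΦ1 := fun i => sm_int (DD_cs (c2 i) (eX i))
  have iΦ2 := sm_int (DD_cs c1 eT)
  have intΦ : Integrable Φ.1 := by
    rw [show Φ.1 = _ from funext eΦ]
    exact ((integrable_finsetSum _ fun i _ => iΦ1 i).const_mul 2).sub iΦ2
  have zeroΦ : ∫ p, Φ.1 p = 0 := by
    simp_rw [eΦ]
    rw [integral_sub ((integrable_finsetSum _ fun i _ => iΦ1 i).const_mul 2) iΦ2,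
      integral_const_mul, integral_finsetSum _ fun i _ => iΦ1 i, integral_DD _ c1]
    rw [Finset.sum_eq_zero fun i _ => integral_DD (eX i) (c2 i)]
    norm_num
  have ρB : ∀ p, ρ.1 p * (Box u).1 p = 0 := by
    intro p
    by_cases hp : p.1 < T
    · rw [h2 p hp, mul_zero]
    · rw [ρ0 p, zero_mul]
      rw [eS]
      have := J_pos (-1) p
      nlinarith
  have key : ∀ p, (lam - 1) * g p * (Dt u).1 p ^ 2 ≤ Φ.1 p := by
    intro p
    have e : Φ.1 p = g p * (lam * ((Dt u).1 p ^ 2 + (grad2 u).1 p)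
        - 2 * (Dt u).1 p * ((J 1).1 p * (rdot u).1 p)) := by
      have hr : (rdot u).1 p = ∑ i, (Xc i).1 p * (Dx i u).1 p := by
        rw [← ev_apply, rdot, map_sum]; rfl
      rw [hΦ, flux_identity, ← ev_apply]
      simp only [map_sub, map_mul, map_add, map_sum, map_ofNat, map_pow]
      simp only [ev_apply, dT, dX, hr, Fin.sum_univ_four]
      linear_combination (-2 * (Dt u).1 p) * ρB p
    rw [e]
    have hr := rdot_sq_le u p
    have hN := grad2_nonneg u p
    have s0 := s_mul_J 0 p
    have one : ((1 : SmA) : E5 → ℝ) p = 1 := rfl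
    rw [zero_add, J_zero, one] at s0
    have j11 := J_mul_apply 1 1 p
    rw [show (1 : ℝ) + 1 = 2 by norm_num] at j11
    have p2 := J_pos 2 p
    have k1 : ((J 1).1 p * (rdot u).1 p) ^ 2 ≤ (grad2 u).1 p := by
      have := mul_le_mul_of_nonneg_left hr p2.le
      nlinarith
    have : 0 ≤ g p * (lam * ((Dt u).1 p ^ 2 + (grad2 u).1 p)
        - 2 * (Dt u).1 p * ((J 1).1 p * (rdot u).1 p) - (lam - 1) * (Dt u).1 p ^ 2) := by
      apply mul_nonneg (gnn p)
      nlinarith [sq_nonneg ((Dt u).1 p - (J 1).1 p * (rdot u).1 p)]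
    nlinarith
  have Φnn : ∀ p, 0 ≤ Φ.1 p := fun p =>
    (mul_nonneg (mul_nonneg (by linarith) (gnn p)) (sq_nonneg _)).trans (key p)
  have Φ0 : Φ.1 = fun _ => 0 := by
    have h := (integral_eq_zero_iff_of_nonneg Φnn intΦ).1 zeroΦ
    exact Continuous.ae_eq_iff_eq volume (sm_cont Φ) continuous_const |>.1 h
  have hk := key p₀
  rw [Φ0] at hk
  have gp : 0 < g p₀ := mul_pos (by positivity) (expNegInvGlue.pos_of_pos hSp₀)
  have hpos : 0 < (lam - 1) * g p₀ := mul_pos (by linarith) gp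
  have : (Dt u).1 p₀ ^ 2 ≤ 0 := by
    by_contra hcon
    push Not at hcon
    nlinarith [mul_pos hpos hcon]
  exact pow_eq_zero_iff two_ne_zero |>.1 (le_antisymm this (sq_nonneg _))

theorem smooth_unique {u : SmA} {t₀ T : ℝ} (h1 : ∀ p : E5, p.1 < t₀ → u.1 p = 0)
    (h2 : ∀ p : E5, p.1 < T → (Box u).1 p = 0) (p : E5) (hp : p.1 < T) : u.1 p = 0 := by
  obtain ⟨t, x⟩ := p
  by_cases ht : t < t₀
  · exact h1 _ ht
  push Not at ht
  have h := intervalIntegral.integral_eq_sub_of_hasDerivAt (a := t₀ - 1) (b := t)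
    (fun s _ => line_hasDerivAt u s x)
    (Continuous.intervalIntegrable ((sm_cont (Dt u)).comp (by fun_prop)) _ _)
  rw [intervalIntegral.integral_congr (g := fun _ => (0 : ℝ))] at h
  · rw [h1 (t₀ - 1, x) (by simp)] at h
    simpa using h.symm
  · intro s hs
    rw [uIcc_of_le (by linarith)] at hs
    exact energy_vanish h1 h2 (s, x) (lt_of_le_of_lt hs.2 hp)

/-- Green's identity on the slab: the data of `w` vanish at `t = 0` and `z` vanishes near `t = T`. -/
theorem green {T : ℝ} (hT : 0 ≤ T) {w z : SmA} (hw0 : ∀ x, w.1 (0, x) = 0)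
    (hw1 : ∀ x, (Dt w).1 (0, x) = 0) (hz : z ∈ TestFn T) :
    ∫ p in slab T, w.1 p * (Box z).1 p = ∫ p in slab T, (Box w).1 p * z.1 p := by
  obtain ⟨K, hK, hKT, hzK⟩ := hz
  have hd := fun v => DD_off hK.isClosed hzK v
  have hdd := fun u v => DD_off hK.isClosed (hd u) v
  have oT : ∀ p ∉ K, (w * Dt z - z * Dt w).1 p = 0 := by
    intro p hp
    rw [← ev_apply]
    simp [map_mul, map_sub, ev_apply, hd _ p hp, hzK p hp]
  have oX : ∀ i, ∀ p ∉ K, (w * Dx i z - z * Dx i w).1 p = 0 := by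
    intro i p hp
    rw [← ev_apply]
    simp [map_mul, map_sub, ev_apply, hd _ p hp, hzK p hp]
  have oB : ∀ p ∉ K, (Box z).1 p = 0 := by
    intro p hp
    rw [← ev_apply, Box]
    simp [map_sub, map_sum, ev_apply, hdd _ _ p hp]
  have i1 : Integrable (fun p => w.1 p * (Box z).1 p) :=
    sm_int (g := w * Box z) (HasCompactSupport.intro hK fun p hp => by
      rw [← ev_apply]; simp [map_mul, ev_apply, oB p hp])
  have i2 : Integrable (fun p => (Box w).1 p * z.1 p) :=
    sm_int (g := Box w * z) (HasCompactSupport.intro hK fun p hp => by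
      rw [← ev_apply]; simp [map_mul, ev_apply, hzK p hp])
  have cT : HasCompactSupport (w * Dt z - z * Dt w).1 := HasCompactSupport.intro hK oT
  have cX := fun i => HasCompactSupport.intro hK (oX i)
  have iT := sm_int (DD_cs cT eT)
  have iX := fun i => sm_int (DD_cs (cX i) (eX i))
  have id0 : w * Box z - Box w * z
      = Dt (w * Dt z - z * Dt w) - ∑ i, Dx i (w * Dx i z - z * Dx i w) := by
    simp only [Box, Fin.sum_univ_four, map_sub, Derivation.leibniz, smul_eq_mul]
    ring
  rw [← sub_eq_zero, ← integral_sub i1.integrableOn i2.integrableOn]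
  have e : ∀ p, w.1 p * (Box z).1 p - (Box w).1 p * z.1 p
      = (Dt (w * Dt z - z * Dt w)).1 p - ∑ i, (Dx i (w * Dx i z - z * Dx i w)).1 p := by
    intro p
    have := congrArg (ev p) id0
    rw [map_sub, map_sub, map_mul, map_mul, map_sum] at this
    exact this
  simp_rw [e]
  rw [integral_sub iT.integrableOn (integrable_finsetSum _ fun i _ => (iX i).integrableOn),
    integral_finsetSum _ fun i _ => (iX i).integrableOn,
    slab_Dt hT cT fun x => oT _ fun h => lt_irrefl _ (hKT _ h)]
  have e0 : ∀ x, (w * Dt z - z * Dt w).1 (0, x) = 0 := by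
    intro x
    rw [← ev_apply]
    simp [map_mul, map_sub, ev_apply, hw0 x, hw1 x]
  rw [Finset.sum_eq_zero fun i _ => slab_Dx i T (cX i)]
  simp only [e0, integral_zero, neg_zero, sub_zero]

/-! ### Riesz representation and uniqueness of weak solutions -/

/-- A functional dominated by `c ‖A z‖` factors through `A` as the inner product with a vector of norm
at most `c`, by the Hahn–Banach and Riesz theorems. -/
theorem riesz_factor {Z H : Type*} [AddCommGroup Z] [Module ℝ Z] [NormedAddCommGroup H]
    [InnerProductSpace ℝ H] [CompleteSpace H] (A : Z →ₗ[ℝ] H) (l : Z →ₗ[ℝ] ℝ) {c : ℝ}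
    (hc : 0 ≤ c) (h : ∀ z, |l z| ≤ c * ‖A z‖) :
    ∃ y : H, ‖y‖ ≤ c ∧ ∀ z, l z = inner ℝ y (A z) := by
  have hker : LinearMap.ker A ≤ LinearMap.ker l := by
    intro z hz
    rw [LinearMap.mem_ker] at hz ⊢
    have := h z
    rw [hz, norm_zero, mul_zero] at this
    exact abs_nonpos_iff.1 this
  set f : LinearMap.range A →ₗ[ℝ] ℝ :=
    ((LinearMap.ker A).liftQ l hker).comp A.quotKerEquivRange.symm.toLinearMap with hf
  have hfz : ∀ z, f ⟨A z, z, rfl⟩ = l z := by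
    intro z
    have : A.quotKerEquivRange.symm ⟨A z, z, rfl⟩ = (LinearMap.ker A).mkQ z :=
      A.quotKerEquivRange_symm_apply_image z ⟨z, rfl⟩
    rw [hf, LinearMap.comp_apply]
    erw [this]
    simp
  have hb : ∀ y : LinearMap.range A, ‖f y‖ ≤ c * ‖y‖ := by
    rintro ⟨_, z, rfl⟩
    rw [hfz]
    exact h z
  obtain ⟨g, hg, hn⟩ := exists_extension_norm_eq (LinearMap.range A) (f.mkContinuous c hb)
  refine ⟨(InnerProductSpace.toDual ℝ H).symm g, ?_, fun z => ?_⟩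
  · rw [LinearIsometryEquiv.norm_map, hn]
    exact f.mkContinuous_norm_le hc hb
  · rw [InnerProductSpace.toDual_symm_apply, ← hfz]
    exact (hg ⟨A z, z, rfl⟩).symm

/-- The reflection `y ↦ φ (p - y)`. -/
def reflAt (p : E5) (φ : SmA) : SmA := ⟨fun y => φ.1 (p - y),
  show ContDiff ℝ (⊤ : ℕ∞) (fun y => φ.1 (p - y)) from
    (sm_smooth φ).comp (contDiff_const.sub contDiff_id)⟩

theorem DD_reflAt (v p : E5) (φ : SmA) : DD v (reflAt p φ) = - reflAt p (DD v φ) := by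
  ext y
  have h : HasFDerivAt (reflAt p φ).1 _ y :=
    (sm_diff φ (p - y)).hasFDerivAt.comp y ((hasFDerivAt_id y).const_sub p)
  rw [DD_apply, h.fderiv]
  simp
  rfl

theorem Box_reflAt (p : E5) (φ : SmA) (y : E5) : (Box (reflAt p φ)).1 y = (Box φ).1 (p - y) := by
  have e : ∀ v, (DD v (DD v (reflAt p φ))).1 y = (DD v (DD v φ)).1 (p - y) := by
    intro v
    rw [DD_reflAt, map_neg, DD_reflAt, neg_neg]; rfl
  rw [← ev_apply, ← ev_apply, Box, Box]
  simp only [map_sub, map_sum, ev_apply, e]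

open scoped Convolution

/-- The convolution `h ⋆ φ` of a locally integrable `h` with a smooth compactly supported `φ`,
as a smooth function. -/
def mol {h : E5 → ℝ} (hh : LocallyIntegrable h) {φ : SmA} (hφ : HasCompactSupport φ.1) : SmA :=
  ⟨h ⋆[(ContinuousLinearMap.lsmul ℝ ℝ).flip, volume] φ.1,
    hφ.contDiff_convolution_right _ hh (sm_smooth φ)⟩

theorem mol_apply {h : E5 → ℝ} (hh : LocallyIntegrable h) {φ : SmA}
    (hφ : HasCompactSupport φ.1) (p : E5) : (mol hh hφ).1 p = ∫ y, φ.1 (p - y) * h y := rfl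

theorem mol_int {h : E5 → ℝ} (hh : LocallyIntegrable h) {φ : SmA}
    (hφ : HasCompactSupport φ.1) (p : E5) : Integrable (fun y => φ.1 (p - y) * h y) :=
  hφ.convolutionExists_right ((ContinuousLinearMap.lsmul ℝ ℝ).flip) hh (sm_cont φ) p

theorem DD_mol {h : E5 → ℝ} (hh : LocallyIntegrable h) {φ : SmA}
    (hφ : HasCompactSupport φ.1) (v : E5) : DD v (mol hh hφ) = mol hh (DD_cs hφ v) := by
  ext p
  rw [DD_apply]
  have h1 : HasFDerivAt (mol hh hφ).1 _ p := hφ.hasFDerivAt_convolution_right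
    ((ContinuousLinearMap.lsmul ℝ ℝ).flip) hh ((sm_smooth φ).of_le (by exact_mod_cast le_top)) p
  rw [h1.fderiv, convolution_precompR_apply _ hh (hφ.fderiv ℝ)
    ((sm_smooth φ).continuous_fderiv (by simp))]
  rfl

theorem Box_mol {h : E5 → ℝ} (hh : LocallyIntegrable h) {φ : SmA}
    (hφ : HasCompactSupport φ.1) (p : E5) :
    (Box (mol hh hφ)).1 p = ∫ y, h y * (Box (reflAt p φ)).1 y := by
  have e : ∀ y, h y * (Box (reflAt p φ)).1 y = (Dt (Dt φ)).1 (p - y) * h y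
      - ∑ i, (Dx i (Dx i φ)).1 (p - y) * h y := by
    intro y
    rw [Box_reflAt, ← ev_apply, Box, map_sub, map_sum, ← Finset.sum_mul, ← sub_mul, mul_comm]; rfl
  simp_rw [e]
  have i2 := fun v => mol_int hh (DD_cs (DD_cs hφ v) v) p
  rw [integral_sub (i2 eT) (integrable_finsetSum _ fun i _ => i2 (eX i)),
    integral_finsetSum _ fun i _ => i2 (eX i), ← ev_apply, Box]
  simp only [map_sub, map_sum, ev_apply, DD_mol, mol_apply]

/-- Uniqueness for weak solutions of `□h = 0` on `{t < T}` vanishing for `t < 0`. Mollifications of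
`h` are smooth solutions on slightly smaller half-spaces, so they vanish there, and they converge to
`h` almost everywhere. -/
theorem weak_unique {T : ℝ} {h : E5 → ℝ} (hh : LocallyIntegrable h)
    (h0 : ∀ p : E5, p.1 < 0 → h p = 0)
    (hB : ∀ z ∈ TestFn T, ∫ p, h p * (Box z).1 p = 0) :
    ∀ᵐ p : E5, p.1 < T → h p = 0 := by
  set bump : ℕ → ContDiffBump (0 : E5) := fun n =>
    ⟨1 / ((n : ℝ) + 1) / 2, 1 / ((n : ℝ) + 1), by positivity, half_lt_self (by positivity)⟩ with hb
  have hr : ∀ n, (bump n).rOut = 1 / ((n : ℝ) + 1) := fun n => rfl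
  have hlim : Filter.Tendsto (fun n => (bump n).rOut) Filter.atTop (nhds 0) :=
    tendsto_one_div_add_atTop_nhds_zero_nat
  have hae := ContDiffBump.ae_convolution_tendsto_right_of_locallyIntegrable (μ := volume)
    (K := 2) hlim (Filter.Eventually.of_forall fun n => by
      change 1 / ((n : ℝ) + 1) ≤ 2 * (1 / ((n : ℝ) + 1) / 2); linarith) hh
  filter_upwards [hae] with p hp hpT
  refine tendsto_nhds_unique hp (tendsto_const_nhds.congr' ?_)
  have hev : ∀ᶠ n in Filter.atTop, (bump n).rOut < T - p.1 :=
    hlim.eventually_lt_const (by linarith)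
  filter_upwards [hev] with n hn
  set r := (bump n).rOut with hrdef
  let φ : SmA := ⟨(bump n).normed volume, (bump n).contDiff_normed⟩
  have hφ : HasCompactSupport φ.1 := (bump n).hasCompactSupport_normed
  have hφ0 : ∀ y, r ≤ ‖y‖ → φ.1 y = 0 := by
    intro y hy
    have : y ∉ Function.support ((bump n).normed (volume : Measure E5)) := by
      rw [(bump n).support_normed_eq]
      simpa using hy
    exact Function.notMem_support.1 this
  have hfst : ∀ y : E5, |y.1| ≤ ‖y‖ := fun y => norm_fst_le y
  have key := smooth_unique (u := mol hh hφ) (t₀ := -r) (T := T - r) ?_ ?_ p (by linarith)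
  · rw [← key, ← convolution_flip]; rfl
  · intro q hq
    rw [mol_apply]
    refine integral_eq_zero_of_ae (Filter.Eventually.of_forall fun y => ?_)
    change φ.1 (q - y) * h y = 0
    by_cases hy : y.1 < 0
    · rw [h0 y hy, mul_zero]
    · rw [hφ0, zero_mul]
      refine le_trans ?_ (hfst _)
      have := (bump n).rOut_pos
      rw [Prod.fst_sub, abs_of_neg] <;> linarith
  · intro q hq
    rw [Box_mol]
    apply hB
    refine ⟨Metric.closedBall q r, isCompact_closedBall _ _, fun y hy => ?_, fun y hy => ?_⟩
    · have h1 := hfst (y - q)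
      rw [mem_closedBall_iff_norm] at hy
      have := le_abs_self (y - q).1
      rw [Prod.fst_sub] at this h1
      linarith
    · rw [mem_closedBall_iff_norm, not_le] at hy
      exact hφ0 _ (by rw [norm_sub_rev]; exact hy.le)

/-! ### The dual estimate -/

theorem inner_toLp {ν : Measure E5} {f g : E5 → ℝ} (hf : MemLp f 2 ν) (hg : MemLp g 2 ν) :
    inner ℝ (hf.toLp f) (hg.toLp g) = ∫ p, f p * g p ∂ν := by
  rw [L2.inner_def]
  refine integral_congr_ae ?_
  filter_upwards [hf.coeFn_toLp, hg.coeFn_toLp] with p h1 h2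
  rw [h1, h2]
  simp [mul_comm]

/-- Only the values at `t ≥ 0` enter, so the vanishing for `|x| > 2` makes the function `L²`. -/
theorem memLp_slab {T : ℝ} {B : SmA} (hB : ∀ p : E5, 0 ≤ p.1 → 2 < ‖p.2‖ → B.1 p = 0) :
    MemLp B.1 2 (volume.restrict (slab T)) := by
  set K : Set E5 := Icc 0 T ×ˢ Metric.closedBall 0 2 with hKdef
  have hK : IsCompact K := isCompact_Icc.prod (isCompact_closedBall _ _)
  have h1 : MemLp (K.indicator B.1) 2 volume := by
    rw [memLp_indicator_iff_restrict hK.measurableSet]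
    obtain ⟨C, hC⟩ := hK.exists_bound_of_continuousOn (sm_cont B).continuousOn
    have : IsFiniteMeasure (volume.restrict K) := ⟨by simpa using hK.measure_lt_top⟩
    refine MemLp.of_bound (sm_cont B).aestronglyMeasurable C ?_
    filter_upwards [ae_restrict_mem hK.measurableSet] with p hp using hC p hp
  refine (h1.restrict (slab T)).ae_eq ?_
  filter_upwards [ae_restrict_mem (measurableSet_Icc.prod MeasurableSet.univ)] with p hp
  by_cases hpK : p ∈ K
  · rw [indicator_of_mem hpK]
  · rw [indicator_of_notMem hpK, hB p hp.1.1]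
    by_contra hcon
    exact hpK ⟨hp.1, by rw [mem_closedBall_zero_iff]; exact not_lt.1 hcon⟩

theorem test_cs {T : ℝ} {z : SmA} (hz : z ∈ TestFn T) : HasCompactSupport z.1 := by
  obtain ⟨K, hK, -, hzK⟩ := hz
  exact HasCompactSupport.intro hK hzK

theorem Box_cs {z : SmA} (hz : HasCompactSupport z.1) : HasCompactSupport (Box z).1 := by
  refine HasCompactSupport.intro hz.isCompact fun p hp => ?_
  have h0 : ∀ p ∉ tsupport z.1, z.1 p = 0 := fun p hp => image_eq_zero_of_notMem_tsupport hp
  have hdd := fun v => DD_off hz.isCompact.isClosed (DD_off hz.isCompact.isClosed h0 v) v p hp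
  rw [← ev_apply, Box]
  simp [map_sub, map_sum, ev_apply, hdd]

theorem mul_cs (f : SmA) {g : SmA} (hg : HasCompactSupport g.1) : HasCompactSupport (f * g).1 :=
  hg.mul_left

theorem Box_add (y z : SmA) : Box (y + z) = Box y + Box z := by
  simp only [Box, map_add, Finset.sum_add_distrib]; ring

theorem Box_smul (c : ℝ) (z : SmA) : Box (c • z) = c • Box z := by
  simp only [Box, Derivation.map_smul, smul_sub, Finset.smul_sum]

theorem slab_memLp {z : SmA} (hz : HasCompactSupport z.1) (T : ℝ) :
    MemLp z.1 2 (volume.restrict (slab T)) :=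
  ((sm_cont z).memLp_of_hasCompactSupport hz).restrict _

/-- The map `z ↦ ⟨x⟩ ^ a □z` from test functions to `L²` of the slab. -/
def boxMap (a T : ℝ) : TestFn T →ₗ[ℝ] Lp ℝ 2 (volume.restrict (slab T)) where
  toFun z := (slab_memLp (mul_cs (J (-a)) (Box_cs (test_cs z.2))) T).toLp _
  map_add' y z := by
    rw [← MemLp.toLp_add]
    congr 1
    change (J (-a) * Box (y.1 + z.1)).1 = (J (-a) * Box y.1 + J (-a) * Box z.1).1
    rw [Box_add, mul_add]
  map_smul' c z := by
    rw [RingHom.id_apply, ← MemLp.toLp_const_smul]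
    congr 1
    change (J (-a) * Box (c • z.1)).1 = (c • (J (-a) * Box z.1)).1
    rw [Box_smul, mul_smul_comm]

/-- The functional `z ↦ ∫ B z` over the slab. -/
def pairing (B : SmA) (T : ℝ) : TestFn T →ₗ[ℝ] ℝ where
  toFun z := ∫ p in slab T, B.1 p * z.1.1 p
  map_add' y z := by
    have i : ∀ u : TestFn T, IntegrableOn (fun p => B.1 p * u.1.1 p) (slab T) := fun u =>
      (sm_int (mul_cs B (test_cs u.2))).integrableOn
    rw [← integral_add (i y) (i z)]
    congr 1; ext p
    exact mul_add _ _ _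
  map_smul' c z := by
    rw [RingHom.id_apply, smul_eq_mul, ← integral_const_mul]
    congr 1; ext p
    exact mul_left_comm _ _ _

/-- The dual form of the local energy estimate: the weight `⟨x⟩^(3/2)` is moved onto `B`. -/
theorem pairing_bound {ε : ℝ} (h0 : 0 < ε) (h1 : ε ≤ 1) {T : ℝ} (hT : 0 ≤ T) {B : SmA}
    (hB' : MemLp (J (-(3 / 2)) * B).1 2 (volume.restrict (slab T))) (z : TestFn T) :
    |pairing B T z| ≤ √(2 * (8040 / ε + 18)) * ‖hB'.toLp _‖ * ‖boxMap ((1 + ε) / 2) T z‖ := by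
  have hz := slab_memLp (mul_cs (J (3 / 2)) (test_cs z.2)) T
  have e1 : pairing B T z = inner ℝ (hB'.toLp _) (hz.toLp _) := by
    rw [inner_toLp]
    refine integral_congr_ae (Filter.Eventually.of_forall fun p => ?_)
    change B.1 p * z.1.1 p = ((J (-(3 / 2))).1 p * B.1 p) * ((J (3 / 2)).1 p * z.1.1 p)
    have := J_mul_apply (-(3 / 2)) (3 / 2) p
    rw [neg_add_cancel, J_zero] at this
    have one : ((1 : SmA) : E5 → ℝ) p = 1 := rfl
    rw [one] at this
    linear_combination (- B.1 p * z.1.1 p) * this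
  have e2 : ‖hz.toLp _‖ ^ 2 = ∫ p in slab T, (J 3).1 p * z.1.1 p ^ 2 := by
    rw [← real_inner_self_eq_norm_sq, inner_toLp]
    refine integral_congr_ae (Filter.Eventually.of_forall fun p => ?_)
    change ((J (3 / 2)).1 p * z.1.1 p) * ((J (3 / 2)).1 p * z.1.1 p) = (J 3).1 p * z.1.1 p ^ 2
    rw [show (3 : ℝ) = 3 / 2 + 3 / 2 by norm_num, ← J_mul_apply]
    norm_num; ring
  have e3 : ‖boxMap ((1 + ε) / 2) T z‖ ^ 2
      = ∫ p in slab T, (J (-(1 + ε))).1 p * (Box z.1).1 p ^ 2 := by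
    rw [← real_inner_self_eq_norm_sq]
    have hb := slab_memLp (mul_cs (J (-((1 + ε) / 2))) (Box_cs (test_cs z.2))) T
    change inner ℝ (hb.toLp _) (hb.toLp _) = _
    rw [inner_toLp]
    refine integral_congr_ae (Filter.Eventually.of_forall fun p => ?_)
    change ((J (-((1 + ε) / 2))).1 p * (Box z.1).1 p) * ((J (-((1 + ε) / 2))).1 p * (Box z.1).1 p)
      = (J (-(1 + ε))).1 p * (Box z.1).1 p ^ 2
    rw [show -(1 + ε) = -((1 + ε) / 2) + -((1 + ε) / 2) by ring, ← J_mul_apply]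
    ring
  have hle : ‖hz.toLp _‖ ≤ √(2 * (8040 / ε + 18)) * ‖boxMap ((1 + ε) / 2) T z‖ := by
    have hle := local_energy ε h0 h1 hT z.2
    rw [← e2, ← e3] at hle
    rw [← sqrt_sq (norm_nonneg (boxMap _ T z)), ← sqrt_mul (by positivity)]
    exact le_sqrt_of_sq_le hle
  rw [e1, mul_comm (√_), mul_assoc]
  exact (abs_real_inner_le_norm _ _).trans (mul_le_mul_of_nonneg_left hle (norm_nonneg _))

/-- The estimate with weight `⟨x⟩^(-(1+ε)/2)`. The functional `z ↦ ∫ □w z` is represented by some `y`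
in `L²` of norm at most `C ‖□w‖`, and weak uniqueness identifies `w` with `⟨x⟩^((1+ε)/2) y`. -/
theorem dual_estimate {ε : ℝ} (h0 : 0 < ε) (h1 : ε ≤ 1) {T : ℝ} (hT : 0 < T) {w : SmA}
    (hw0 : ∀ x, w.1 (0, x) = 0) (hw1 : ∀ x, (Dt w).1 (0, x) = 0)
    (hB : ∀ p : E5, 0 ≤ p.1 → 2 < ‖p.2‖ → (Box w).1 p = 0) :
    eLpNorm (J ((1 + ε) / 2) * w).1 2 (volume.restrict (slab T))
      ≤ ENNReal.ofReal (√(2 * (8040 / ε + 18)) * 5)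
        * eLpNorm (Box w).1 2 (volume.restrict (slab T)) := by
  set ν : Measure E5 := volume.restrict (slab T) with hν
  have ms : MeasurableSet (slab T) := measurableSet_Icc.prod MeasurableSet.univ
  have hB' : MemLp (J (-(3 / 2)) * Box w).1 2 ν := memLp_slab fun p hp hp2 => by
    change _ * (Box w).1 p = 0
    rw [hB p hp hp2, mul_zero]
  obtain ⟨y, hy, hyz⟩ := riesz_factor (Z := TestFn T) (H := Lp ℝ 2 ν) (boxMap ((1 + ε) / 2) T) (pairing (Box w) T)
    (c := √(2 * (8040 / ε + 18)) * ‖hB'.toLp _‖) (by positivity)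
    (pairing_bound h0 h1 hT.le hB')
  have hyL : MemLp y 2 ν := Lp.memLp y
  set m : ℝ := -((1 + ε) / 2) with hm
  set h : E5 → ℝ := (slab T).indicator (fun p => w.1 p - (J m).1 p * y p) with hh
  have hyl : LocallyIntegrable ((slab T).indicator y) :=
    ((memLp_indicator_iff_restrict ms).2 hyL).locallyIntegrable (by norm_num)
  have hhl : LocallyIntegrable h := by
    have a1 : LocallyIntegrable ((slab T).indicator w.1) :=
      (sm_cont w).locallyIntegrable.indicator ms
    have a2 : LocallyIntegrable (fun p => (J m).1 p * (slab T).indicator y p) := by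
      rw [locallyIntegrable_iff] at hyl ⊢
      intro K hK
      exact (hyl K hK).continuousOn_mul (sm_cont (J m)).continuousOn hK
    convert a1.sub a2 using 1
    ext p
    by_cases hp : p ∈ slab T <;> simp [hh, hp]
  have hweak := weak_unique (T := T) hhl ?_ ?_
  · -- weak uniqueness says nothing about the null slice `t = T`
    have hT0 : ∀ᵐ p : E5, p.1 ≠ T := by
      rw [ae_iff]
      have : {p : E5 | ¬ p.1 ≠ T} = {T} ×ˢ univ := by ext p; simp
      rw [this, Measure.volume_eq_prod, Measure.prod_prod]
      simp
    have hwy : (J ((1 + ε) / 2) * w).1 =ᵐ[ν] y := by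
      filter_upwards [ae_restrict_of_ae hweak, ae_restrict_of_ae hT0, ae_restrict_mem ms]
        with p k1 k2 k3
      have k4 := k1 (lt_of_le_of_ne k3.1.2 k2)
      rw [hh, indicator_of_mem k3] at k4
      have k5 := J_mul_apply ((1 + ε) / 2) m p
      rw [hm, add_neg_cancel, J_zero] at k5
      have one : ((1 : SmA) : E5 → ℝ) p = 1 := rfl
      rw [one] at k5
      change (J ((1 + ε) / 2)).1 p * w.1 p = y p
      linear_combination (J ((1 + ε) / 2)).1 p * k4 + y p * k5
    -- on the support of `□w` in the slab, `⟨x⟩^(3/2) ≤ 1 + |x|² ≤ 5`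
    have b1 : eLpNorm (J (-(3 / 2)) * Box w).1 2 ν ≤ ENNReal.ofReal 5 * eLpNorm (Box w).1 2 ν := by
      refine eLpNorm_le_mul_eLpNorm_of_ae_le_mul ?_ 2
      filter_upwards [ae_restrict_mem ms] with p hp
      change ‖(J (-(3 / 2))).1 p * (Box w).1 p‖ ≤ 5 * ‖(Box w).1 p‖
      rw [norm_mul]
      by_cases hp2 : 2 < ‖p.2‖
      · rw [hB p hp.1.1 hp2]; simp
      · refine mul_le_mul_of_nonneg_right ?_ (norm_nonneg _)
        rw [Real.norm_of_nonneg (J_pos _ p).le]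
        refine (J_anti (by norm_num : (-2 : ℝ) ≤ -(3 / 2)) p).trans ?_
        rw [J_negtwo]
        nlinarith [norm_nonneg p.2]
    rw [eLpNorm_congr_ae hwy, ← Lp.enorm_def, ← ofReal_norm]
    refine (ENNReal.ofReal_le_ofReal hy).trans ?_
    rw [ENNReal.ofReal_mul (by positivity), ENNReal.ofReal_mul (by positivity), mul_assoc]
    gcongr
    rw [ofReal_norm, Lp.enorm_toLp]
    exact b1
  · intro p hp
    exact indicator_of_notMem (fun hc => not_lt.2 hc.1.1 hp) _
  · intro z hz
    have g := green hT.le hw0 hw1 hz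
    have hyz' := hyz ⟨z, hz⟩
    have hBz := mul_cs (J m) (Box_cs (test_cs hz))
    have e1 : inner ℝ y (boxMap ((1 + ε) / 2) T ⟨z, hz⟩)
        = ∫ p in slab T, y p * ((J m).1 p * (Box z).1 p) := by
      rw [L2.inner_def]
      refine integral_congr_ae ?_
      filter_upwards [(slab_memLp hBz T).coeFn_toLp] with p hp
      change inner ℝ (y p) ((MemLp.toLp _ (slab_memLp hBz T)) p) = _
      rw [hp]
      change (J m).1 p * (Box z).1 p * y p = _
      ring
    have i1 : Integrable (fun p => w.1 p * (Box z).1 p) ν :=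
      (sm_int (mul_cs w (Box_cs (test_cs hz)))).integrableOn
    have i2 : Integrable (fun p => y p * ((J m).1 p * (Box z).1 p)) ν :=
      hyL.integrable_mul (slab_memLp hBz T)
    have e2 : ∫ p, h p * (Box z).1 p
        = ∫ p in slab T, (w.1 p * (Box z).1 p - y p * ((J m).1 p * (Box z).1 p)) := by
      rw [← integral_indicator ms]
      congr 1; ext p
      by_cases hp : p ∈ slab T <;> simp [hh, hp]
      ring
    rw [e2, integral_sub i1 i2, g, ← e1, ← hyz', sub_eq_zero]
    rfl

theorem td_eq (w : SmA) (t : ℝ) (x : Eu 4) :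
    td (fun s y => w.1 (s, y)) t x = (Dt w).1 (t, x) := (line_hasDerivAt w t x).deriv

theorem sd_eq (w : SmA) (i : Fin 4) (t : ℝ) (x : Eu 4) :
    sd i (fun y => w.1 (t, y)) x = (Dx i w).1 (t, x) := by
  rw [sd, (slice_hasFDerivAt w t x).fderiv, DD_apply]; simp [eX]

theorem dAlembert_eq (w : SmA) (t : ℝ) (x : Eu 4) :
    dAlembert (fun s y => w.1 (s, y)) t x = (Box w).1 (t, x) := by
  have e1 : td (fun s y => w.1 (s, y)) = fun s y => (Dt w).1 (s, y) := by
    ext s y; exact td_eq w s y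
  have e2 : ∀ i, sd i (fun y => w.1 (t, y)) = fun y => (Dx i w).1 (t, y) := by
    intro i; ext y; exact sd_eq w i t y
  rw [dAlembert, e1, td_eq]
  simp only [e2, sd_eq]
  change _ = ev (t, x) (Box w)
  rw [Box, map_sub, map_sum]; rfl

theorem jap_pow_le {a b : ℝ} (h : a ≤ -b) (p : E5) : jap p.2 ^ a ≤ (J b).1 p := by
  rw [J_apply, jap, sqrt_eq_rpow, ← rpow_mul (one_add_pos p).le]
  apply rpow_le_rpow_of_exponent_le
  · nlinarith [sq_nonneg ‖p.2‖]
  · linarith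

/-! ### The theorem -/

/-- Localized energy estimate with compactly supported L² forcing. -/
theorem localized_energy_cpt_forcing (δ : ℝ) (hδ : 0 < δ) :
    ∃ C : ℝ, 0 < C ∧ ∀ (w F : ℝ → Eu 4 → ℝ), SmoothTX w →
      (∀ t : ℝ, 0 ≤ t → ∀ x, dAlembert w t x = F t x) →
      (∀ x, w 0 x = 0) → (∀ x, td w 0 x = 0) →
      (∀ t : ℝ, ∀ x : Eu 4, 2 < ‖x‖ → F t x = 0) →
      ∀ T : ℝ, 0 < T →
        L2st T univ (fun t x => jap x ^ (-(1/2 : ℝ) - δ) * w t x)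
          ≤ ENNReal.ofReal C * L2st T univ F := by
  set ε : ℝ := min (2 * δ) 1 with hε
  have h0 : 0 < ε := lt_min (by linarith) one_pos
  have h1 : ε ≤ 1 := min_le_right _ _
  have h2 : ε ≤ 2 * δ := min_le_left _ _
  refine ⟨√(2 * (8040 / ε + 18)) * 5, by positivity, ?_⟩
  intro w F hw hF hw0 hw1 hF0 T hT
  set W : SmA := ⟨fun p => w p.1 p.2, hw⟩ with hW
  have hbox : ∀ t, 0 ≤ t → ∀ x, (Box W).1 (t, x) = F t x := fun t ht x => by
    rw [← hF t ht x, ← dAlembert_eq]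
  have ms : MeasurableSet (slab T) := measurableSet_Icc.prod MeasurableSet.univ
  have hdual := dual_estimate h0 h1 hT (w := W) hw0 (fun x => by rw [← td_eq]; exact hw1 x)
    (fun p hp hp2 => by rw [hbox p.1 hp p.2, hF0 p.1 p.2 hp2])
  rw [L2st, L2st, Measure.prod_restrict, ← Measure.volume_eq_prod]
  change eLpNorm _ 2 (volume.restrict (slab T)) ≤ _ * eLpNorm _ 2 (volume.restrict (slab T))
  have hFB : eLpNorm (fun p : E5 => F p.1 p.2) 2 (volume.restrict (slab T))
      = eLpNorm (Box W).1 2 (volume.restrict (slab T)) := by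
    refine eLpNorm_congr_ae ?_
    filter_upwards [ae_restrict_mem ms] with p hp using (hbox p.1 hp.1.1 p.2).symm
  rw [hFB]
  refine (eLpNorm_mono fun p => ?_).trans hdual
  change ‖jap p.2 ^ (-(1/2 : ℝ) - δ) * w p.1 p.2‖ ≤ ‖(J ((1 + ε) / 2)).1 p * w p.1 p.2‖
  rw [norm_mul, norm_mul, Real.norm_of_nonneg (J_pos _ p).le,
    Real.norm_of_nonneg (rpow_nonneg (show 0 ≤ jap p.2 from sqrt_nonneg _) _)]
  exact mul_le_mul_of_nonneg_right (jap_pow_le (by linarith) p) (norm_nonneg _)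
end
end
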